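/- For any two embeddings g₁, g₂ : K_{2,3} → S² of the complete bipartite graph K_{2,3} into the 2-sphere, there is a homeomorphism ψ : S² → S² such that ψ ∘ g₁ = g₂. -/

import Mathlib

/-!
The images of the three paths of `K_{2,3}` through its middle vertices form a *theta curve*
(`IsTheta`): three arcs with common endpoints, disjoint otherwise. The theorem is the
Schoenflies theorem for theta curves (`IsTheta.exists_homeo`): every theta curve cuts the sphere
into three faces, the closure of each face is a closed disk bounded by two of the arcs, and the
identification of two theta curves by their parameters therefore extends over each face by
coning off (`cone`, `exists_disc_map`).

*Separation.* A compact plane set `K` fails to separate `p` from `q` exactly when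
`(z - p) / (z - q)` has a continuous logarithm on `K` (`hasLog_of_preconnected`,
`mem_component_of_hasLog`). Logarithms on two closed, or two open, sets with connected intersection
can be glued. This gives that arcs do not separate the plane (`isPreconnected_compl_arc`),
Janiszewski's theorem (`janiszewski`), and that the union of two arcs with common endpoints does
separate it (`not_isPreconnected_compl`), each component having the whole curve as its frontier
(`Lune.frontier_eq`). For a theta curve, each pair of arcs bounds a component that misses the third
(`IsTheta.exists_face`), so there are at least three faces. There are no others, because up to
functions with a logarithm the functions `z - p` on a theta curve are described by two integers, so
that three bounded faces would violate linear independence (`IsTheta.no_three_bounded`,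
`IsTheta.faces`).

*Closed faces are disks.* Projected from a point of another face, a face is a bounded plane domain.
The Riemann mapping theorem (`riemann_mapping`) is proved by Koebe's extremal argument; in place
of simple connectivity it uses that injective images of compact sets without holes have no holes
(`Admissible`). By the length-area method (`length_area`) crosscuts near a boundary point have short
images. As a curve made of two arcs is locally an arc (`Lune.locArc`), a short crosscut cuts
off a small piece of the domain, so the Riemann map extends continuously to the closed disk; it is
injective on the circle because the chord between two points with the same image would have a side
on which the boundary values are constant (`Cara.chord`, `Cara.not_const`). This is Carathéodory's
theorem (`caratheodory`), and `IsTheta.param` transfers it to the sphere.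
-/

open Set

noncomputable section

/-- The vertex `i` (0-indexed), realized as a point of `ℝ⁵`. -/
def vert (i : Fin 5) : Fin 5 → ℝ := Pi.single i 1

/-- The edge between vertices `i` and `j`, realized as a segment in `ℝ⁵`. -/
def seg (i j : Fin 5) : Set (Fin 5 → ℝ) := segment ℝ (vert i) (vert j)

/-- The complete bipartite graph `K_{2,3}` with parts `{1,2,3}` (indices
`0,1,2`) and `{4,5}` (indices `3,4`), realized as a 1-dimensional simplicial
complex in `ℝ⁵`. -/
def K23 : Set (Fin 5 → ℝ) :=
  ⋃ (i ∈ ({0, 1, 2} : Set (Fin 5))) (j ∈ ({3, 4} : Set (Fin 5))), seg i j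

/-- The 2-sphere. -/
def Sphere2 : Set (EuclideanSpace ℝ (Fin 3)) := Metric.sphere 0 1

namespace Theta
open Filter Topology Metric

/-! ### Continuous logarithms -/

/-- `f` has a continuous logarithm on the set `K`. -/
def HasLog {X : Type*} [TopologicalSpace X] (f : X → ℂ) (K : Set X) : Prop :=
  ∃ L : X → ℂ, ContinuousOn L K ∧ ∀ z ∈ K, Complex.exp (L z) = f z

section HasLog
variable {X Y : Type*} [TopologicalSpace X] [TopologicalSpace Y] {f g : X → ℂ} {K S T : Set X}

lemma HasLog.mono (h : HasLog f K) (hS : S ⊆ K) : HasLog f S := by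
  obtain ⟨L, h1, h2⟩ := h
  exact ⟨L, h1.mono hS, fun z hz => h2 z (hS hz)⟩

lemma HasLog.congr (h : HasLog f K) (hfg : ∀ z ∈ K, f z = g z) : HasLog g K := by
  obtain ⟨L, h1, h2⟩ := h
  exact ⟨L, h1, fun z hz => (h2 z hz).trans (hfg z hz)⟩

lemma HasLog.mul (hf : HasLog f K) (hg : HasLog g K) : HasLog (fun z => f z * g z) K := by
  obtain ⟨L, h1, h2⟩ := hf
  obtain ⟨M, h3, h4⟩ := hg
  exact ⟨fun z => L z + M z, h1.add h3, fun z hz => by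
    rw [Complex.exp_add, h2 z hz, h4 z hz]⟩

lemma HasLog.inv (hf : HasLog f K) : HasLog (fun z => (f z)⁻¹) K := by
  obtain ⟨L, h1, h2⟩ := hf
  exact ⟨fun z => - L z, h1.neg, fun z hz => by rw [Complex.exp_neg, h2 z hz]⟩

lemma HasLog.div (hf : HasLog f K) (hg : HasLog g K) : HasLog (fun z => f z / g z) K := by
  simpa only [div_eq_mul_inv] using hf.mul hg.inv

lemma HasLog.zpow (hf : HasLog f K) (n : ℤ) : HasLog (fun z => f z ^ n) K := by
  obtain ⟨L, h1, h2⟩ := hf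
  exact ⟨fun z => n * L z, continuousOn_const.mul h1, fun z hz => by
    rw [Complex.exp_int_mul, h2 z hz]⟩

lemma HasLog.const {c : ℂ} (hc : c ≠ 0) : HasLog (fun _ : X => c) K :=
  ⟨fun _ => Complex.log c, continuousOn_const, fun _ _ => Complex.exp_log hc⟩

lemma HasLog.comp {h : Y → X} {K : Set Y} (hf : HasLog f S) (hh : ContinuousOn h K)
    (hm : MapsTo h K S) : HasLog (fun y => f (h y)) K := by
  obtain ⟨L, h1, h2⟩ := hf
  exact ⟨fun y => L (h y), h1.comp hh hm, fun z hz => h2 _ (hm hz)⟩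

lemma HasLog.ne_zero (h : HasLog f K) {z : X} (hz : z ∈ K) : f z ≠ 0 := by
  obtain ⟨L, _, h2⟩ := h
  rw [← h2 z hz]; exact Complex.exp_ne_zero _

lemma HasLog.continuousOn (h : HasLog f K) : ContinuousOn f K := by
  obtain ⟨L, h1, h2⟩ := h
  exact (Complex.continuous_exp.comp_continuousOn h1).congr fun z hz => (h2 z hz).symm

lemma hasLog_of_slitPlane (hf : ContinuousOn f K) (h : ∀ z ∈ K, f z ∈ Complex.slitPlane) :
    HasLog f K :=
  ⟨fun z => Complex.log (f z), hf.clog h, fun z hz =>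
    Complex.exp_log (Complex.slitPlane_ne_zero (h z hz))⟩

lemma hasLog_of_near_one (hf : ContinuousOn f K) (h : ∀ z ∈ K, ‖f z - 1‖ < 1) : HasLog f K :=
  hasLog_of_slitPlane hf fun z hz => by
    have := Complex.mem_slitPlane_of_norm_lt_one (h z hz)
    simpa using this

/-- Two continuous logarithms of the same function on a preconnected set differ by a constant. -/
lemma log_unique {L M : X → ℂ} (hS : IsPreconnected S) (hL : ContinuousOn L S)
    (hM : ContinuousOn M S) (h : ∀ z ∈ S, Complex.exp (L z) = Complex.exp (M z)) :
    ∃ n : ℤ, ∀ z ∈ S, L z = M z + n * (2 * Real.pi * Complex.I) := by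
  rcases S.eq_empty_or_nonempty with rfl | hne
  · exact ⟨0, by simp⟩
  have hpi : (2 * Real.pi * Complex.I : ℂ) ≠ 0 := Complex.two_pi_I_ne_zero
  let φ : X → ℝ := fun z => ((L z - M z) / (2 * Real.pi * Complex.I)).re
  have key : ∀ z ∈ S, ∃ n : ℤ, L z = M z + n * (2 * Real.pi * Complex.I) := fun z hz =>
    Complex.exp_eq_exp_iff_exists_int.1 (h z hz)
  have hφ : ∀ z ∈ S, ∀ n : ℤ, L z = M z + n * (2 * Real.pi * Complex.I) → φ z = n := by
    intro z hz n hn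
    simp only [φ, hn, add_sub_cancel_left]
    rw [mul_div_assoc, div_self hpi]; simp
  have hφc : ContinuousOn φ S :=
    Complex.continuous_re.comp_continuousOn ((hL.sub hM).div_const _)
  obtain ⟨y, hy, hy'⟩ := hS.eqOn_const_of_mapsTo
    (T := range ((↑) : ℤ → ℝ)) Int.isClosedEmbedding_coe_real.isEmbedding.isDiscrete_range hφc
    (fun z hz => by obtain ⟨n, hn⟩ := key z hz; exact ⟨n, (hφ z hz n hn).symm⟩)
    (range_nonempty _)
  obtain ⟨n, rfl⟩ := hy
  refine ⟨n, fun z hz => ?_⟩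
  obtain ⟨m, hm⟩ := key z hz
  have h1 := hφ z hz m hm
  have h2 := hy' hz
  have : m = n := by
    have : (m : ℝ) = n := by rw [← h1, h2, Function.const_apply]
    exact_mod_cast this
  rw [hm, this]

lemma HasLog.union_of_isClosed (hf : HasLog f S) (hg : HasLog f T) (hS : IsClosed S)
    (hT : IsClosed T) (hST : IsPreconnected (S ∩ T)) : HasLog f (S ∪ T) := by
  classical
  obtain ⟨L, h1, h2⟩ := hf
  obtain ⟨M, h3, h4⟩ := hg
  obtain ⟨n, hn⟩ := log_unique hST (h1.mono inter_subset_left) (h3.mono inter_subset_right)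
    (fun z hz => (h2 z hz.1).trans (h4 z hz.2).symm)
  let N : X → ℂ := fun z => if z ∈ S then L z else M z + n * (2 * Real.pi * Complex.I)
  have hNS : EqOn N L S := fun z hz => by simp [N, hz]
  have hNT : EqOn N (fun z => M z + n * (2 * Real.pi * Complex.I)) T := fun z hz => by
    by_cases hzS : z ∈ S
    · simp [N, hzS, hn z ⟨hzS, hz⟩]
    · simp [N, hzS]
  refine ⟨N, ContinuousOn.union_of_isClosed (h1.congr hNS)
    ((h3.add continuousOn_const).congr hNT) hS hT, ?_⟩
  rintro z (hz | hz)
  · rw [hNS hz, h2 z hz]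
  · rw [hNT hz, Complex.exp_add, h4 z hz, Complex.exp_int_mul_two_pi_mul_I, mul_one]

lemma HasLog.union_of_isOpen (hf : HasLog f S) (hg : HasLog f T) (hS : IsOpen S)
    (hT : IsOpen T) (hST : IsPreconnected (S ∩ T)) : HasLog f (S ∪ T) := by
  classical
  obtain ⟨L, h1, h2⟩ := hf
  obtain ⟨M, h3, h4⟩ := hg
  obtain ⟨n, hn⟩ := log_unique hST (h1.mono inter_subset_left) (h3.mono inter_subset_right)
    (fun z hz => (h2 z hz.1).trans (h4 z hz.2).symm)
  let N : X → ℂ := fun z => if z ∈ S then L z else M z + n * (2 * Real.pi * Complex.I)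
  have hNS : EqOn N L S := fun z hz => by simp [N, hz]
  have hNT : EqOn N (fun z => M z + n * (2 * Real.pi * Complex.I)) T := fun z hz => by
    by_cases hzS : z ∈ S
    · simp [N, hzS, hn z ⟨hzS, hz⟩]
    · simp [N, hzS]
  refine ⟨N, ContinuousOn.union_of_isOpen (h1.congr hNS)
    ((h3.add continuousOn_const).congr hNT) hS hT, ?_⟩
  rintro z (hz | hz)
  · rw [hNS hz, h2 z hz]
  · rw [hNT hz, Complex.exp_add, h4 z hz, Complex.exp_int_mul_two_pi_mul_I, mul_one]

/-- A nonvanishing continuous function on a convex open subset of `ℂ` has a logarithm. -/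
lemma hasLog_of_convex {f : ℂ → ℂ} {U : Set ℂ} (hU : Convex ℝ U) (hUo : IsOpen U)
    (hne : U.Nonempty) (hf : ContinuousOn f U) (h0 : ∀ z ∈ U, f z ≠ 0) : HasLog f U := by
  have hsc : IsSimplyConnected U := by
    have := hU.contractibleSpace hne
    exact (inferInstance : SimplyConnectedSpace U)
  obtain ⟨L, h1, h2⟩ := Complex.exists_continuousOn_eqOn_exp_comp hsc hUo hf
    (by rintro ⟨z, hz, h⟩; exact h0 z hz h)
  exact ⟨L, h1, fun z hz => h2 hz⟩

/-- The power map `z ↦ (z - p) ^ n`, `n ≠ 0`, has no logarithm on a circle around `p`. -/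
lemma not_hasLog_circle (p : ℂ) {r : ℝ} (hr : 0 < r) {n : ℤ} (hn : n ≠ 0) :
    ¬ HasLog (fun z => (z - p) ^ n) (sphere p r) := by
  rintro ⟨L, h1, h2⟩
  have hr' : (r : ℂ) ≠ 0 := by exact_mod_cast hr.ne'
  have hc : Continuous fun θ : ℝ => p + r * Complex.exp (θ * Complex.I) := by fun_prop
  have hm : ∀ θ : ℝ, p + r * Complex.exp (θ * Complex.I) ∈ sphere p r := fun θ => by
    simp [Complex.norm_exp_ofReal_mul_I, abs_of_pos hr]
  obtain ⟨m, hm'⟩ := log_unique (S := (univ : Set ℝ))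
    (L := fun θ => L (p + r * Complex.exp (θ * Complex.I)))
    (M := fun θ => n * (Complex.log r + θ * Complex.I)) isPreconnected_univ
    (h1.comp hc.continuousOn fun θ _ => hm θ) (by fun_prop) (fun θ _ => by
      rw [h2 _ (hm θ), Complex.exp_int_mul, Complex.exp_add, Complex.exp_log hr']
      simp)
  have e0 := hm' 0 trivial
  have e1 := hm' (2 * Real.pi) trivial
  simp only [Complex.ofReal_zero, zero_mul, Complex.exp_zero] at e0
  push_cast at e1
  rw [Complex.exp_two_pi_mul_I, e0] at e1
  have : (n : ℂ) * (2 * Real.pi * Complex.I) = 0 := by linear_combination -e1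
  simp [hn] at this

end HasLog

/-! ### Separation of the plane and continuous logarithms -/

section Plane

lemma continuousOn_invFunOn {X Y : Type*} [TopologicalSpace X] [TopologicalSpace Y] [T2Space Y]
    [Nonempty X] {f : X → Y} {K : Set X} (hK : IsCompact K) (hf : ContinuousOn f K)
    (hi : InjOn f K) : ContinuousOn (Function.invFunOn f K) (f '' K) := by
  rw [continuousOn_iff_isClosed]
  intro t ht
  refine ⟨f '' (K ∩ t), ((hK.inter_right ht).image_of_continuousOn
    (hf.mono inter_subset_left)).isClosed, ?_⟩
  ext y
  constructor
  · rintro ⟨h1, x, hx, rfl⟩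
    rw [mem_preimage, hi.leftInvOn_invFunOn hx] at h1
    exact ⟨⟨x, ⟨hx, h1⟩, rfl⟩, x, hx, rfl⟩
  · rintro ⟨⟨x, ⟨hx, hxt⟩, rfl⟩, _⟩
    refine ⟨?_, x, hx, rfl⟩
    rw [mem_preimage, hi.leftInvOn_invFunOn hx]
    exact hxt

/-- Every nonvanishing continuous function on an arc has a logarithm. -/
lemma hasLog_arc {X : Type*} [TopologicalSpace X] [T2Space X] {γ : ℝ → X} {a b : ℝ}
    (hab : a ≤ b) (hγ : ContinuousOn γ (Icc a b)) (hi : InjOn γ (Icc a b)) {f : X → ℂ}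
    (hf : ContinuousOn f (γ '' Icc a b)) (h0 : ∀ z ∈ γ '' Icc a b, f z ≠ 0) :
    HasLog f (γ '' Icc a b) := by
  have h1 : Continuous fun t : ℝ => f (γ (projIcc a b hab t)) := by
    have : Continuous fun t : ℝ => γ (projIcc a b hab t) :=
      hγ.comp_continuous (by fun_prop) fun t => (projIcc a b hab t).2
    exact hf.comp_continuous this fun t => ⟨_, (projIcc a b hab t).2, rfl⟩
  have hsc : IsSimplyConnected (univ : Set ℝ) := by
    have := (convex_univ (𝕜 := ℝ) (E := ℝ)).contractibleSpace univ_nonempty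
    exact (inferInstance : SimplyConnectedSpace (univ : Set ℝ))
  obtain ⟨ℓ, h2, h3⟩ := Complex.exists_continuousOn_eqOn_exp_comp hsc isOpen_univ h1.continuousOn
    (by rintro ⟨t, _, h⟩; exact h0 _ ⟨_, (projIcc a b hab t).2, rfl⟩ h)
  refine ⟨fun z => ℓ (Function.invFunOn γ (Icc a b) z), h2.comp
    (continuousOn_invFunOn isCompact_Icc hγ hi) (mapsTo_univ _ _), ?_⟩
  rintro _ ⟨t, ht, rfl⟩
  have := h3 (mem_univ t)
  simp only [Function.comp_apply] at this
  show Complex.exp (ℓ (Function.invFunOn γ (Icc a b) (γ t))) = f (γ t)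
  rw [hi.leftInvOn_invFunOn ht, this, projIcc_of_mem hab ht]

lemma isPreconnected_outside (R : ℝ) : IsPreconnected {z : ℂ | R < ‖z‖} := by
  have : {z : ℂ | R < ‖z‖} =
      (fun x : ℝ × ℝ => (x.1 : ℂ) * Complex.exp (x.2 * Complex.I)) '' (Ioi R ×ˢ univ) := by
    ext z
    constructor
    · intro hz
      exact ⟨(‖z‖, Complex.arg z), ⟨hz, trivial⟩, Complex.norm_mul_exp_arg_mul_I z⟩
    · rintro ⟨⟨r, θ⟩, ⟨hr, _⟩, rfl⟩
      have hr : R < r := hr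
      simp only [mem_ofPred_eq, norm_mul, Complex.norm_exp_ofReal_mul_I, mul_one,
        Complex.norm_real, Real.norm_eq_abs]
      exact hr.trans_le (le_abs_self r)
  rw [this]
  exact (isPreconnected_Ioi.prod isPreconnected_univ).image _ (by fun_prop)

/-- If `p` and `q` lie in a connected set missing `K`, then `(z - p) / (z - q)` has a logarithm
on `K`. -/
lemma hasLog_of_preconnected {K S : Set ℂ} (hK : IsClosed K) (hS : IsPreconnected S)
    (hSK : Disjoint S K) {p q : ℂ} (hp : p ∈ S) (hq : q ∈ S) :
    HasLog (fun z => (z - p) / (z - q)) K := by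
  have hne : ∀ x ∈ S, ∀ z ∈ K, z - x ≠ 0 := fun x hx z hz h =>
    hSK.ne_of_mem hx hz (sub_eq_zero.1 h).symm
  refine hS.induction₂' (fun p q => HasLog (fun z => (z - p) / (z - q)) K) ?_ ?_ hp hq
  · intro x hx
    obtain ⟨r, hr, hrK⟩ := Metric.isOpen_iff.1 hK.isOpen_compl x (disjoint_left.1 hSK hx)
    have key : ∀ y ∈ ball x (r / 2) ∩ S, HasLog (fun z => (z - x) / (z - y)) K := by
      rintro y ⟨hy, hyS⟩
      refine hasLog_of_near_one ?_ ?_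
      · exact ContinuousOn.div (by fun_prop) (by fun_prop) fun z hz => hne y hyS z hz
      · intro z hz
        have h1 : (z - x) / (z - y) - 1 = (y - x) / (z - y) := by
          rw [div_sub_one (hne y hyS z hz)]; ring
        rw [h1, norm_div, div_lt_one (norm_pos_iff.2 (hne y hyS z hz))]
        have h2 : r ≤ ‖z - x‖ := by
          by_contra! h
          exact hrK (by rwa [mem_ball, dist_eq_norm]) hz
        have h3 : ‖y - x‖ < r / 2 := by rwa [mem_ball, dist_eq_norm] at hy
        have h4 : ‖z - x‖ ≤ ‖z - y‖ + ‖y - x‖ := by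
          simpa using norm_add_le (z - y) (y - x)
        linarith
    have : ball x (r / 2) ∩ S ∈ 𝓝[S] x :=
      inter_mem (mem_nhdsWithin_of_mem_nhds (ball_mem_nhds x (by positivity))) self_mem_nhdsWithin
    filter_upwards [this] with y hy
    refine ⟨key y hy, (key y hy).inv.congr fun z hz => ?_⟩
    rw [inv_div]
  · intro x y z _ hy _ h1 h2
    refine (h1.mul h2).congr fun w hw => ?_
    rw [div_mul_div_cancel₀ (hne y hy w hw)]

lemma hasLog_of_outside {K : Set ℂ} {R : ℝ} (hK : ∀ z ∈ K, ‖z‖ ≤ R) {p : ℂ} (hp : R < ‖p‖) :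
    HasLog (fun z => z - p) K := by
  have hp0 : K.Nonempty → p ≠ 0 := by
    rintro ⟨z, hz⟩ rfl
    have := (norm_nonneg z).trans (hK z hz)
    simp at hp; linarith
  have h1 : HasLog (fun z => 1 - z / p) K := by
    refine hasLog_of_near_one (by fun_prop) fun z hz => ?_
    rw [show 1 - z / p - 1 = -(z / p) by ring, norm_neg, norm_div,
      div_lt_one (norm_pos_iff.2 (hp0 ⟨z, hz⟩))]
    exact (hK z hz).trans_lt hp
  rcases K.eq_empty_or_nonempty with rfl | hne
  · exact ⟨0, continuousOn_empty _, by simp⟩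
  refine ((HasLog.const (neg_ne_zero.2 (hp0 hne))).mul h1).congr fun z _ => ?_
  have := hp0 hne
  field_simp
  ring

/-- A point of an unbounded connected set missing the compact set `K` gives a function `z - p`
with a logarithm on `K`. -/
lemma hasLog_of_unbounded {K S : Set ℂ} (hK : IsCompact K) (hS : IsPreconnected S)
    (hSK : Disjoint S K) (hSb : ¬ Bornology.IsBounded S) {p : ℂ} (hp : p ∈ S) :
    HasLog (fun z => z - p) K := by
  obtain ⟨R, hR⟩ := hK.isBounded.exists_norm_le
  obtain ⟨q, hq, hqR⟩ : ∃ q ∈ S, R < ‖q‖ := by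
    by_contra! h
    exact hSb (isBounded_iff_forall_norm_le.2 ⟨R, h⟩)
  refine ((hasLog_of_preconnected hK.isClosed hS hSK hp hq).mul
    (hasLog_of_outside hR hqR)).congr fun z hz => ?_
  have : z - q ≠ 0 := fun h => hSK.ne_of_mem hq hz (sub_eq_zero.1 h).symm
  field_simp

/-- On the frontier of a bounded open set `U` containing `p`, the function
`(z - p) ^ n * u z` (with `n ≠ 0` and `u` nonvanishing on the closure of `U`) has no logarithm:
otherwise it would extend to a nonvanishing function on the plane which is a nonzero power of
`z - p` far away. -/
lemma not_hasLog_of_bounded {U K : Set ℂ} (hU : IsOpen U) (hb : Bornology.IsBounded U)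
    (hfr : frontier U ⊆ K) {p : ℂ} (hp : p ∈ U) {n : ℤ} (hn : n ≠ 0) {u : ℂ → ℂ}
    (hu : ContinuousOn u (closure U)) (hu0 : ∀ z ∈ closure U, u z ≠ 0) :
    ¬ HasLog (fun z => (z - p) ^ n * u z) K := by
  classical
  intro hlog
  obtain ⟨L, h1, h2⟩ := hlog.mono hfr
  obtain ⟨M, hM⟩ := ContinuousMap.exists_restrict_eq (isClosed_frontier (s := U))
    ⟨_, continuousOn_iff_continuous_domRestrict.1 h1⟩
  have hML : ∀ z ∈ frontier U, M z = L z := fun z hz => DFunLike.congr_fun hM ⟨z, hz⟩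
  let H : ℂ → ℂ := fun z => if z ∈ U then Complex.exp (M z) / u z else (z - p) ^ n
  have hHc : EqOn H (fun z => Complex.exp (M z) / u z) (closure U) := by
    intro z hz
    by_cases hzU : z ∈ U
    · simp [H, hzU]
    · have hzf : z ∈ frontier U := by rw [hU.frontier_eq]; exact ⟨hz, hzU⟩
      have := hu0 z hz
      simp only [H, hzU, if_false, hML z hzf, h2 z hzf]
      field_simp
  have hHo : EqOn H (fun z => (z - p) ^ n) Uᶜ := fun z hz => by
    simp only [H, if_neg (show z ∉ U from hz)]
  have hzp : ∀ z ∈ Uᶜ, z - p ≠ 0 := fun z hz h => hz (by rwa [sub_eq_zero.1 h])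
  have hcont : ContinuousOn H univ := by
    have hun : closure U ∪ Uᶜ = univ := by
      rw [eq_univ_iff_forall]; intro z
      by_cases hz : z ∈ U
      · exact Or.inl (subset_closure hz)
      · exact Or.inr hz
    rw [← hun]
    refine ContinuousOn.union_of_isClosed ?_ ?_ isClosed_closure hU.isClosed_compl
    · exact ((Complex.continuous_exp.comp M.continuous).continuousOn.div hu hu0).congr hHc
    · exact (ContinuousOn.zpow₀ (by fun_prop) n fun z hz => Or.inl (hzp z hz)).congr hHo
  have hne : ∀ z ∈ (univ : Set ℂ), H z ≠ 0 := by
    intro z _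
    by_cases hz : z ∈ U
    · rw [hHc (subset_closure hz)]
      exact div_ne_zero (Complex.exp_ne_zero _) (hu0 z (subset_closure hz))
    · rw [hHo hz]; exact zpow_ne_zero n (hzp z hz)
  have hH := hasLog_of_convex convex_univ isOpen_univ univ_nonempty hcont hne
  obtain ⟨R, hR⟩ := hb.subset_ball p
  have hR0 : 0 < R := by
    have := hR hp
    simpa using this
  refine not_hasLog_circle p hR0 hn ((hH.mono (subset_univ (sphere p R))).congr fun z hz => ?_)
  refine hHo fun hzU => ?_
  have h1 := hR hzU
  rw [mem_ball, mem_sphere.1 hz] at h1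
  exact lt_irrefl _ h1

lemma frontier_connectedComponentIn_subset {X : Type*} [TopologicalSpace X]
    [LocallyConnectedSpace X] {K : Set X} (hK : IsClosed K) (p : X) :
    frontier (connectedComponentIn Kᶜ p) ⊆ K := by
  intro z hz
  by_contra hzK
  have ho : IsOpen (connectedComponentIn Kᶜ p) := hK.isOpen_compl.connectedComponentIn
  rw [ho.frontier_eq] at hz
  obtain ⟨w, hw1, hw2⟩ := mem_closure_iff.1 hz.1 (connectedComponentIn Kᶜ z)
    hK.isOpen_compl.connectedComponentIn (mem_connectedComponentIn hzK)
  apply hz.2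
  rw [connectedComponentIn_eq hw2, ← connectedComponentIn_eq hw1]
  exact mem_connectedComponentIn hzK

/-- An open set contains every preconnected set that meets it and misses its frontier. -/
lemma subset_of_disjoint_frontier {X : Type*} [TopologicalSpace X] {U S : Set X} (hU : IsOpen U)
    (hS : IsPreconnected S) (hd : Disjoint S (frontier U)) (hne : (S ∩ U).Nonempty) : S ⊆ U := by
  refine hS.subset_left_of_subset_union hU (isClosed_closure (s := U)).isOpen_compl ?_ ?_ hne
  · exact disjoint_compl_right.mono_left subset_closure
  · intro x hx
    by_cases hxU : x ∈ U
    · exact Or.inl hxU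
    · refine Or.inr fun hxc => disjoint_left.1 hd hx ?_
      rw [hU.frontier_eq]; exact ⟨hxc, hxU⟩

/-- An unbounded open set with bounded frontier contains a neighbourhood of infinity. -/
lemma outside_subset {U : Set ℂ} (hU : IsOpen U) {R : ℝ}
    (hfr : ∀ z ∈ frontier U, ‖z‖ ≤ R) (hb : ¬ Bornology.IsBounded U) :
    {z : ℂ | R < ‖z‖} ⊆ U := by
  refine subset_of_disjoint_frontier hU (isPreconnected_outside R) ?_ ?_
  · rw [disjoint_left]
    intro z hz hzf
    exact absurd (hfr z hzf) (not_le.2 hz)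
  · by_contra h
    refine hb (isBounded_iff_forall_norm_le.2 ⟨R, fun z hz => ?_⟩)
    by_contra! hz'
    exact h ⟨z, hz', hz⟩

lemma unbounded_inter {U V K : Set ℂ} (hU : IsOpen U) (hV : IsOpen V)
    (hK : Bornology.IsBounded K) (hfU : frontier U ⊆ K) (hfV : frontier V ⊆ K)
    (hUb : ¬ Bornology.IsBounded U) (hVb : ¬ Bornology.IsBounded V) : (U ∩ V).Nonempty := by
  obtain ⟨R, hR⟩ := hK.exists_norm_le
  have h1 := outside_subset (R := max R 0) hU
    (fun z hz => (hR z (hfU hz)).trans (le_max_left _ _)) hUb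
  have h2 := outside_subset (R := max R 0) hV
    (fun z hz => (hR z (hfV hz)).trans (le_max_left _ _)) hVb
  have : ((max R 0 + 1 : ℝ) : ℂ) ∈ {z : ℂ | max R 0 < ‖z‖} := by
    simp only [mem_ofPred_eq, Complex.norm_real, Real.norm_eq_abs]
    exact (lt_add_one _).trans_le (le_abs_self _)
  exact ⟨_, h1 this, h2 this⟩

/-- If `(z - p) / (z - q)` has a logarithm on the compact set `K`, then `K` does not separate
`p` from `q`. -/
lemma mem_component_of_hasLog {K : Set ℂ} (hK : IsCompact K) {p q : ℂ} (hp : p ∉ K) (hq : q ∉ K)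
    (h : HasLog (fun z => (z - p) / (z - q)) K) : q ∈ connectedComponentIn Kᶜ p := by
  by_contra hqp
  have ho : ∀ x, IsOpen (connectedComponentIn Kᶜ x) := fun x =>
    hK.isClosed.isOpen_compl.connectedComponentIn
  have hfr := frontier_connectedComponentIn_subset hK.isClosed
  have hd : ∀ z, z ∈ connectedComponentIn Kᶜ p → z ∉ connectedComponentIn Kᶜ q := by
    intro z h1 h2
    apply hqp
    rw [connectedComponentIn_eq h1, ← connectedComponentIn_eq h2]
    exact mem_connectedComponentIn hq
  have main : ∀ p q : ℂ, p ∉ K → q ∉ K →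
      (∀ z, z ∈ connectedComponentIn Kᶜ p → z ∉ connectedComponentIn Kᶜ q) →
      HasLog (fun z => (z - p) / (z - q)) K →
      ¬ Bornology.IsBounded (connectedComponentIn Kᶜ p) := by
    intro p q hp hq hd h hb
    have hz : ∀ z ∈ closure (connectedComponentIn Kᶜ p), z - q ≠ 0 := by
      intro z hz h0
      rw [sub_eq_zero.1 h0] at hz
      obtain ⟨w, hw1, hw2⟩ := mem_closure_iff.1 hz _ (ho q) (mem_connectedComponentIn hq)
      exact hd w hw2 hw1
    refine not_hasLog_of_bounded (ho p) hb (hfr p) (mem_connectedComponentIn hp) one_ne_zero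
      (u := fun z => (z - q)⁻¹) (ContinuousOn.inv₀ (by fun_prop) hz)
      (fun z hz' => inv_ne_zero (hz z hz')) (h.congr fun z _ => ?_)
    rw [zpow_one, div_eq_mul_inv]
  have hd' : ∀ z, z ∈ connectedComponentIn Kᶜ q → z ∉ connectedComponentIn Kᶜ p :=
    fun z h1 h2 => hd z h2 h1
  obtain ⟨z, h1, h2⟩ := unbounded_inter (ho p) (ho q) hK.isBounded (hfr p) (hfr q)
    (main p q hp hq hd h) (main q p hq hp hd' (h.inv.congr fun z _ => inv_div _ _))
  exact hd z h1 h2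

/-- Eilenberg's criterion for a compact plane set not to separate the plane. -/
lemma isPreconnected_compl_of_hasLog {K : Set ℂ} (hK : IsCompact K)
    (h : ∀ p ∉ K, ∀ q ∉ K, HasLog (fun z => (z - p) / (z - q)) K) : IsPreconnected Kᶜ := by
  refine isPreconnected_of_forall_pair fun p hp q hq => ?_
  exact ⟨connectedComponentIn Kᶜ p, connectedComponentIn_subset _ _, mem_connectedComponentIn hp,
    mem_component_of_hasLog hK hp hq (h p hp q hq), isPreconnected_connectedComponentIn⟩

/-- An arc does not separate the plane. -/
lemma isPreconnected_compl_arc {γ : ℝ → ℂ} {a b : ℝ} (hab : a ≤ b)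
    (hγ : ContinuousOn γ (Icc a b)) (hi : InjOn γ (Icc a b)) :
    IsPreconnected (γ '' Icc a b)ᶜ := by
  refine isPreconnected_compl_of_hasLog (isCompact_Icc.image_of_continuousOn hγ)
    fun p hp q hq => hasLog_arc hab hγ hi ?_ ?_
  · exact ContinuousOn.div (by fun_prop) (by fun_prop) fun z hz h => hq (sub_eq_zero.1 h ▸ hz)
  · exact fun z hz => div_ne_zero (fun h => hp (sub_eq_zero.1 h ▸ hz))
      fun h => hq (sub_eq_zero.1 h ▸ hz)

/-- Janiszewski's theorem: if the compact sets `X`, `Y` have connected intersection and neither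
separates `p` from `q`, then neither does their union. -/
lemma janiszewski {X Y S T : Set ℂ} (hX : IsCompact X) (hY : IsCompact Y)
    (hXY : IsPreconnected (X ∩ Y)) (hS : IsPreconnected S) (hT : IsPreconnected T)
    (hSX : Disjoint S X) (hTY : Disjoint T Y) {p q : ℂ} (hpS : p ∈ S) (hqS : q ∈ S)
    (hpT : p ∈ T) (hqT : q ∈ T) : q ∈ connectedComponentIn (X ∪ Y)ᶜ p := by
  refine mem_component_of_hasLog (hX.union hY) ?_ ?_ ?_
  · exact fun h => h.elim (disjoint_left.1 hSX hpS) (disjoint_left.1 hTY hpT)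
  · exact fun h => h.elim (disjoint_left.1 hSX hqS) (disjoint_left.1 hTY hqT)
  · exact (hasLog_of_preconnected hX.isClosed hS hSX hpS hqS).union_of_isClosed
      (hasLog_of_preconnected hY.isClosed hT hTY hpT hqT) hX.isClosed hY.isClosed hXY

/-- Off a path from `a` to `b`, the function `(z - b) / (z - a)` has a logarithm. -/
lemma hasLog_compl_path {γ : ℝ → ℂ} (hγ : ContinuousOn γ (Icc 0 1)) :
    HasLog (fun z => (z - γ 1) / (z - γ 0)) (γ '' Icc 0 1)ᶜ := by
  set A := γ '' Icc (0 : ℝ) 1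
  have hg : Continuous fun t : unitInterval => γ t :=
    hγ.comp_continuous continuous_subtype_val fun t => t.2
  have hne : ∀ (t : unitInterval) (z : (Aᶜ : Set ℂ)), (z : ℂ) - γ t ≠ 0 := fun t z h =>
    z.2 (by rw [sub_eq_zero.1 h]; exact ⟨t, t.2, rfl⟩)
  let H : C(unitInterval × (Aᶜ : Set ℂ), {z : ℂ // z ≠ 0}) :=
    { toFun := fun x => ⟨((x.2 : ℂ) - γ x.1) / ((x.2 : ℂ) - γ (0 : unitInterval)),
        div_ne_zero (hne _ _) (hne _ _)⟩
      continuous_toFun := by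
        refine Continuous.subtype_mk (Continuous.div ?_ ?_ fun x => hne _ _) _
        · exact (continuous_subtype_val.comp continuous_snd).sub (hg.comp continuous_fst)
        · exact (continuous_subtype_val.comp continuous_snd).sub continuous_const }
  have H0 : ∀ a, H (0, a) = ⟨_, Complex.exp_ne_zero ((0 : C((Aᶜ : Set ℂ), ℂ)) a)⟩ := fun a => by
    apply Subtype.ext
    show ((a : ℂ) - γ (0 : unitInterval)) / ((a : ℂ) - γ (0 : unitInterval)) = Complex.exp 0
    rw [div_self (hne 0 a), Complex.exp_zero]
  let F := Complex.isCoveringMap_exp.liftHomotopy H 0 H0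
  have hF : ∀ x, Complex.exp (F x) = H x := fun x =>
    congrArg Subtype.val (congr_fun (Complex.isCoveringMap_exp.liftHomotopy_lifts H 0 H0) x)
  classical
  refine ⟨fun z => if hz : z ∈ Aᶜ then F (1, ⟨z, hz⟩) else 0, ?_, ?_⟩
  · rw [continuousOn_iff_continuous_domRestrict]
    have : Continuous fun z : (Aᶜ : Set ℂ) => F (1, z) := by fun_prop
    convert this with z
    exact dif_pos z.2
  · intro z hz
    show Complex.exp (if hz : z ∈ Aᶜ then F (1, ⟨z, hz⟩) else 0) = _
    rw [dif_pos hz, hF]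
    simp [H]

/-- Two arcs with the same two endpoints and otherwise disjoint separate the plane. -/
lemma not_isPreconnected_compl {α β : ℝ → ℂ} (hα : ContinuousOn α (Icc 0 1))
    (hβ : ContinuousOn β (Icc 0 1)) (h0 : α 0 = β 0) (h1 : α 1 = β 1) (hne : α 0 ≠ α 1)
    (hint : α '' Icc 0 1 ∩ β '' Icc 0 1 ⊆ {α 0, α 1}) :
    ¬ IsPreconnected (α '' Icc 0 1 ∪ β '' Icc 0 1)ᶜ := by
  intro hpre
  have hL1 := hasLog_compl_path hα
  have hL2 := hasLog_compl_path hβ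
  rw [← h0, ← h1] at hL2
  have hL := hL1.union_of_isOpen hL2
    (isCompact_Icc.image_of_continuousOn hα).isClosed.isOpen_compl
    (isCompact_Icc.image_of_continuousOn hβ).isClosed.isOpen_compl (by rwa [← compl_union])
  rw [← compl_inter] at hL
  have hd : 0 < dist (α 0) (α 1) := dist_pos.2 hne
  set r := dist (α 0) (α 1) / 2 with hr
  have hz0 : ∀ z ∈ ball (α 1) (dist (α 0) (α 1)), z - α 0 ≠ 0 := by
    intro z hz h
    rw [sub_eq_zero.1 h] at hz
    exact lt_irrefl _ (mem_ball.1 hz)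
  have hb : HasLog (fun z => z - α 0) (ball (α 1) (dist (α 0) (α 1))) :=
    hasLog_of_convex (convex_ball _ _) isOpen_ball ⟨_, mem_ball_self hd⟩ (by fun_prop) hz0
  have hsb : sphere (α 1) r ⊆ ball (α 1) (dist (α 0) (α 1)) := fun z hz => by
    rw [mem_ball, mem_sphere.1 hz]; linarith
  have hsc : sphere (α 1) r ⊆ (α '' Icc 0 1 ∩ β '' Icc 0 1)ᶜ := by
    intro z hz hz'
    rw [mem_sphere] at hz
    rcases hint hz' with h | h
    · rw [h] at hz; linarith
    · rw [mem_singleton_iff.1 h, dist_self] at hz; linarith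
  refine not_hasLog_circle (α 1) (r := r) (by positivity) (one_ne_zero)
    (((hL.mono hsc).mul (hb.mono hsb)).congr fun z hz => ?_)
  rw [zpow_one, div_mul_cancel₀ _ (hz0 z (hsb hz))]

end Plane

/-! ### Logarithms on simply connected plane domains -/

section Admissible

/-- The function `f` does not wind around any point outside `f '' K`. -/
def NoWinding (f : ℂ → ℂ) (K : Set ℂ) : Prop :=
  ∀ w ∉ f '' K, HasLog (fun z => f z - w) K

/-- A function is admissible on `D` if it does not wind around points on the compact subsets of
`D` with connected complement. On a simply connected `D` every injective holomorphic function has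
this property, but only the stability of the property under the operations in the proof of the
Riemann mapping theorem is needed. -/
def Admissible (D : Set ℂ) (f : ℂ → ℂ) : Prop :=
  ∀ K ⊆ D, IsCompact K → IsPreconnected Kᶜ → NoWinding f K

lemma NoWinding.isPreconnected_compl {f : ℂ → ℂ} {K : Set ℂ} (hK : IsCompact K)
    (hf : ContinuousOn f K) (hi : InjOn f K) (h : NoWinding f K) : IsPreconnected (f '' K)ᶜ := by
  refine isPreconnected_compl_of_hasLog (hK.image_of_continuousOn hf) fun p hp q hq => ?_
  have hm : MapsTo (Function.invFunOn f K) (f '' K) K := by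
    rintro _ ⟨x, hx, rfl⟩
    rwa [hi.leftInvOn_invFunOn hx]
  refine (((h p hp).div (h q hq)).comp (continuousOn_invFunOn hK hf hi) hm).congr ?_
  rintro _ ⟨x, hx, rfl⟩
  simp only [hi.leftInvOn_invFunOn hx]

lemma not_isBounded_compl {K : Set ℂ} (hK : IsCompact K) : ¬ Bornology.IsBounded Kᶜ := by
  intro h
  have := hK.isBounded.union h
  rw [union_compl_self] at this
  exact NormedSpace.unbounded_univ ℂ ℂ this

lemma noWinding_of_isPreconnected_compl {f : ℂ → ℂ} {K : Set ℂ} (hK : IsCompact K)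
    (hf : ContinuousOn f K) (h : IsPreconnected (f '' K)ᶜ) : NoWinding f K := by
  intro w hw
  have hK' := hK.image_of_continuousOn hf
  exact (hasLog_of_unbounded hK' h disjoint_compl_left (not_isBounded_compl hK') hw).comp hf
    (mapsTo_image f K)

/-- If `Q` is disjoint from `-Q` and the set of squares of `Q` does not separate the plane, then
`Q` does not wind around any point outside `Q`. -/
lemma hasLog_of_sq {Q : Set ℂ} (hQ : IsCompact Q) (hd : Disjoint Q (-Q))
    (hsq : IsPreconnected ((fun z : ℂ => z ^ 2) '' Q)ᶜ) {w : ℂ} (hw : w ∉ Q) :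
    HasLog (fun z => z - w) Q := by
  have hQ2 : IsCompact ((fun z : ℂ => z ^ 2) '' Q) := hQ.image (by fun_prop)
  have hQQ : IsCompact (Q ∪ -Q) := hQ.union hQ.neg
  have hopen : IsOpenMap fun z : ℂ => z ^ 2 := by
    intro s hs
    have han : AnalyticOnNhd ℂ (fun z : ℂ => z ^ 2) univ := fun z _ => by fun_prop
    rcases han.is_constant_or_isOpen isPreconnected_univ with ⟨c, hc⟩ | h
    · have h0 := hc 0 trivial
      have h1 := hc 1 trivial
      norm_num at h0 h1
      rw [← h0] at h1; exact absurd h1 one_ne_zero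
    · exact h s (subset_univ _) hs
  have hmem : ∀ z : ℂ, z ^ 2 ∈ (fun z : ℂ => z ^ 2) '' Q → z ∈ Q ∪ -Q := by
    rintro z ⟨x, hx, hxz⟩
    rcases sq_eq_sq_iff_eq_or_eq_neg.1 hxz with rfl | rfl
    · exact Or.inl hx
    · exact Or.inr (by simpa using hx)
  have hmem' : ∀ z ∈ Q ∪ -Q, z ^ 2 ∈ (fun z : ℂ => z ^ 2) '' Q := by
    rintro z (h | h)
    · exact ⟨z, h, rfl⟩
    · exact ⟨-z, h, by simp⟩
  -- components of the complement of `Q ∪ -Q` are unbounded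
  have key : ∀ p ∉ Q ∪ -Q, ¬ Bornology.IsBounded (connectedComponentIn (Q ∪ -Q)ᶜ p) := by
    intro p hp hb
    set W := connectedComponentIn (Q ∪ -Q)ᶜ p
    have hWo : IsOpen W := hQQ.isClosed.isOpen_compl.connectedComponentIn
    have hWfr : frontier W ⊆ Q ∪ -Q := frontier_connectedComponentIn_subset hQQ.isClosed p
    have hcl : IsCompact (closure W) := hb.isCompact_closure
    have hfr : frontier ((fun z : ℂ => z ^ 2) '' W) ⊆ (fun z : ℂ => z ^ 2) '' Q := by
      rw [(hopen _ hWo).frontier_eq]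
      rintro y ⟨hy, hyW⟩
      have hsub : closure ((fun z : ℂ => z ^ 2) '' W) ⊆ (fun z : ℂ => z ^ 2) '' closure W :=
        closure_minimal (image_mono subset_closure) (hcl.image (by fun_prop)).isClosed
      obtain ⟨z, hz, rfl⟩ := hsub hy
      refine hmem' z (hWfr ?_)
      rw [hWo.frontier_eq]
      exact ⟨hz, fun h => hyW ⟨z, h, rfl⟩⟩
    have hpW : p ∈ W := mem_connectedComponentIn hp
    have hsub := subset_of_disjoint_frontier (hopen _ hWo) hsq
      (disjoint_compl_left.mono_right hfr) ⟨p ^ 2, fun h => hp (hmem p h), p, hpW, rfl⟩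
    refine not_isBounded_compl hQ2 (Bornology.IsBounded.subset ?_ hsub)
    exact (hcl.image (f := fun z : ℂ => z ^ 2) (by fun_prop)).isBounded.subset
      (image_mono subset_closure)
  set V := connectedComponentIn Qᶜ w
  have hVo : IsOpen V := hQ.isClosed.isOpen_compl.connectedComponentIn
  have hVfr : frontier V ⊆ Q := frontier_connectedComponentIn_subset hQ.isClosed w
  have hwV : w ∈ V := mem_connectedComponentIn hw
  refine hasLog_of_unbounded hQ isPreconnected_connectedComponentIn (S := V)
    (disjoint_compl_left.mono_left (connectedComponentIn_subset _ _)) ?_ hwV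
  intro hVb
  by_cases h : V ⊆ -Q
  · have hclV : closure V ⊆ -Q := closure_minimal h hQ.neg.isClosed
    have hf : frontier V = ∅ := by
      rw [eq_empty_iff_forall_notMem]
      intro z hz
      exact disjoint_left.1 hd (hVfr hz) (hclV (frontier_subset_closure hz))
    rcases frontier_eq_empty_iff.1 hf with h' | h'
    · rw [h'] at hwV; exact hwV
    · rw [h'] at hVb; exact NormedSpace.unbounded_univ ℂ ℂ hVb
  · obtain ⟨p, hpV, hpQ⟩ := not_subset.1 h
    have hpQ' : p ∉ Q ∪ -Q := fun h => h.elim (connectedComponentIn_subset _ _ hpV) hpQ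
    refine key p hpQ' (hVb.subset ?_)
    have h2 : V = connectedComponentIn Qᶜ p := connectedComponentIn_eq hpV
    rw [h2]
    exact connectedComponentIn_mono _ (compl_subset_compl.2 subset_union_left)

/-- Every compact subset of a bounded domain without holes lies in a compact subset without
holes. -/
lemma exists_filled {D : Set ℂ} (hDb : Bornology.IsBounded D) (hDc : IsPreconnected Dᶜ)
    {K : Set ℂ} (hK : IsCompact K) (hKD : K ⊆ D) :
    ∃ K' ⊆ D, K ⊆ K' ∧ IsCompact K' ∧ IsPreconnected K'ᶜ := by
  obtain ⟨q, hq⟩ : (Dᶜ).Nonempty := by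
    rw [nonempty_compl]; rintro rfl
    exact NormedSpace.unbounded_univ ℂ ℂ hDb
  have hsub : Dᶜ ⊆ connectedComponentIn Kᶜ q :=
    hDc.subset_connectedComponentIn hq (compl_subset_compl.2 hKD)
  have h1 : (connectedComponentIn Kᶜ q)ᶜ ⊆ D := compl_subset_comm.1 hsub
  refine ⟨_, h1, subset_compl_comm.1 (connectedComponentIn_subset _ _), ?_, ?_⟩
  · exact isCompact_of_isClosed_isBounded
      hK.isClosed.isOpen_compl.connectedComponentIn.isClosed_compl (hDb.subset h1)
  · rw [compl_compl]; exact isPreconnected_connectedComponentIn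

/-- If a function has a logarithm on all compact subsets without holes of a bounded domain without
holes, it has a logarithm on the domain. -/
lemma hasLog_of_compacts {D : Set ℂ} (hDo : IsOpen D) (hD : IsConnected D)
    (hDb : Bornology.IsBounded D) (hDc : IsPreconnected Dᶜ) {g : ℂ → ℂ}
    (hg : ∀ K ⊆ D, IsCompact K → IsPreconnected Kᶜ → HasLog g K) : HasLog g D := by
  classical
  obtain ⟨p, hp⟩ := hD.nonempty
  have hne : (Dᶜ).Nonempty := by
    rw [nonempty_compl]; rintro rfl
    exact NormedSpace.unbounded_univ ℂ ℂ hDb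
  have hpos : ∀ z ∈ D, 0 < infDist z Dᶜ := fun z hz =>
    (hDo.isClosed_compl.notMem_iff_infDist_pos hne).1 (fun h => h hz)
  let O : ℕ → Set ℂ := fun n => {z | 1 / ((n : ℝ) + 1) < infDist z Dᶜ}
  have hOo : ∀ n, IsOpen (O n) := fun n => isOpen_lt continuous_const (continuous_infDist_pt _)
  have hOm : ∀ m n, m ≤ n → O m ⊆ O n := fun m n hmn z hz =>
    lt_of_le_of_lt (Nat.one_div_le_one_div hmn) (show 1 / ((m : ℝ) + 1) < infDist z Dᶜ from hz)
  let C : ℕ → Set ℂ := fun n => connectedComponentIn (O n) p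
  have hCo : ∀ n, IsOpen (C n) := fun n => (hOo n).connectedComponentIn
  have hCm : ∀ m n, m ≤ n → C m ⊆ C n := fun m n hmn => connectedComponentIn_mono _ (hOm m n hmn)
  have hcov : ∀ z ∈ D, ∃ n, z ∈ C n := by
    intro z hz
    have hpath : IsPathConnected D := hDo.isConnected_iff_isPathConnected.1 hD
    obtain ⟨γ, hγ⟩ := hpath.joinedIn p hp z hz
    have hcomp : IsCompact (range γ) := isCompact_range γ.continuous
    obtain ⟨x, hx, hmin⟩ := hcomp.exists_isMinOn (range_nonempty γ)
      (continuous_infDist_pt Dᶜ).continuousOn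
    have hxD : x ∈ D := by
      obtain ⟨t, rfl⟩ := hx; exact hγ t
    obtain ⟨n, hn⟩ := exists_nat_one_div_lt (hpos x hxD)
    refine ⟨n, (isPreconnected_range γ.continuous).subset_connectedComponentIn ⟨0, γ.source⟩ ?_
      ⟨1, γ.target⟩⟩
    exact fun y hy => hn.trans_le (hmin hy)
  have hpO : ∀ n, (C n).Nonempty → p ∈ C n := by
    intro n ⟨x, hx⟩
    refine mem_connectedComponentIn ?_
    by_contra h
    have : connectedComponentIn (O n) p = ∅ := connectedComponentIn_eq_empty h
    rw [show C n = ∅ from this] at hx; exact hx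
  have hlog : ∀ n, HasLog g (C n) := by
    intro n
    let K : Set ℂ := {z | 1 / ((n : ℝ) + 1) ≤ infDist z Dᶜ}
    have hKD : K ⊆ D := by
      intro z hz
      by_contra h
      have : infDist z Dᶜ = 0 := infDist_zero_of_mem h
      have h1 : 1 / ((n : ℝ) + 1) ≤ 0 := this ▸ hz
      have : 0 < 1 / ((n : ℝ) + 1) := Nat.one_div_pos_of_nat
      linarith
    have hK : IsCompact K := isCompact_of_isClosed_isBounded
      (isClosed_le continuous_const (continuous_infDist_pt _)) (hDb.subset hKD)
    obtain ⟨K', h1, h2, h3, h4⟩ := exists_filled hDb hDc hK hKD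
    refine (hg K' h1 h3 h4).mono fun z hz => h2 ?_
    have hzO : z ∈ O n := connectedComponentIn_subset _ _ hz
    exact le_of_lt (show 1 / ((n : ℝ) + 1) < infDist z Dᶜ from hzO)
  choose L hLc hLe using hlog
  obtain ⟨n0, hn0⟩ := hcov p hp
  have hcons : ∀ m n z, m ≤ n → z ∈ C m → L m z - L m p = L n z - L n p := by
    intro m n z hmn hz
    have hpm := hpO m ⟨z, hz⟩
    obtain ⟨k, hk⟩ := log_unique (S := C m) isPreconnected_connectedComponentIn (hLc m)
      ((hLc n).mono (hCm m n hmn))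
      (fun y hy => (hLe m y hy).trans (hLe n y (hCm m n hmn hy)).symm)
    rw [hk z hz, hk p hpm]; ring
  let N : ℂ → ℕ := fun z => if h : ∃ n, z ∈ C n then h.choose else 0
  have hN : ∀ z ∈ D, z ∈ C (N z) := by
    intro z hz
    have := hcov z hz
    simp only [N, dif_pos this]
    exact this.choose_spec
  have hcons' : ∀ n z, z ∈ C n → z ∈ D → L (N z) z - L (N z) p = L n z - L n p := by
    intro n z hz hzD
    rcases le_total n (N z) with h | h
    · exact (hcons _ _ _ h hz).symm
    · exact hcons _ _ _ h (hN z hzD)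
  refine ⟨fun z => L (N z) z - L (N z) p + L n0 p, ?_, ?_⟩
  · intro z hz
    have hnb : C (N z) ∈ 𝓝 z := (hCo _).mem_nhds (hN z hz)
    have hc : ContinuousAt (fun y => L (N z) y - L (N z) p + L n0 p) z :=
      (((hLc _).continuousAt hnb).sub continuousAt_const).add continuousAt_const
    refine ContinuousAt.continuousWithinAt (hc.congr ?_)
    filter_upwards [hnb, hDo.mem_nhds hz] with y hy hyD
    rw [hcons' (N z) y hy hyD]
  · intro z hz
    have h1 : p ∈ C (N z) := hpO _ ⟨z, hN z hz⟩
    simp only []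
    rw [Complex.exp_add, Complex.exp_sub, hLe _ _ (hN z hz), hLe _ _ h1, hLe _ _ hn0,
      div_mul_cancel₀]
    rw [← hLe _ _ h1]; exact Complex.exp_ne_zero _

/-- The Möbius transformation of the unit disc taking `a` to `0`. -/
def mob (a z : ℂ) : ℂ := (z - a) / (1 - starRingEnd ℂ a * z)

lemma mob_den {a z : ℂ} (ha : ‖a‖ < 1) (hz : ‖z‖ < 1) :
    0 < (1 - starRingEnd ℂ a * z).re := by
  have h1 : (starRingEnd ℂ a * z).re ≤ ‖starRingEnd ℂ a * z‖ := Complex.re_le_norm _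
  rw [norm_mul, Complex.norm_conj] at h1
  have : ‖a‖ * ‖z‖ < 1 := by nlinarith [norm_nonneg a, norm_nonneg z]
  rw [Complex.sub_re, Complex.one_re]; linarith

lemma mob_den_ne {a z : ℂ} (ha : ‖a‖ < 1) (hz : ‖z‖ < 1) : 1 - starRingEnd ℂ a * z ≠ 0 := by
  intro h
  have := mob_den ha hz
  rw [h] at this; simp at this

lemma norm_mob_lt {a z : ℂ} (ha : ‖a‖ < 1) (hz : ‖z‖ < 1) : ‖mob a z‖ < 1 := by
  rw [mob, norm_div, div_lt_one (norm_pos_iff.2 (mob_den_ne ha hz))]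
  refine lt_of_pow_lt_pow_left₀ 2 (norm_nonneg _) ?_
  have h1 : ‖a‖ ^ 2 < 1 := by nlinarith [norm_nonneg a]
  have h2 : ‖z‖ ^ 2 < 1 := by nlinarith [norm_nonneg z]
  rw [← Complex.normSq_eq_norm_sq, Complex.normSq_apply] at h1 h2
  rw [← Complex.normSq_eq_norm_sq, ← Complex.normSq_eq_norm_sq, Complex.normSq_apply,
    Complex.normSq_apply]
  simp only [Complex.sub_re, Complex.sub_im, Complex.one_re, Complex.one_im, Complex.mul_re,
    Complex.mul_im, Complex.conj_re, Complex.conj_im]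
  nlinarith [mul_pos (sub_pos.2 h1) (sub_pos.2 h2)]

lemma mob_injOn {a z w : ℂ} (ha : ‖a‖ < 1) (hz : ‖z‖ < 1) (hw : ‖w‖ < 1)
    (h : mob a z = mob a w) : z = w := by
  rw [mob, mob, div_eq_div_iff (mob_den_ne ha hz) (mob_den_ne ha hw)] at h
  have hk : (1 - starRingEnd ℂ a * a) * (z - w) = 0 := by linear_combination h
  rcases mul_eq_zero.1 hk with h1 | h1
  · exact absurd h1 (mob_den_ne ha ha)
  · exact sub_eq_zero.1 h1

lemma mob_self (a : ℂ) : mob a a = 0 := by simp [mob]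

lemma hasDerivAt_mob {a z : ℂ} (ha : ‖a‖ < 1) (hz : ‖z‖ < 1) :
    HasDerivAt (mob a) ((1 - starRingEnd ℂ a * a) / (1 - starRingEnd ℂ a * z) ^ 2) z := by
  have h1 : HasDerivAt (fun z => z - a) 1 z := (hasDerivAt_id z).sub_const a
  have h2 : HasDerivAt (fun z => 1 - starRingEnd ℂ a * z) (-(starRingEnd ℂ a * 1)) z :=
    ((hasDerivAt_id z).const_mul _).const_sub 1
  refine (h1.div h2 (mob_den_ne ha hz)).congr_deriv ?_
  congr 1; ring

lemma NoWinding.mob {f : ℂ → ℂ} {K : Set ℂ} {a : ℂ} (ha : ‖a‖ < 1)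
    (hf : ContinuousOn f K) (hfm : ∀ z ∈ K, ‖f z‖ < 1) (h : NoWinding f K) :
    NoWinding (fun z => mob a (f z)) K := by
  intro w hw
  have hden : HasLog (fun z => 1 - starRingEnd ℂ a * f z) K :=
    hasLog_of_slitPlane (by fun_prop) fun z hz => Or.inl (mob_den ha (hfm z hz))
  have hnum : HasLog (fun z => (1 + w * starRingEnd ℂ a) * f z - (a + w)) K := by
    by_cases h0 : 1 + w * starRingEnd ℂ a = 0
    · have : -(a + w) ≠ 0 := by
        intro h1
        have h2 : w = -a := by linear_combination -h1
        rw [h2] at h0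
        exact mob_den_ne ha ha (by linear_combination h0)
      exact (HasLog.const this).congr fun z _ => by rw [h0]; ring
    · refine ((HasLog.const h0).mul (h ((a + w) / (1 + w * starRingEnd ℂ a)) ?_)).congr
        fun z _ => by field_simp
      rintro ⟨z, hz, hfz⟩
      refine hw ⟨z, hz, ?_⟩
      simp only [Theta.mob]
      rw [div_eq_iff (mob_den_ne ha (hfm z hz))]
      rw [eq_div_iff h0] at hfz
      linear_combination hfz
  refine (hnum.div hden).congr fun z hz => ?_
  simp only [Theta.mob]
  have := mob_den_ne ha (hfm z hz)
  field_simp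
  ring

end Admissible

/-! ### The Riemann mapping theorem -/

section Riemann

/-- The competitors in the extremal problem of the Riemann mapping theorem. -/
structure Fam (D : Set ℂ) (p : ℂ) (f : ℂ → ℂ) : Prop where
  diff : DifferentiableOn ℂ f D
  inj : InjOn f D
  maps : ∀ z ∈ D, ‖f z‖ < 1
  zero : f p = 0
  adm : Admissible D f

variable {D : Set ℂ} {p : ℂ}

lemma fam_affine (hDb : Bornology.IsBounded D) :
    ∃ c : ℂ, c ≠ 0 ∧ Fam D p (fun z => c * (z - p)) := by
  obtain ⟨R, hR0, hR⟩ := hDb.exists_pos_norm_le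
  have hpos : 0 < R + ‖p‖ + 1 := by positivity
  have hc : ((R + ‖p‖ + 1 : ℝ) : ℂ)⁻¹ ≠ 0 := inv_ne_zero (by exact_mod_cast hpos.ne')
  refine ⟨((R + ‖p‖ + 1 : ℝ) : ℂ)⁻¹, hc, by fun_prop, ?_, ?_, by simp, ?_⟩
  · intro z _ w _ h
    exact sub_left_injective (mul_left_cancel₀ hc h)
  · intro z hz
    rw [norm_mul, norm_inv, Complex.norm_real, Real.norm_of_nonneg hpos.le, inv_mul_lt_iff₀ hpos]
    have := norm_sub_le z p
    have := hR z hz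
    linarith
  · intro K _ hK hKc w hw
    refine ((HasLog.const hc).mul (hasLog_of_unbounded hK hKc disjoint_compl_left
      (not_isBounded_compl hK) (p := p + w / ((R + ‖p‖ + 1 : ℝ) : ℂ)⁻¹) ?_)).congr
      fun z _ => ?_
    · intro h
      refine hw ⟨_, h, ?_⟩
      simp only []
      rw [add_sub_cancel_left, mul_div_cancel₀ _ hc]
    · rw [← sub_sub, mul_sub, mul_div_cancel₀ _ hc]

/-- A uniform Lipschitz estimate for maps into the unit disc. -/
lemma fam_lipschitz {f : ℂ → ℂ} {c z : ℂ} {r : ℝ} (hf : DifferentiableOn ℂ f (ball c r))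
    (hm : ∀ z ∈ ball c r, ‖f z‖ < 1) (hz : z ∈ ball c r) :
    dist (f z) (f c) ≤ 2 / r * dist z c := by
  have hr : 0 < r := nonempty_ball.1 ⟨z, hz⟩
  refine Complex.dist_le_div_mul_dist_of_mapsTo_ball hf (fun w hw => ?_) hz
  rw [mem_closedBall]
  have h1 := hm w hw
  have h2 := hm c (mem_ball_self hr)
  have := norm_sub_le (f w) (f c)
  rw [dist_eq_norm]; linarith

/-- Montel's theorem, in the form of locally uniform convergence along an ultrafilter. -/
lemma exists_limit (hDo : IsOpen D) (𝒰 : Ultrafilter ℕ) {f : ℕ → ℂ → ℂ}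
    (hf : ∀ n, DifferentiableOn ℂ (f n) D) (hm : ∀ n, ∀ z ∈ D, ‖f n z‖ < 1) :
    ∃ φ : ℂ → ℂ, TendstoLocallyUniformlyOn f φ 𝒰 D ∧ ∀ z ∈ D, ‖φ z‖ ≤ 1 := by
  have h1 : ∀ z, ∃ w, z ∈ D → (Tendsto (fun n => f n z) 𝒰 (𝓝 w) ∧ ‖w‖ ≤ 1) := by
    intro z
    by_cases hz : z ∈ D
    · have hc : IsCompact (closedBall (0 : ℂ) 1) := isCompact_closedBall _ _
      obtain ⟨w, hw, hle⟩ := hc.ultrafilter_le_nhds (𝒰.map fun n => f n z) (by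
        rw [le_principal_iff]
        refine Filter.mem_map.2 (univ_mem' fun n => ?_)
        simpa using (hm n z hz).le)
      exact ⟨w, fun _ => ⟨hle, by simpa using hw⟩⟩
    · exact ⟨0, fun h => absurd h hz⟩
  choose φ hφ using h1
  refine ⟨φ, ?_, fun z hz => (hφ z hz).2⟩
  rw [Metric.tendstoLocallyUniformlyOn_iff]
  intro ε hε c hc
  obtain ⟨r, hr, hrD⟩ := Metric.isOpen_iff.1 hDo c hc
  have hL : ∀ n, ∀ z ∈ ball c r, dist (f n z) (f n c) ≤ 2 / r * dist z c := fun n z hz =>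
    fam_lipschitz ((hf n).mono hrD) (fun w hw => hm n w (hrD hw)) hz
  have hLφ : ∀ z ∈ ball c r, dist (φ z) (φ c) ≤ 2 / r * dist z c := fun z hz =>
    le_of_tendsto (((hφ z (hrD hz)).1).dist (hφ c hc).1) (univ_mem' fun n => hL n z hz)
  set δ := min r (ε * r / 8)
  have hδ : 0 < δ := by positivity
  refine ⟨ball c δ, mem_nhdsWithin_of_mem_nhds (ball_mem_nhds c hδ), ?_⟩
  have h2 : ∀ᶠ n in (𝒰 : Filter ℕ), dist (f n c) (φ c) < ε / 4 :=
    (Metric.tendsto_nhds.1 (hφ c hc).1) _ (by positivity)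
  filter_upwards [h2] with n hn z hz
  have hzr : z ∈ ball c r := ball_subset_ball (min_le_left _ _) hz
  have hzd : 2 / r * dist z c ≤ ε / 4 := by
    have : dist z c ≤ ε * r / 8 := (mem_ball.1 hz).le.trans (min_le_right _ _)
    calc 2 / r * dist z c ≤ 2 / r * (ε * r / 8) := by gcongr
      _ = ε / 4 := by field_simp; norm_num
  have h3 := (hL n z hzr).trans hzd
  have h4 := (hLφ z hzr).trans hzd
  calc dist (φ z) (f n z) ≤ dist (φ z) (φ c) + dist (φ c) (f n c) + dist (f n c) (f n z) :=
        dist_triangle4 _ _ _ _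
    _ < ε := by rw [dist_comm (φ c), dist_comm (f n c) (f n z)]; linarith

/-- Hurwitz's theorem: a nonconstant limit of injective holomorphic functions is injective. -/
lemma injOn_limit (hDo : IsOpen D) (hD : IsPreconnected D) {l : Filter ℕ} [l.NeBot]
    {f : ℕ → ℂ → ℂ} {φ : ℂ → ℂ} (hf : ∀ n, DifferentiableOn ℂ (f n) D)
    (hi : ∀ n, InjOn (f n) D) (hφ : TendstoLocallyUniformlyOn f φ l D)
    (hnc : ∀ w, ¬ ∀ z ∈ D, φ z = w) : InjOn φ D := by
  have hd : DifferentiableOn ℂ φ D := hφ.differentiableOn (univ_mem' hf) hDo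
  have han : AnalyticOnNhd ℂ φ D := hd.analyticOnNhd hDo
  intro z1 h1 z2 h2 h12
  by_contra hne
  have hev : ∀ᶠ z in 𝓝[≠] z2, φ z ≠ φ z2 := by
    rcases (han z2 h2).eventually_eq_or_eventually_ne (g := fun _ => φ z2)
      analyticAt_const with h | h
    · exfalso
      exact hnc (φ z2) fun z hz =>
        han.eqOn_of_preconnected_of_eventuallyEq analyticOnNhd_const hD h2 h hz
    · exact h
  rw [eventually_nhdsWithin_iff] at hev
  obtain ⟨r1, hr1, hb1⟩ := Metric.eventually_nhds_iff_ball.1 (hev.and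
    ((hDo.eventually_mem h2).and (isOpen_ne.eventually_mem (Ne.symm hne))))
  set r := r1 / 2
  have hr : 0 < r := by positivity
  have hcb : closedBall z2 r ⊆ ball z2 r1 := closedBall_subset_ball (by simp only [r]; linarith)
  have hsub : closedBall z2 r ⊆ D := fun z hz => (hb1 z (hcb hz)).2.1
  have hcont : ContinuousOn (fun z => ‖φ z - φ z2‖) (sphere z2 r) :=
    ((hd.continuousOn.mono (sphere_subset_closedBall.trans hsub)).sub continuousOn_const).norm
  obtain ⟨x, hx, hmin⟩ := (isCompact_sphere z2 r).exists_isMinOn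
    (NormedSpace.sphere_nonempty.2 hr.le) hcont
  set m := ‖φ x - φ z2‖
  have hm : 0 < m := by
    refine norm_pos_iff.2 (sub_ne_zero.2 ((hb1 x (hcb (sphere_subset_closedBall hx))).1 ?_))
    rintro rfl
    have : dist x x = r := hx
    rw [dist_self] at this; exact hr.ne this
  have hK := (tendstoLocallyUniformlyOn_iff_forall_isCompact hDo).1 hφ (closedBall z2 r) hsub
    (isCompact_closedBall _ _)
  have e1 := Metric.tendstoUniformlyOn_iff.1 hK (m / 8) (by positivity)
  have e2 := (Metric.tendsto_nhds.1 (hφ.tendsto_at h1)) (m / 8) (by positivity)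
  obtain ⟨n, hn1, hn2⟩ := (e1.and e2).exists
  have hz2 : z2 ∈ closedBall z2 r := mem_closedBall_self hr.le
  have hs : ∀ z ∈ sphere z2 r, m / 2 ≤ ‖f n z - f n z2‖ := by
    intro z hz
    have a1 := hn1 z (sphere_subset_closedBall hz)
    have a2 := hn1 z2 hz2
    have a3 : m ≤ ‖φ z - φ z2‖ := hmin hz
    rw [← dist_eq_norm] at a3 ⊢
    have := dist_triangle4 (φ z) (f n z) (f n z2) (φ z2)
    rw [dist_comm (f n z2)] at this
    linarith
  have hfreq : ∃ᶠ z in 𝓝 z2, f n z ≠ f n z2 := by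
    refine Frequently.filter_mono (f := 𝓝[≠] z2) (Eventually.frequently ?_) nhdsWithin_le_nhds
    filter_upwards [mem_nhdsWithin_of_mem_nhds (hDo.mem_nhds h2), self_mem_nhdsWithin]
      with z hz hz' h
    exact hz' (hi n hz h2 h)
  have hdc : DiffContOnCl ℂ (f n) (ball z2 r) := by
    refine DifferentiableOn.diffContOnCl ((hf n).mono ?_)
    rw [closure_ball _ hr.ne']; exact hsub
  obtain ⟨y, hy, hyz⟩ := hdc.ball_subset_image_closedBall hr hs hfreq
    (show f n z1 ∈ ball (f n z2) (m / 2 / 2) by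
      rw [mem_ball]
      have a2 := hn1 z2 hz2
      have := dist_triangle (f n z1) (φ z1) (f n z2)
      rw [h12] at this hn2
      linarith)
  have := hi n (hsub hy) h1 hyz
  exact (hb1 y (hcb hy)).2.2 this

/-- Around a point off `φ '' K`, the functions `f n` close to `φ` on `K` wind as often as `φ`, so
admissibility passes to locally uniform limits. -/
lemma admissible_limit (hDo : IsOpen D) {l : Filter ℕ} [l.NeBot]
    {f : ℕ → ℂ → ℂ} {φ : ℂ → ℂ} (hf : ∀ n, ContinuousOn (f n) D) (hφc : ContinuousOn φ D)
    (ha : ∀ n, Admissible D (f n)) (hφ : TendstoLocallyUniformlyOn f φ l D) :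
    Admissible D φ := by
  intro K hKD hK hKc w hw
  have hcomp := hK.image_of_continuousOn (hφc.mono hKD)
  obtain ⟨m, hm, hmb⟩ := Metric.isOpen_iff.1 hcomp.isClosed.isOpen_compl w hw
  have hfar : ∀ z ∈ K, m ≤ dist (φ z) w := fun z hz => by
    by_contra! h
    exact hmb (mem_ball.2 h) ⟨z, hz, rfl⟩
  have hu := (tendstoLocallyUniformlyOn_iff_forall_isCompact hDo).1 hφ K hKD hK
  obtain ⟨n, hn⟩ := (Metric.tendstoUniformlyOn_iff.1 hu (m / 2) (by positivity)).exists
  have hfar2 : ∀ z ∈ K, m / 2 < ‖f n z - w‖ := fun z hz => by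
    have h1 := hfar z hz
    have h2 := hn z hz
    have := dist_triangle (φ z) (f n z) w
    rw [← dist_eq_norm]; linarith
  have hne : ∀ z ∈ K, f n z - w ≠ 0 := fun z hz h => by
    have := hfar2 z hz
    rw [h, norm_zero] at this; linarith
  have h1 : HasLog (fun z => f n z - w) K :=
    ha n K hKD hK hKc w (by rintro ⟨z, hz, h⟩; exact hne z hz (sub_eq_zero.2 h))
  have h2 : HasLog (fun z => 1 + (φ z - f n z) / (f n z - w)) K := by
    refine hasLog_of_near_one ?_ fun z hz => ?_
    · have c1 := (hf n).mono hKD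
      have c2 := hφc.mono hKD
      exact continuousOn_const.add ((c2.sub c1).div (c1.sub continuousOn_const) hne)
    · rw [add_sub_cancel_left, norm_div, div_lt_one (norm_pos_iff.2 (hne z hz)), ← dist_eq_norm]
      exact (hn z hz).trans (hfar2 z hz)
  refine (h1.mul h2).congr fun z hz => ?_
  have := hne z hz
  field_simp
  ring

lemma not_const_of_deriv {φ : ℂ → ℂ} (hDo : IsOpen D) (hp : p ∈ D) (h : deriv φ p ≠ 0) (w : ℂ) :
    ¬ ∀ z ∈ D, φ z = w := by
  intro hc
  apply h
  have : φ =ᶠ[𝓝 p] fun _ => w := by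
    filter_upwards [hDo.mem_nhds hp] with z hz using hc z hz
  rw [this.deriv_eq, deriv_const]

/-- Koebe's trick: a competitor which omits a value of the disc can be improved. -/
lemma fam_improve (hDo : IsOpen D) (hD : IsConnected D) (hDb : Bornology.IsBounded D)
    (hDc : IsPreconnected Dᶜ) (hp : p ∈ D) {φ : ℂ → ℂ} (hφ : Fam D p φ) (hd : deriv φ p ≠ 0)
    {w : ℂ} (hw : ‖w‖ < 1) (hwD : w ∉ φ '' D) :
    ∃ F, Fam D p F ∧ ‖deriv φ p‖ < ‖deriv F p‖ := by
  have hφd : ∀ z ∈ D, DifferentiableAt ℂ φ z := fun z hz => hφ.diff.differentiableAt (hDo.mem_nhds hz)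
  set g : ℂ → ℂ := fun z => mob w (φ z) with hg
  have hgd : ∀ z ∈ D, HasDerivAt g
      ((1 - starRingEnd ℂ w * w) / (1 - starRingEnd ℂ w * φ z) ^ 2 * deriv φ z) z := fun z hz =>
    (hasDerivAt_mob hw (hφ.maps z hz)).comp z (hφd z hz).hasDerivAt
  have hgc : ContinuousOn g D := fun z hz => (hgd z hz).continuousAt.continuousWithinAt
  have hgi : InjOn g D := fun z hz z' hz' h =>
    hφ.inj hz hz' (mob_injOn hw (hφ.maps z hz) (hφ.maps z' hz') h)
  have hg0 : ∀ z ∈ D, g z ≠ 0 := by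
    intro z hz h
    refine hwD ⟨z, hz, ?_⟩
    exact mob_injOn hw (hφ.maps z hz) hw (h.trans (mob_self w).symm)
  have hga : Admissible D g := fun K hKD hK hKc => (hφ.adm K hKD hK hKc).mob hw
    (hφ.diff.continuousOn.mono hKD) fun z hz => hφ.maps z (hKD hz)
  obtain ⟨L, hL, hLe⟩ := hasLog_of_compacts hDo hD hDb hDc (g := g) fun K hKD hK hKc =>
    (hga K hKD hK hKc 0 (by rintro ⟨z, hz, h⟩; exact hg0 z (hKD hz) h)).congr fun z _ => sub_zero _
  set k : ℂ → ℂ := fun z => Complex.exp (L z / 2) with hk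
  have hk2 : ∀ z ∈ D, k z ^ 2 = g z := fun z hz => by
    rw [← hLe z hz]; simp only [hk]; rw [← Complex.exp_nat_mul]; congr 1; push_cast; ring
  have hk0 : ∀ z, k z ≠ 0 := fun z => Complex.exp_ne_zero _
  have hkc : ContinuousOn k D := Complex.continuous_exp.comp_continuousOn (hL.div_const 2)
  have hkn : ∀ z ∈ D, ‖k z‖ < 1 := fun z hz => by
    have h1 : ‖g z‖ < 1 := norm_mob_lt hw (hφ.maps z hz)
    rw [← hk2 z hz, norm_pow] at h1
    by_contra! h
    nlinarith
  have hki : InjOn k D := fun z hz z' hz' h => hgi hz hz' (by rw [← hk2 z hz, ← hk2 z' hz', h])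
  have hkd : ∀ z ∈ D, HasDerivAt k (deriv g z / (2 * k z)) z := by
    intro z hz
    have h1 : HasStrictDerivAt (fun z : ℂ => z ^ 2) (2 * k z) (k z) := by
      simpa using hasStrictDerivAt_pow 2 (k z)
    have h2k : 2 * k z ≠ 0 := mul_ne_zero two_ne_zero (hk0 z)
    -- `k` is the composition of a local inverse of the square with `g`
    have hinv := (h1.to_localInverse h2k).hasDerivAt
    have hcomp : HasDerivAt (fun y => h1.localInverse _ _ _ h2k (g y)) ((2 * k z)⁻¹ * deriv g z) z := by
      refine HasDerivAt.comp z ?_ (hgd z hz).differentiableAt.hasDerivAt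
      rw [← hk2 z hz]; exact hinv
    rw [div_eq_inv_mul]
    refine hcomp.congr_of_eventuallyEq ?_
    have hkz : Tendsto k (𝓝 z) (𝓝 (k z)) := hkc.continuousAt (hDo.mem_nhds hz)
    filter_upwards [hkz.eventually (h1.eventually_left_inverse h2k), hDo.mem_nhds hz] with y hy hyD
    rw [← hk2 y hyD]; exact hy.symm
  have hka : Admissible D k := by
    intro K hKD hK hKc
    have hQ : IsCompact (k '' K) := hK.image_of_continuousOn (hkc.mono hKD)
    have himg : (fun z : ℂ => z ^ 2) '' (k '' K) = g '' K := by
      rw [image_image]; exact image_congr fun z hz => hk2 z (hKD hz)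
    have hpc : IsPreconnected (g '' K)ᶜ :=
      (hga K hKD hK hKc).isPreconnected_compl hK (hgc.mono hKD) (hgi.mono hKD)
    intro v hv
    refine (hasLog_of_sq hQ ?_ (himg ▸ hpc) hv).comp (hkc.mono hKD) (mapsTo_image k K)
    rw [disjoint_left]
    rintro _ ⟨z, hz, rfl⟩ ⟨z', hz', h⟩
    have hg' : g z' = g z := by rw [← hk2 z' (hKD hz'), ← hk2 z (hKD hz), h, neg_sq]
    have hzz := hgi (hKD hz') (hKD hz) hg'
    rw [hzz] at h
    exact hk0 z (self_eq_neg.1 h)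
  have hkp := hkn p hp
  refine ⟨fun z => mob (k p) (k z), ⟨?_, ?_, ?_, mob_self _, ?_⟩, ?_⟩
  · exact fun z hz => ((hasDerivAt_mob hkp (hkn z hz)).comp z
      (hkd z hz)).differentiableAt.differentiableWithinAt
  · exact fun z hz z' hz' h => hki hz hz' (mob_injOn hkp (hkn z hz) (hkn z' hz') h)
  · exact fun z hz => norm_mob_lt hkp (hkn z hz)
  · exact fun K hKD hK hKc => (hka K hKD hK hKc).mob hkp (hkc.mono hKD) fun z hz => hkn z (hKD hz)
  · have hF := ((hasDerivAt_mob hkp hkp).comp p (hkd p hp)).deriv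
    have hF' : deriv (fun z => mob (k p) (k z)) p = _ := hF
    rw [hF', (hgd p hp).deriv, hφ.zero]
    have hgp : g p = -w := by simp [hg, hφ.zero, mob]
    have hs : ‖k p‖ ^ 2 = ‖w‖ := by rw [← norm_pow, hk2 p hp, hgp, norm_neg]
    set s := ‖k p‖
    have hs0 : 0 < s := norm_pos_iff.2 (hk0 p)
    have e1 : ∀ a : ℂ, 1 - starRingEnd ℂ a * a = ((1 - ‖a‖ ^ 2 : ℝ) : ℂ) := fun a => by
      rw [Complex.conj_mul']; push_cast; ring
    have hs1 : 0 < 1 - s ^ 2 := by nlinarith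
    have hw1 : 0 < 1 - ‖w‖ ^ 2 := by nlinarith [norm_nonneg w]
    rw [e1, e1, mul_zero, sub_zero, one_pow, div_one]
    simp only [norm_mul, norm_div, norm_pow, Complex.norm_real, Real.norm_of_nonneg hw1.le,
      Complex.norm_two]
    rw [show ‖k p‖ = s from rfl, ← hs, Real.norm_of_nonneg hs1.le]
    have hdp : 0 < ‖deriv φ p‖ := norm_pos_iff.2 hd
    have : (1 - s ^ 2) / (1 - s ^ 2) ^ 2 * ((1 - (s ^ 2) ^ 2) * ‖deriv φ p‖ / (2 * s)) =
        ‖deriv φ p‖ * ((1 + s ^ 2) / (2 * s)) := by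
      field_simp
      ring
    rw [this]
    refine lt_mul_of_one_lt_right hdp ?_
    rw [one_lt_div (by positivity)]
    nlinarith [sq_pos_of_pos (show 0 < 1 - s by linarith)]

/-- The Riemann mapping theorem for bounded domains without holes. -/
theorem riemann_mapping (hDo : IsOpen D) (hD : IsConnected D) (hDb : Bornology.IsBounded D)
    (hDc : IsPreconnected Dᶜ) :
    ∃ φ : ℂ → ℂ, DifferentiableOn ℂ φ D ∧ InjOn φ D ∧ φ '' D = ball 0 1 := by
  obtain ⟨p, hp⟩ := hD.nonempty
  obtain ⟨c, hc0, hcF⟩ := fam_affine (p := p) hDb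
  obtain ⟨r, hr, hrD⟩ := Metric.isOpen_iff.1 hDo p hp
  set S : Set ℝ := {x | ∃ f, Fam D p f ∧ ‖deriv f p‖ = x}
  have hSne : S.Nonempty := ⟨_, _, hcF, rfl⟩
  have hSb : BddAbove S := by
    refine ⟨2 / r, ?_⟩
    rintro _ ⟨f, hf, rfl⟩
    refine Complex.norm_deriv_le_div_of_mapsTo_ball (hf.diff.mono hrD) (fun w hw => ?_) hr
    have h1 := hf.maps w (hrD hw)
    rw [mem_closedBall, hf.zero, dist_zero_right]; linarith
  obtain ⟨u, -, hu, huS⟩ := exists_seq_tendsto_sSup hSne hSb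
  choose f hf hfu using huS
  have hMpos : 0 < sSup S := by
    refine lt_of_lt_of_le (norm_pos_iff.2 ?_) (le_csSup hSb ⟨_, hcF, rfl⟩)
    have : HasDerivAt (fun z => c * (z - p)) (c * 1) p := ((hasDerivAt_id p).sub_const p).const_mul c
    rw [this.deriv, mul_one]; exact hc0
  let 𝒰 : Ultrafilter ℕ := Filter.hyperfilter ℕ
  have h𝒰 : (𝒰 : Filter ℕ) ≤ atTop := Nat.hyperfilter_le_atTop
  obtain ⟨φ, hφ, hφ1⟩ := exists_limit hDo 𝒰 (fun n => (hf n).diff) fun n => (hf n).maps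
  have hφd : DifferentiableOn ℂ φ D := hφ.differentiableOn (univ_mem' fun n => (hf n).diff) hDo
  have hder : ‖deriv φ p‖ = sSup S := by
    have h1 := ((hφ.deriv (univ_mem' fun n => (hf n).diff) hDo).tendsto_at hp).norm
    have h2 : Tendsto (fun n => ‖(deriv ∘ f) n p‖) (𝒰 : Filter ℕ) (𝓝 (sSup S)) := by
      refine (hu.mono_left h𝒰).congr fun n => ?_
      rw [← hfu n]; rfl
    exact tendsto_nhds_unique h1 h2
  have hd0 : deriv φ p ≠ 0 := norm_pos_iff.1 (hder ▸ hMpos)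
  have hnc := not_const_of_deriv hDo hp hd0
  have hφi : InjOn φ D := injOn_limit hDo hD.isPreconnected (fun n => (hf n).diff)
    (fun n => (hf n).inj) hφ hnc
  have hopen : IsOpen (φ '' D) := by
    rcases (hφd.analyticOnNhd hDo).is_constant_or_isOpen hD.isPreconnected with ⟨w, h⟩ | h
    · exact absurd h (hnc w)
    · exact h D subset_rfl hDo
  have hball : φ '' D ⊆ ball 0 1 := by
    rw [← interior_closedBall _ one_ne_zero]
    refine interior_maximal ?_ hopen
    rintro _ ⟨z, hz, rfl⟩
    simpa using hφ1 z hz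
  have hfam : Fam D p φ := by
    refine ⟨hφd, hφi, fun z hz => by simpa using hball ⟨z, hz, rfl⟩, ?_, ?_⟩
    · have h1 := hφ.tendsto_at hp
      simp only [(hf _).zero] at h1
      exact (tendsto_nhds_unique h1 tendsto_const_nhds)
    · exact admissible_limit hDo (fun n => (hf n).diff.continuousOn) hφd.continuousOn
        (fun n => (hf n).adm) hφ
  refine ⟨φ, hφd, hφi, hball.antisymm fun w hw => ?_⟩
  by_contra h
  obtain ⟨F, hF, hlt⟩ := fam_improve hDo hD hDb hDc hp hfam hd0 (by simpa using hw) h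
  rw [hder] at hlt
  exact absurd (le_csSup hSb ⟨F, hF, rfl⟩) (not_le.2 hlt)

/-- The inverse of a Riemann map. -/
theorem riemann_mapping_inv (hDo : IsOpen D) (hD : IsConnected D) (hDb : Bornology.IsBounded D)
    (hDc : IsPreconnected Dᶜ) :
    ∃ φ ψ : ℂ → ℂ, DifferentiableOn ℂ φ D ∧ DifferentiableOn ℂ ψ (ball 0 1) ∧
      MapsTo φ D (ball 0 1) ∧ MapsTo ψ (ball 0 1) D ∧ (∀ z ∈ D, ψ (φ z) = z) ∧
      ∀ z ∈ ball 0 1, φ (ψ z) = z := by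
  obtain ⟨φ, hd, hi, him⟩ := riemann_mapping hDo hD hDb hDc
  set ψ := Function.invFunOn φ D
  have h1 : MapsTo φ D (ball 0 1) := fun z hz => him ▸ ⟨z, hz, rfl⟩
  have h2 : MapsTo ψ (ball 0 1) D := fun z hz => Function.invFunOn_mem (show z ∈ φ '' D from him ▸ hz)
  have h3 : ∀ z ∈ D, ψ (φ z) = z := fun z hz => hi.leftInvOn_invFunOn hz
  have h4 : ∀ z ∈ ball 0 1, φ (ψ z) = z := fun z hz => Function.invFunOn_eq (show z ∈ φ '' D from him ▸ hz)
  refine ⟨φ, ψ, hd, ?_, h1, h2, h3, h4⟩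
  have han := hd.analyticOnNhd hDo
  have hopen : ∀ s ⊆ D, IsOpen s → IsOpen (φ '' s) := by
    rcases han.is_constant_or_isOpen hD.isPreconnected with ⟨w, h⟩ | h
    · exfalso
      have a1 : (0 : ℂ) ∈ ball (0 : ℂ) 1 := by simp
      have a2 : (1 / 2 : ℂ) ∈ ball (0 : ℂ) 1 := by simp; norm_num
      have b1 := h _ (h2 a1)
      have b2 := h _ (h2 a2)
      rw [h4 _ a1] at b1
      rw [h4 _ a2, ← b1] at b2
      norm_num at b2
    · exact h
  have hψc : ∀ w ∈ ball (0 : ℂ) 1, ContinuousAt ψ w := by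
    intro w hw
    rw [ContinuousAt, _root_.tendsto_nhds]
    intro s hs hws
    have ho := hopen (s ∩ D) inter_subset_right (hs.inter hDo)
    filter_upwards [ho.mem_nhds ⟨ψ w, ⟨hws, h2 hw⟩, h4 w hw⟩] with y hy
    obtain ⟨z, ⟨hzs, hzD⟩, rfl⟩ := hy
    rw [mem_preimage, h3 z hzD]; exact hzs
  have hψd : ∀ w ∈ ball (0 : ℂ) 1, deriv φ (ψ w) ≠ 0 → DifferentiableAt ℂ ψ w := by
    intro w hw hne
    refine (HasDerivAt.of_local_left_inverse (hψc w hw)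
      (hd.differentiableAt (hDo.mem_nhds (h2 hw))).hasDerivAt hne ?_).differentiableAt
    filter_upwards [isOpen_ball.mem_nhds hw] with y hy using h4 y hy
  intro w hw
  -- critical points of `φ` are isolated, so they give removable singularities of the inverse
  have hev : ∀ᶠ z in 𝓝[≠] (ψ w), deriv φ z ≠ 0 := by
    rcases (han.deriv _ (h2 hw)).eventually_eq_zero_or_eventually_ne_zero with h | h
    · exfalso
      obtain ⟨ε, hε, hb⟩ := Metric.eventually_nhds_iff_ball.1
        (h.and (hDo.eventually_mem (h2 hw)))
      have hconst : ∀ z ∈ ball (ψ w) ε, φ z = φ (ψ w) := by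
        intro z hz
        refine (convex_ball (ψ w) ε).is_const_of_fderivWithin_eq_zero (𝕜 := ℂ)
          (hd.mono fun z hz => (hb z hz).2) (fun x hx => ?_) hz (mem_ball_self hε)
        rw [fderivWithin_of_isOpen isOpen_ball hx]
        ext
        rw [fderiv_apply_one_eq_deriv, (hb x hx).1]; rfl
      have hz : ψ w + (ε / 2 : ℝ) ∈ ball (ψ w) ε := by
        rw [mem_ball, dist_eq_norm, add_sub_cancel_left, Complex.norm_real,
          Real.norm_of_nonneg (by positivity)]; linarith
      have := hi (hb _ hz).2 (h2 hw) (hconst _ hz)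
      rw [add_eq_left] at this
      exact (half_pos hε).ne' (by exact_mod_cast this)
    · exact h
  refine (Complex.analyticAt_of_differentiable_on_punctured_nhds_of_continuousAt ?_
    (hψc w hw)).differentiableAt.differentiableWithinAt
  have ht : Tendsto ψ (𝓝[≠] w) (𝓝[≠] (ψ w)) := by
    refine tendsto_nhdsWithin_iff.2 ⟨(hψc w hw).mono_left nhdsWithin_le_nhds, ?_⟩
    filter_upwards [mem_nhdsWithin_of_mem_nhds (isOpen_ball.mem_nhds hw), self_mem_nhdsWithin]
      with y hy hne h
    exact hne (by rw [mem_singleton_iff, ← h4 y hy, ← h4 w hw, h])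
  filter_upwards [ht.eventually hev, mem_nhdsWithin_of_mem_nhds (isOpen_ball.mem_nhds hw)]
    with y hy hyb using hψd y hyb hy

end Riemann

/-! ### The length-area estimate -/

section LengthArea

open MeasureTheory

lemma circleMap_mem_ball_one {r θ : ℝ} (hr : 0 < r) :
    circleMap 0 r θ ∈ ball (1 : ℂ) 1 ↔ r < 2 * Real.cos θ := by
  have h : ‖circleMap 0 r θ - 1‖ ^ 2 = r ^ 2 - 2 * r * Real.cos θ + 1 := by
    rw [← Complex.normSq_eq_norm_sq, Complex.normSq_apply]
    simp [circleMap, Complex.exp_re, Complex.exp_im]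
    nlinarith [Real.sin_sq_add_cos_sq θ]
  rw [mem_ball, dist_eq_norm]
  rw [← abs_of_nonneg (norm_nonneg (circleMap 0 r θ - 1)), ← sq_lt_one_iff_abs_lt_one, h]
  constructor
  · intro h'
    by_contra hc
    push Not at hc
    nlinarith
  · intro h'
    nlinarith

lemma lintegral_deriv_sq {Ψ : ℂ → ℂ} {B : Set ℂ} (hB : IsOpen B)
    (hd : DifferentiableOn ℂ Ψ B) (hi : InjOn Ψ B) :
    ∫⁻ p in B, ENNReal.ofReal (‖deriv Ψ p‖ ^ 2) = volume (Ψ '' B) := by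
  have hf : ∀ x ∈ B, HasFDerivWithinAt Ψ
      ((ContinuousLinearMap.toSpanSingleton ℂ (deriv Ψ x)).restrictScalars ℝ) B x := by
    intro x hx
    have h1 : HasDerivAt Ψ (deriv Ψ x) x := (hd.differentiableAt (hB.mem_nhds hx)).hasDerivAt
    exact (h1.hasFDerivAt.restrictScalars ℝ).hasFDerivWithinAt
  rw [← lintegral_abs_det_fderiv_eq_addHaar_image volume hB.measurableSet hf hi]
  refine lintegral_congr fun p => ?_
  congr 1
  simp [ContinuousLinearMap.det, LinearMap.det_restrictScalars,
      Algebra.norm_complex_eq, Complex.normSq_eq_norm_sq]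

/-- If `Ψ` stretches two points of a circular crosscut of radius `r` to distance at least `ε`, then
by Cauchy-Schwarz the crosscut carries a definite amount of the integral of `|Ψ'|²`. -/
lemma crosscut_lower_bound {Ψ : ℂ → ℂ} (hd : DifferentiableOn ℂ Ψ (ball 1 1)) {r ε : ℝ}
    (hr : 0 < r) (hε : 0 < ε) {z w : ℂ} (hz : z ∈ ball (1 : ℂ) 1) (hw : w ∈ ball (1 : ℂ) 1)
    (hzr : ‖z‖ = r) (hwr : ‖w‖ = r) (h : ε ≤ dist (Ψ z) (Ψ w)) :
    ENNReal.ofReal (ε ^ 2 / (2 * Real.pi)) ≤ ∫⁻ θ in Ioo (-Real.pi) Real.pi,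
      ENNReal.ofReal (r ^ 2) * (ball (1 : ℂ) 1).indicator
        (fun p => ENNReal.ofReal (‖deriv Ψ p‖ ^ 2)) (circleMap 0 r θ) := by
  have hzc : circleMap 0 r z.arg = z := by
    rw [circleMap_zero, ← hzr]; exact Complex.norm_mul_exp_arg_mul_I z
  have hwc : circleMap 0 r w.arg = w := by
    rw [circleMap_zero, ← hwr]; exact Complex.norm_mul_exp_arg_mul_I w
  wlog hle : z.arg ≤ w.arg generalizing z w
  · exact this hw hz hwr hzr (by rwa [dist_comm]) hwc hzc (le_of_not_ge hle)
  set a := z.arg with ha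
  set b := w.arg with hb
  have hpi := Real.pi_pos
  have ha1 : -Real.pi < a := Complex.neg_pi_lt_arg z
  have hb2 : b ≤ Real.pi := Complex.arg_le_pi w
  have hca : r < 2 * Real.cos a := (circleMap_mem_ball_one hr).1 (by rw [hzc]; exact hz)
  have hcb : r < 2 * Real.cos b := (circleMap_mem_ball_one hr).1 (by rw [hwc]; exact hw)
  have hin : ∀ θ ∈ Icc a b, circleMap 0 r θ ∈ ball (1 : ℂ) 1 := by
    intro θ hθ
    rw [circleMap_mem_ball_one hr]
    rcases le_total 0 θ with h0 | h0
    · have := Real.cos_le_cos_of_nonneg_of_le_pi h0 hb2 hθ.2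
      linarith
    · have := Real.cos_le_cos_of_nonneg_of_le_pi (x := -θ) (y := -a) (by linarith) (by linarith)
        (by linarith [hθ.1])
      rw [Real.cos_neg, Real.cos_neg] at this
      linarith
  have hbpi : b < Real.pi := by
    refine lt_of_le_of_ne hb2 fun h => ?_
    rw [h, Real.cos_pi] at hcb; linarith
  have hd' : ContinuousOn (deriv Ψ) (ball 1 1) :=
    (hd.deriv isOpen_ball).continuousOn
  have hcm : ContinuousOn (fun θ => deriv Ψ (circleMap 0 r θ)) (Icc a b) :=
    hd'.comp (continuous_circleMap 0 r).continuousOn hin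
  set g : ℝ → ℝ := fun θ => r * ‖deriv Ψ (circleMap 0 r θ)‖ with hg
  have hgc : ContinuousOn g (Icc a b) := continuousOn_const.mul hcm.norm
  have hder : ∀ θ ∈ uIcc a b, HasDerivAt (fun θ => Ψ (circleMap 0 r θ))
      (deriv Ψ (circleMap 0 r θ) * (circleMap 0 r θ * Complex.I)) θ := by
    intro θ hθ
    rw [uIcc_of_le hle] at hθ
    exact ((hd.differentiableAt (isOpen_ball.mem_nhds (hin θ hθ))).hasDerivAt).comp_of_eq θ
      (hasDerivAt_circleMap 0 r θ) rfl
  have hdc : ContinuousOn (fun θ => deriv Ψ (circleMap 0 r θ) * (circleMap 0 r θ * Complex.I))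
      (Icc a b) :=
    hcm.mul ((continuous_circleMap 0 r).mul continuous_const).continuousOn
  have hftc := intervalIntegral.integral_eq_sub_of_hasDerivAt hder
    (by apply ContinuousOn.intervalIntegrable; rwa [uIcc_of_le hle])
  have hgi : IntervalIntegrable g volume a b := by
    apply ContinuousOn.intervalIntegrable; rwa [uIcc_of_le hle]
  have hgi2 : IntervalIntegrable (fun θ => g θ ^ 2) volume a b := by
    apply ContinuousOn.intervalIntegrable; rw [uIcc_of_le hle]; exact hgc.pow 2
  have h1 : ε ≤ ∫ θ in a..b, g θ := by
    refine h.trans ?_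
    rw [dist_comm, dist_eq_norm, ← hzc, ← hwc, ← hftc]
    refine (intervalIntegral.norm_integral_le_integral_norm hle).trans (le_of_eq ?_)
    refine intervalIntegral.integral_congr fun θ _ => ?_
    simp [hg, abs_of_pos hr, mul_comm]
  set t := ε / (2 * Real.pi) with ht
  have htp : 0 < t := by positivity
  have h2 : ε ^ 2 / (2 * Real.pi) ≤ ∫ θ in a..b, g θ ^ 2 := by
    have h3 : ∫ θ in a..b, (2 * t * g θ - t ^ 2) ≤ ∫ θ in a..b, g θ ^ 2 := by
      refine intervalIntegral.integral_mono_on hle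
        ((hgi.const_mul _).sub intervalIntegrable_const) hgi2 fun θ _ => ?_
      nlinarith [sq_nonneg (g θ - t)]
    rw [intervalIntegral.integral_sub (hgi.const_mul _) intervalIntegrable_const,
      intervalIntegral.integral_const_mul, intervalIntegral.integral_const, smul_eq_mul] at h3
    have h4 : ε ^ 2 / (2 * Real.pi) = 2 * t * ε - (2 * Real.pi) * t ^ 2 := by
      rw [ht]; field_simp; ring
    have h5 : (b - a) * t ^ 2 ≤ (2 * Real.pi) * t ^ 2 := by
      gcongr; linarith
    have h6 : 2 * t * ε ≤ 2 * t * ∫ θ in a..b, g θ := by gcongr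
    linarith
  calc ENNReal.ofReal (ε ^ 2 / (2 * Real.pi))
      ≤ ENNReal.ofReal (∫ θ in a..b, g θ ^ 2) := ENNReal.ofReal_le_ofReal h2
    _ = ∫⁻ θ in Ioc a b, ENNReal.ofReal (g θ ^ 2) := by
        rw [intervalIntegral.integral_of_le hle]
        exact ofReal_integral_eq_lintegral_ofReal hgi2.1 (ae_of_all _ fun θ => sq_nonneg _)
    _ = ∫⁻ θ in Ioc a b, ENNReal.ofReal (r ^ 2) * (ball (1 : ℂ) 1).indicator
        (fun p => ENNReal.ofReal (‖deriv Ψ p‖ ^ 2)) (circleMap 0 r θ) := by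
        refine setLIntegral_congr_fun measurableSet_Ioc fun θ hθ => ?_
        rw [indicator_of_mem (hin θ (Ioc_subset_Icc_self hθ)), ← ENNReal.ofReal_mul (by positivity), hg,
          mul_pow]
    _ ≤ _ := lintegral_mono_set fun θ (hθ : θ ∈ Ioc a b) =>
        (⟨ha1.trans hθ.1, hθ.2.trans_lt hbpi⟩ : θ ∈ Ioo (-Real.pi) Real.pi)

/-- The length-area principle: arbitrarily small circular crosscuts at the origin have images of
arbitrarily small diameter. -/
lemma length_area {Ψ : ℂ → ℂ} (hd : DifferentiableOn ℂ Ψ (ball 1 1)) (hi : InjOn Ψ (ball 1 1))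
    (hb : Bornology.IsBounded (Ψ '' ball 1 1)) {ε R : ℝ} (hε : 0 < ε) (hR : 0 < R) :
    ∃ r, 0 < r ∧ r < R ∧ ∀ z ∈ ball (1 : ℂ) 1, ∀ w ∈ ball (1 : ℂ) 1, ‖z‖ = r → ‖w‖ = r →
      dist (Ψ z) (Ψ w) < ε := by
  by_contra hcon
  push Not at hcon
  set f : ℂ → ENNReal := (ball (1 : ℂ) 1).indicator
        (fun p => ENNReal.ofReal (‖deriv Ψ p‖ ^ 2)) with hf
  have hfm : Measurable f :=
    (((measurable_deriv Ψ).norm.pow_const 2).ennreal_ofReal).indicator measurableSet_ball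
  have hfin : ∫⁻ p, f p < ⊤ := by
    rw [hf, lintegral_indicator measurableSet_ball, lintegral_deriv_sq isOpen_ball hd hi]
    exact hb.measure_lt_top
  refine hfin.ne ?_
  rw [← Complex.lintegral_comp_polarCoord_symm f,
    show polarCoord.target = Ioi (0 : ℝ) ×ˢ Ioo (-Real.pi) Real.pi from rfl]
  have hmeas : Measurable fun p : ℝ × ℝ =>
      ENNReal.ofReal p.1 • f (Complex.polarCoord.symm p) := by
    have : (fun p : ℝ × ℝ => Complex.polarCoord.symm p) =
        fun p : ℝ × ℝ => (p.1 : ℂ) * (Real.cos p.2 + Real.sin p.2 * Complex.I) := by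
      ext1 p; exact Complex.polarCoord_symm_apply p
    have h2 : Measurable fun p : ℝ × ℝ => Complex.polarCoord.symm p := by
      rw [this]; fun_prop
    exact (measurable_fst.ennreal_ofReal).smul (hfm.comp h2)
  rw [Measure.volume_eq_prod, setLIntegral_prod _ hmeas.aemeasurable]
  have hK : 0 < ε ^ 2 / (2 * Real.pi) := by positivity
  set K := ε ^ 2 / (2 * Real.pi) with hKd
  have hlow : ∀ r ∈ Ioo 0 R, ENNReal.ofReal K * ENNReal.ofReal r⁻¹ ≤
      ∫⁻ θ in Ioo (-Real.pi) Real.pi, ENNReal.ofReal r • f (Complex.polarCoord.symm (r, θ)) := by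
    intro r hr
    obtain ⟨z, hz, w, hw, hzr, hwr, h⟩ := hcon r hr.1 hr.2
    have := crosscut_lower_bound hd hr.1 hε hz hw hzr hwr h
    calc ENNReal.ofReal K * ENNReal.ofReal r⁻¹
        ≤ (∫⁻ θ in Ioo (-Real.pi) Real.pi, ENNReal.ofReal (r ^ 2) * f (circleMap 0 r θ))
          * ENNReal.ofReal r⁻¹ := by gcongr
      _ = ∫⁻ θ in Ioo (-Real.pi) Real.pi, ENNReal.ofReal (r ^ 2) * f (circleMap 0 r θ)
          * ENNReal.ofReal r⁻¹ :=
          (lintegral_mul_const' _ _ ENNReal.ofReal_ne_top).symm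
      _ = _ := by
          refine lintegral_congr fun θ => ?_
          have e1 : Complex.polarCoord.symm (r, θ) = circleMap 0 r θ := by
            rw [Complex.polarCoord_symm_apply, circleMap_zero, Complex.exp_mul_I]
            push_cast; rfl
          have e2 : ENNReal.ofReal r = ENNReal.ofReal (r ^ 2) * ENNReal.ofReal r⁻¹ := by
            rw [← ENNReal.ofReal_mul (by positivity)]
            congr 1
            have := hr.1.ne'
            field_simp
          rw [e1, e2, smul_eq_mul]; ring
  have htop : ∫⁻ r in Ioo 0 R, ENNReal.ofReal K * ENNReal.ofReal r⁻¹ = ⊤ := by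
    rw [lintegral_const_mul' _ _ ENNReal.ofReal_ne_top]
    have : ∫⁻ r in Ioo 0 R, ENNReal.ofReal r⁻¹ = ⊤ := by
      by_contra hne
      have hni : ¬ IntervalIntegrable (fun x : ℝ => x⁻¹) volume 0 R := by
        rw [intervalIntegrable_inv_iff]; simp [hR.ne, hR.le]
      apply hni
      rw [intervalIntegrable_iff_integrableOn_Ioo_of_le hR.le]
      refine ⟨(measurable_inv).aestronglyMeasurable, ?_⟩
      rw [hasFiniteIntegral_iff_ofReal]
      · exact lt_of_le_of_ne le_top hne
      · exact (ae_restrict_iff' measurableSet_Ioo).2 (ae_of_all _ fun x hx => (inv_pos.2 hx.1).le)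
    rw [this]
    exact ENNReal.mul_top (by simpa using hK)
  refine top_le_iff.1 ?_
  rw [← htop]
  calc _ ≤ ∫⁻ r in Ioo 0 R, ∫⁻ θ in Ioo (-Real.pi) Real.pi,
        ENNReal.ofReal r • f (Complex.polarCoord.symm (r, θ)) :=
        setLIntegral_mono' measurableSet_Ioo hlow
    _ ≤ _ := lintegral_mono_set fun r hr => hr.1

end LengthArea

/-! ### Boundary behaviour of the Riemann map -/

section Boundary

/-- A set `C` is *locally an arc* if around every point `c ∈ C` it splits into two connected closed
parts, a small one near `c` and one staying away from `c`. -/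
def LocArc (C : Set ℂ) : Prop :=
  ∀ c ∈ C, ∀ ε' > 0, ∃ ε > 0, ∃ A A' : Set ℂ, IsClosed A ∧ IsClosed A' ∧ IsPreconnected A ∧
    IsPreconnected A' ∧ A ∪ A' = C ∧ A ⊆ ball c ε' ∧ Disjoint A' (closedBall c ε)

/-- A bounded domain `D` whose frontier lies in a Jordan-curve-like set `C`, together with a
Riemann map `φ` and its inverse `ψ`. -/
structure Cara (C D : Set ℂ) (φ ψ : ℂ → ℂ) : Prop where
  hC : IsCompact C
  hl : LocArc C
  hDo : IsOpen D
  hDc : IsConnected D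
  hDb : Bornology.IsBounded D
  hDC : Disjoint D C
  hfr : frontier D ⊆ C
  hφ : DifferentiableOn ℂ φ D
  hψ : DifferentiableOn ℂ ψ (ball 0 1)
  mφ : MapsTo φ D (ball 0 1)
  mψ : MapsTo ψ (ball 0 1) D
  l : ∀ z ∈ D, ψ (φ z) = z
  r : ∀ z ∈ ball (0 : ℂ) 1, φ (ψ z) = z

variable {C D : Set ℂ} {φ ψ : ℂ → ℂ}

/-- `D` is connected outside small disks around a boundary point. -/
lemma Cara.outer_connected (H : Cara C D φ ψ) {c : ℂ} (hc : c ∈ C) {ε' : ℝ} (hε' : 0 < ε') :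
    ∃ ε > 0, ∀ p ∈ D, ∀ q ∈ D, ε' < dist p c → ε' < dist q c →
      ∃ K, IsPreconnected K ∧ K ⊆ D ∧ Disjoint K (closedBall c ε) ∧ p ∈ K ∧ q ∈ K := by
  obtain ⟨ε, hε, A, A', hA, hA', hAc, hAc', hAA, hAb, hd⟩ := H.hl c hc ε' hε'
  refine ⟨min ε ε', lt_min hε hε', fun p hp q hq hpc hqc => ?_⟩
  have hAC : A ⊆ C := hAA ▸ subset_union_left
  have hXY : C ∩ (closedBall c (min ε ε') ∪ A) = A := by
    ext x
    constructor
    · rintro ⟨hx, hx' | hx'⟩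
      · rw [← hAA] at hx
        rcases hx with hx | hx
        · exact hx
        · exact absurd (closedBall_subset_closedBall (min_le_left _ _) hx')
            (disjoint_left.1 hd hx)
      · exact hx'
    · exact fun hx => ⟨hAC hx, Or.inr hx⟩
  have hT : IsPreconnected {z : ℂ | ε' < dist z c} := by
    have h1 := (isPreconnected_outside ε').image (fun z => z + c)
      (continuous_id.add continuous_const).continuousOn
    convert h1 using 1
    ext z
    simp only [mem_image]
    constructor
    · intro hz
      exact ⟨z - c, by show ε' < ‖z - c‖; rwa [← dist_eq_norm], by ring⟩
    · rintro ⟨y, hy, rfl⟩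
      show ε' < dist (y + c) c
      rw [dist_eq_norm, add_sub_cancel_right]; exact hy
  have hTY : Disjoint {z : ℂ | ε' < dist z c} (closedBall c (min ε ε') ∪ A) := by
    rw [disjoint_left]
    rintro z hz (h | h)
    · exact absurd (hz.trans_le (mem_closedBall.1 h)) (not_lt.2 (min_le_right _ _))
    · exact lt_asymm hz (mem_ball.1 (hAb h))
  have hj := janiszewski H.hC ((isCompact_closedBall c _).union (H.hC.of_isClosed_subset hA hAC))
    (by rw [hXY]; exact hAc) H.hDc.isPreconnected hT H.hDC hTY hp hq hpc hqc
  have hpm : p ∈ (C ∪ (closedBall c (min ε ε') ∪ A))ᶜ := by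
    rintro (h | h)
    · exact disjoint_left.1 H.hDC hp h
    · exact disjoint_left.1 hTY hpc h
  have hsub := connectedComponentIn_subset (C ∪ (closedBall c (min ε ε') ∪ A))ᶜ p
  have hpK := mem_connectedComponentIn hpm
  refine ⟨_, isPreconnected_connectedComponentIn, ?_, ?_, hpK, hj⟩
  · exact subset_of_disjoint_frontier H.hDo isPreconnected_connectedComponentIn
      (disjoint_left.2 fun x hx hxb => hsub hx (Or.inl (H.hfr hxb))) ⟨p, hpK, hp⟩
  · exact disjoint_left.2 fun x hx hxb => hsub hx (Or.inr (Or.inl hxb))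

/-- `D` is uniformly locally connected near a boundary point. -/
lemma Cara.inner_connected (H : Cara C D φ ψ) {c : ℂ} (hc : c ∈ C) {ε' : ℝ} (hε' : 0 < ε') :
    ∃ ε > 0, ∀ p ∈ D, ∀ q ∈ D, dist p c < ε → dist q c < ε →
      ∃ K, IsPreconnected K ∧ K ⊆ D ∧ K ⊆ ball c ε' ∧ p ∈ K ∧ q ∈ K := by
  obtain ⟨ε, hε, A, A', hA, hA', hAc, hAc', hAA, hAb, hd⟩ := H.hl c hc ε' hε'
  obtain ⟨R, hR⟩ := (H.hDb.union H.hC.isBounded).subset_closedBall 0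
  refine ⟨min ε ε', lt_min hε hε', fun p hp q hq hpc hqc => ?_⟩
  have hAC : A' ⊆ C := hAA ▸ subset_union_right
  have hXY : C ∩ (closedBall 0 R \ ball c ε' ∪ A') = A' := by
    ext x
    constructor
    · rintro ⟨hx, hx' | hx'⟩
      · rw [← hAA] at hx
        rcases hx with hx | hx
        · exact absurd (hAb hx) hx'.2
        · exact hx
      · exact hx'
    · exact fun hx => ⟨hAC hx, Or.inr hx⟩
  have hTY : Disjoint (ball c (min ε ε')) (closedBall 0 R \ ball c ε' ∪ A') := by
    rw [disjoint_left]
    rintro z hz (h | h)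
    · exact h.2 (ball_subset_ball (min_le_right _ _) hz)
    · exact disjoint_left.1 hd h (ball_subset_closedBall (ball_subset_ball (min_le_left _ _) hz))
  have hj := janiszewski H.hC
    (((isCompact_closedBall 0 R).diff isOpen_ball).union (H.hC.of_isClosed_subset hA' hAC))
    (by rw [hXY]; exact hAc') H.hDc.isPreconnected (convex_ball c (min ε ε')).isPreconnected
    H.hDC hTY hp hq hpc hqc
  have hpm : p ∈ (C ∪ (closedBall 0 R \ ball c ε' ∪ A'))ᶜ := by
    rintro (h | h)
    · exact disjoint_left.1 H.hDC hp h
    · exact disjoint_left.1 hTY hpc h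
  have hsub := connectedComponentIn_subset (C ∪ (closedBall 0 R \ ball c ε' ∪ A'))ᶜ p
  have hpK := mem_connectedComponentIn hpm
  have hKD : connectedComponentIn (C ∪ (closedBall 0 R \ ball c ε' ∪ A'))ᶜ p ⊆ D :=
    subset_of_disjoint_frontier H.hDo isPreconnected_connectedComponentIn
      (disjoint_left.2 fun x hx hx' => hsub hx (Or.inl (H.hfr hx'))) ⟨p, hpK, hp⟩
  refine ⟨_, isPreconnected_connectedComponentIn, hKD, fun x hx => ?_, hpK, hj⟩
  by_contra hxb
  exact hsub hx (Or.inr (Or.inl ⟨hR (Or.inl (hKD hx)), hxb⟩))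

lemma Cara.injOn (H : Cara C D φ ψ) : InjOn ψ (ball 0 1) := fun z hz w hw h => by
  rw [← H.r z hz, h, H.r w hw]

/-- Around a point of the unit circle there are arbitrarily small circular crosscuts of the disk
whose images are arbitrarily small. -/
lemma Cara.crosscut (H : Cara C D φ ψ) {ζ : ℂ} (hζ : ‖ζ‖ = 1) {ε R : ℝ} (hε : 0 < ε)
    (hR : 0 < R) : ∃ r, 0 < r ∧ r < R ∧ ∀ z ∈ ball (0 : ℂ) 1, ∀ w ∈ ball (0 : ℂ) 1,
      dist z ζ = r → dist w ζ = r → dist (ψ z) (ψ w) < ε := by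
  have hζ0 : ζ ≠ 0 := fun h => by simp [h] at hζ
  have hm : MapsTo (fun p : ℂ => ζ * (1 - p)) (ball 1 1) (ball 0 1) := by
    intro p hp
    rw [mem_ball, dist_eq_norm] at hp
    rw [mem_ball_zero_iff, norm_mul, hζ, one_mul, norm_sub_rev]
    exact hp
  have hd : DifferentiableOn ℂ (fun p => ψ (ζ * (1 - p))) (ball 1 1) :=
    H.hψ.comp (by fun_prop) hm
  obtain ⟨r, hr, hrR, h⟩ := length_area hd
    (H.injOn.comp (fun x _ y _ h => by simpa [hζ0] using h) hm)
    (H.hDb.subset (by rintro _ ⟨p, hp, rfl⟩; exact H.mψ (hm hp))) hε hR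
  refine ⟨r, hr, hrR, fun z hz w hw hzr hwr => ?_⟩
  have key : ∀ z ∈ ball (0 : ℂ) 1, dist z ζ = r →
      1 - z / ζ ∈ ball (1 : ℂ) 1 ∧ ‖1 - z / ζ‖ = r ∧ ζ * (1 - (1 - z / ζ)) = z := by
    intro z hz hzr
    refine ⟨?_, ?_, ?_⟩
    · rw [mem_ball, dist_eq_norm]
      simpa [hζ] using hz
    · rw [← hzr, dist_comm, dist_eq_norm, show 1 - z / ζ = (ζ - z) / ζ by field_simp, norm_div, hζ,
        div_one]
    · field_simp; ring
  obtain ⟨a1, a2, a3⟩ := key z hz hzr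
  obtain ⟨b1, b2, b3⟩ := key w hw hwr
  have := h _ a1 _ b1 a2 b2
  simpa only [a3, b3] using this

/-- The Riemann map has a limit at every point of the unit circle. -/
lemma Cara.boundary_limit (H : Cara C D φ ψ) {ζ : ℂ} (hζ : ‖ζ‖ = 1) :
    ∃ c ∈ frontier D, Tendsto ψ (𝓝[ball 0 1] ζ) (𝓝 c) := by
  choose r hr0 hrR hr using fun n : ℕ =>
    H.crosscut hζ (ε := 1 / ((n : ℝ) + 1)) (R := 1 / ((n : ℝ) + 1)) (by positivity) (by positivity)
  have hr1 : ∀ n, r n < 1 := fun n => (hrR n).trans_le (by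
    rw [div_le_one (by positivity)]; linarith [n.cast_nonneg (α := ℝ)])
  set z : ℕ → ℂ := fun n => ζ * (1 - r n) with hz
  have hzb : ∀ n, z n ∈ ball (0 : ℂ) 1 := by
    intro n
    rw [mem_ball_zero_iff, hz]
    simp only [norm_mul, hζ, one_mul]
    rw [show (1 : ℂ) - r n = ((1 - r n : ℝ) : ℂ) by push_cast; ring, Complex.norm_real,
      Real.norm_eq_abs, abs_of_pos (by linarith [hr1 n])]
    linarith [hr0 n]
  have hzd : ∀ n, dist (z n) ζ = r n := by
    intro n
    rw [dist_eq_norm, hz, show ζ * (1 - r n) - ζ = - (ζ * r n) by ring, norm_neg, norm_mul, hζ,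
      one_mul, Complex.norm_real, Real.norm_eq_abs, abs_of_pos (hr0 n)]
  have hr_lim : Tendsto r atTop (𝓝 0) :=
    squeeze_zero (fun n => (hr0 n).le) (fun n => (hrR n).le) tendsto_one_div_add_atTop_nhds_zero_nat
  have hz_lim : Tendsto z atTop (𝓝 ζ) := by
    rw [tendsto_iff_dist_tendsto_zero]
    simpa only [hzd] using hr_lim
  obtain ⟨c, hc, s, hs, hsc⟩ := H.hDb.isCompact_closure.tendsto_subseq
    (x := fun n => ψ (z n)) (fun n => subset_closure (H.mψ (hzb n)))
  have hcD : c ∉ D := by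
    intro hcD
    have h1 : Tendsto (fun n => φ (ψ (z (s n)))) atTop (𝓝 (φ c)) :=
      ((H.hφ.continuousOn.continuousAt (H.hDo.mem_nhds hcD)).tendsto).comp hsc
    have h2 : Tendsto (fun n => φ (ψ (z (s n)))) atTop (𝓝 ζ) := by
      simp only [H.r _ (hzb _)]
      exact hz_lim.comp hs.tendsto_atTop
    have h3 := mem_ball_zero_iff.1 (H.mφ hcD)
    rw [tendsto_nhds_unique h1 h2, hζ] at h3
    exact lt_irrefl _ h3
  have hcf : c ∈ frontier D := by rw [H.hDo.frontier_eq]; exact ⟨hc, hcD⟩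
  have hcC := H.hfr hcf
  refine ⟨c, hcf, ?_⟩
  have h0b : (0 : ℂ) ∈ ball (0 : ℂ) 1 := by simp
  have h0D : ψ 0 ∈ D := H.mψ h0b
  have hdpos : 0 < dist (ψ 0) c := dist_pos.2 fun h => hcD (h ▸ h0D)
  rw [Metric.tendsto_nhdsWithin_nhds]
  intro η hη
  set ε' := min (η / 2) (dist (ψ 0) c / 2) with hε'
  have hεp : 0 < ε' := lt_min (by linarith) (by linarith)
  obtain ⟨ε, hε, hK⟩ := H.outer_connected hcC hεp
  -- a crosscut whose image lies inside `closedBall c ε`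
  obtain ⟨n, hn1, hn2⟩ : ∃ n, dist (ψ (z (s n))) c < ε / 2 ∧ 1 / ((s n : ℝ) + 1) < ε / 2 := by
    have e1 := (Metric.tendsto_nhds.1 hsc) (ε / 2) (by linarith)
    have e2 := (tendsto_one_div_add_atTop_nhds_zero_nat (𝕜 := ℝ)).comp hs.tendsto_atTop
    have e3 := e2.eventually (gt_mem_nhds (show (0 : ℝ) < ε / 2 by linarith))
    obtain ⟨n, h1, h2⟩ := (e1.and e3).exists
    exact ⟨n, h1, h2⟩
  refine ⟨r (s n), hr0 _, fun {w} hw hwd => ?_⟩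
  by_contra hfar
  push Not at hfar
  have hwD := H.mψ hw
  obtain ⟨K, hKp, hKD, hKd, h0K, hwK⟩ := hK _ h0D _ hwD
    ((min_le_right _ _).trans_lt (by linarith)) ((min_le_left _ _).trans_lt (by linarith))
  have hcont : ContinuousOn (fun x => dist (φ x) ζ) K :=
    (continuous_id.dist (continuous_const (y := ζ))).comp_continuousOn
      (H.hφ.continuousOn.mono hKD)
  obtain ⟨x, hxK, hx⟩ := hKp.intermediate_value hwK h0K hcont
    (show r (s n) ∈ Icc (dist (φ (ψ w)) ζ) (dist (φ (ψ 0)) ζ) by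
      rw [H.r w hw, H.r 0 h0b]
      refine ⟨hwd.le, ?_⟩
      rw [dist_zero_left, hζ]; exact (hr1 _).le)
  have h1 := hr (s n) (φ x) (H.mφ (hKD hxK)) (z (s n)) (hzb _) hx (hzd _)
  rw [H.l x (hKD hxK)] at h1
  refine disjoint_left.1 hKd hxK (mem_closedBall.2 ?_)
  linarith [dist_triangle x (ψ (z (s n))) c]

end Boundary

/-! ### Carathéodory's theorem -/

section Caratheodory

/-- The signed side of the line through `u` and `v` on which `p` lies. -/
def side (p u v : ℂ) : ℝ := ((p - u) * (starRingEnd ℂ) (v - u)).im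

lemma side_eq {p u v : ℂ} (hp : ‖p‖ = 1) (hu : ‖u‖ = 1) (hv : ‖v‖ = 1) :
    2 * Complex.I * (side p u v : ℂ) = (p - u) * (u - v) * (p - v) / (u * v * p) := by
  have hp0 : p ≠ 0 := fun h => by simp [h] at hp
  have hu0 : u ≠ 0 := fun h => by simp [h] at hu
  have hv0 : v ≠ 0 := fun h => by simp [h] at hv
  have h : 2 * Complex.I * (side p u v : ℂ) = (p - u) * (starRingEnd ℂ) (v - u) -
      (starRingEnd ℂ) ((p - u) * (starRingEnd ℂ) (v - u)) := by
    rw [Complex.sub_conj, side]; push_cast; ring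
  rw [h]
  simp only [map_mul, map_sub, Complex.conj_conj]
  rw [← Complex.inv_eq_conj hp, ← Complex.inv_eq_conj hu, ← Complex.inv_eq_conj hv]
  field_simp
  ring

/-- The endpoints of a chord lie on opposite sides of another one iff the roles can be exchanged. -/
lemma side_mul {a b u v : ℂ} (ha : ‖a‖ = 1) (hb : ‖b‖ = 1) (hu : ‖u‖ = 1) (hv : ‖v‖ = 1) :
    side u a b * side v a b * ‖v - u‖ ^ 2 = side a u v * side b u v * ‖b - a‖ ^ 2 := by
  have ha0 : a ≠ 0 := fun h => by simp [h] at ha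
  have hb0 : b ≠ 0 := fun h => by simp [h] at hb
  have hu0 : u ≠ 0 := fun h => by simp [h] at hu
  have hv0 : v ≠ 0 := fun h => by simp [h] at hv
  have hn : ∀ x y : ℂ, ‖x‖ = 1 → ‖y‖ = 1 → ((‖x - y‖ ^ 2 : ℝ) : ℂ) = (x - y) * (x⁻¹ - y⁻¹) := by
    intro x y hx hy
    rw [← Complex.normSq_eq_norm_sq, ← Complex.mul_conj, map_sub, ← Complex.inv_eq_conj hx,
      ← Complex.inv_eq_conj hy]
  have h2 : (2 * Complex.I) ^ 2 ≠ 0 := by simp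
  apply Complex.ofReal_injective
  apply mul_left_cancel₀ h2
  rw [Complex.ofReal_mul, Complex.ofReal_mul, Complex.ofReal_mul, Complex.ofReal_mul, hn v u hv hu,
    hn b a hb ha]
  have e1 := side_eq hu ha hb
  have e2 := side_eq hv ha hb
  have e3 := side_eq ha hu hv
  have e4 := side_eq hb hu hv
  calc _ = (2 * Complex.I * (side u a b : ℂ)) * (2 * Complex.I * (side v a b : ℂ)) *
        ((v - u) * (v⁻¹ - u⁻¹)) := by ring
    _ = (2 * Complex.I * (side a u v : ℂ)) * (2 * Complex.I * (side b u v : ℂ)) *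
        ((b - a) * (b⁻¹ - a⁻¹)) := by
          rw [e1, e2, e3, e4]; field_simp; ring
    _ = _ := by ring

lemma side_swap (p u v : ℂ) : side p v u = - side p u v := by
  simp [side]; ring

lemma exists_side_pos {u v : ℂ} (hu : ‖u‖ = 1) (hv : ‖v‖ = 1) (huv : u ≠ v) :
    ∃ p : ℂ, ‖p‖ = 1 ∧ 0 < side p u v := by
  have hd : 0 < ‖v - u‖ := norm_pos_iff.2 (sub_ne_zero.2 huv.symm)
  have hd0 : (‖v - u‖ : ℂ) ≠ 0 := by exact_mod_cast hd.ne'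
  refine ⟨Complex.I * (v - u) / ‖v - u‖, ?_, ?_⟩
  · simp [hd.ne']
  have h1 : (Complex.I * (v - u) / ‖v - u‖ - u) * (starRingEnd ℂ) (v - u)
      = Complex.I * ‖v - u‖ - u * (starRingEnd ℂ) (v - u) := by
    rw [sub_mul]
    congr 1
    rw [div_mul_eq_mul_div, mul_assoc, Complex.mul_conj, Complex.normSq_eq_norm_sq]
    field_simp
    push_cast; ring
  rw [side, h1]
  have h2 : (Complex.I * (‖v - u‖ : ℂ)).im = ‖v - u‖ := by simp
  rw [Complex.sub_im, h2, sub_pos]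
  have hu2 : u.re ^ 2 + u.im ^ 2 = 1 := by
    have := Complex.normSq_apply u
    rw [Complex.normSq_eq_norm_sq, hu] at this; linarith
  have hv2 : v.re ^ 2 + v.im ^ 2 = 1 := by
    have := Complex.normSq_apply v
    rw [Complex.normSq_eq_norm_sq, hv] at this; linarith
  have hn : ‖v - u‖ ^ 2 = (v.re - u.re) ^ 2 + (v.im - u.im) ^ 2 := by
    have := Complex.normSq_apply (v - u)
    rw [Complex.normSq_eq_norm_sq] at this
    simp at this; linarith
  refine lt_of_le_of_lt (le_abs_self _) (abs_lt_of_sq_lt_sq ?_ hd.le)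
  rw [hn]
  simp
  set x := u.re * v.re + u.im * v.im with hx
  have hlt : x < 1 := by
    have : 0 < ‖v - u‖ ^ 2 := by positivity
    nlinarith
  nlinarith

lemma mem_segment_of_side {x a b : ℂ} (ha : ‖a‖ = 1) (hb : ‖b‖ = 1) (hab : a ≠ b)
    (hx : ‖x‖ < 1) (hs : side x a b = 0) : x ∈ segment ℝ a b := by
  have hd : b - a ≠ 0 := sub_ne_zero.2 hab.symm
  set t := ((x - a) * (starRingEnd ℂ) (b - a)).re / ‖b - a‖ ^ 2 with ht
  have hN : (0 : ℝ) < ‖b - a‖ ^ 2 := by positivity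
  have hxt : x = a + t * (b - a) := by
    have h1 : (x - a) * (starRingEnd ℂ) (b - a) = ((t * ‖b - a‖ ^ 2 : ℝ) : ℂ) := by
      apply Complex.ext
      · rw [Complex.ofReal_re, ht]; field_simp
      · rw [Complex.ofReal_im]; exact hs
    have h2 : ((‖b - a‖ ^ 2 : ℝ) : ℂ) = (b - a) * (starRingEnd ℂ) (b - a) := by
      rw [Complex.mul_conj, Complex.normSq_eq_norm_sq]
    rw [Complex.ofReal_mul, h2, ← mul_assoc] at h1
    have h3 := mul_right_cancel₀ ((map_ne_zero (starRingEnd ℂ)).2 hd) h1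
    rw [← h3]; ring
  have ha2 : a.re ^ 2 + a.im ^ 2 = 1 := by
    have := Complex.normSq_apply a
    rw [Complex.normSq_eq_norm_sq, ha] at this; linarith
  have hb2 : b.re ^ 2 + b.im ^ 2 = 1 := by
    have := Complex.normSq_apply b
    rw [Complex.normSq_eq_norm_sq, hb] at this; linarith
  have hn : ‖b - a‖ ^ 2 = (b.re - a.re) ^ 2 + (b.im - a.im) ^ 2 := by
    have := Complex.normSq_apply (b - a)
    rw [Complex.normSq_eq_norm_sq] at this
    simp at this; linarith
  have hx2 : x.re ^ 2 + x.im ^ 2 < 1 := by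
    have := Complex.normSq_apply x
    rw [Complex.normSq_eq_norm_sq] at this
    nlinarith [norm_nonneg x]
  have e1 : x.re = a.re + t * (b.re - a.re) := by rw [hxt]; simp
  have e2 : x.im = a.im + t * (b.im - a.im) := by rw [hxt]; simp
  have h4 : 0 < t * (1 - t) * ‖b - a‖ ^ 2 := by
    have h : x.re ^ 2 + x.im ^ 2 = (1 - t) * (a.re ^ 2 + a.im ^ 2) + t * (b.re ^ 2 + b.im ^ 2) -
        t * (1 - t) * ((b.re - a.re) ^ 2 + (b.im - a.im) ^ 2) := by
      rw [e1, e2]; ring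
    rw [ha2, hb2, ← hn] at h
    linarith
  have h5 : 0 < t * (1 - t) := pos_of_mul_pos_left h4 hN.le
  have h6 : 0 < t ∧ t < 1 := by
    constructor <;> by_contra hc <;> push Not at hc <;> nlinarith
  rw [segment_eq_image']
  exact ⟨t, ⟨h6.1.le, h6.2.le⟩, by rw [hxt]; simp⟩

variable {C D : Set ℂ} {φ ψ : ℂ → ℂ}

/-- The continuous extension of `ψ` to the closed disk. -/
def Cext (ψ : ℂ → ℂ) : ℂ → ℂ := extendFrom (ball 0 1) ψ

lemma Cara.exists_lim (H : Cara C D φ ψ) {z : ℂ} (hz : z ∈ closedBall (0 : ℂ) 1) :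
    ∃ y, Tendsto ψ (𝓝[ball 0 1] z) (𝓝 y) := by
  rcases (mem_closedBall_zero_iff.1 hz).lt_or_eq with h | h
  · exact ⟨_, (H.hψ.continuousOn z (mem_ball_zero_iff.2 h))⟩
  · obtain ⟨c, -, hc⟩ := H.boundary_limit h
    exact ⟨c, hc⟩

lemma mem_closure_disk {z : ℂ} (hz : z ∈ closedBall (0 : ℂ) 1) : z ∈ closure (ball (0 : ℂ) 1) := by
  rwa [closure_ball _ one_ne_zero]

lemma Cara.cont (H : Cara C D φ ψ) : ContinuousOn (Cext ψ) (closedBall 0 1) :=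
  continuousOn_extendFrom (fun _ hz => mem_closure_disk hz) fun _ hz => H.exists_lim hz

lemma Cara.eq_ball (H : Cara C D φ ψ) {z : ℂ} (hz : z ∈ ball (0 : ℂ) 1) : Cext ψ z = ψ z :=
  extendFrom_eq (subset_closure hz) (H.hψ.continuousOn z hz)

lemma Cara.sphere_frontier (H : Cara C D φ ψ) {ζ : ℂ} (hζ : ‖ζ‖ = 1) :
    Cext ψ ζ ∈ frontier D := by
  obtain ⟨c, hc, h⟩ := H.boundary_limit hζ
  rw [Cext, extendFrom_eq (mem_closure_disk (by simp [hζ])) h]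
  exact hc

lemma Cara.tendsto (H : Cara C D φ ψ) {ζ : ℂ} (hζ : ‖ζ‖ = 1) :
    Tendsto ψ (𝓝[ball 0 1] ζ) (𝓝 (Cext ψ ζ)) := by
  obtain ⟨c, hc, h⟩ := H.boundary_limit hζ
  rw [Cext, extendFrom_eq (mem_closure_disk (by simp [hζ])) h]
  exact h

/-- The extension is not constant on a nonempty relatively open subset of the circle: otherwise a
finite product of rotates of `ψ - c` would vanish on the whole circle. -/
lemma Cara.not_const (H : Cara C D φ ψ) {c : ℂ} (hc : c ∈ C) {U : Set ℂ} (hU : IsOpen U)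
    {p : ℂ} (hp : ‖p‖ = 1) (hpU : p ∈ U) : ¬ ∀ z ∈ U, ‖z‖ = 1 → Cext ψ z = c := by
  intro hall
  have hcov : sphere (0 : ℂ) 1 ⊆ ⋃ u : sphere (0 : ℂ) 1, (fun z => (u : ℂ) * z) ⁻¹' U := by
    intro z hz
    rw [mem_sphere_zero_iff_norm] at hz
    have hz0 : z ≠ 0 := fun h => by simp [h] at hz
    exact mem_iUnion.2 ⟨⟨p / z, by simp [hp, hz]⟩, by
      show p / z * z ∈ U
      rwa [div_mul_cancel₀ _ hz0]⟩
  obtain ⟨t, ht⟩ := (isCompact_sphere (0 : ℂ) 1).elim_finite_subcover _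
    (fun u => hU.preimage (by fun_prop)) hcov
  have hun : ∀ u : sphere (0 : ℂ) 1, ‖(u : ℂ)‖ = 1 := fun u => mem_sphere_zero_iff_norm.1 u.2
  have hmb : ∀ u : sphere (0 : ℂ) 1, MapsTo (fun z => (u : ℂ) * z) (ball 0 1) (ball 0 1) := by
    intro u z hz
    simpa [hun u] using hz
  have hmc : ∀ u : sphere (0 : ℂ) 1,
      MapsTo (fun z => (u : ℂ) * z) (closedBall 0 1) (closedBall 0 1) := by
    intro u z hz
    simpa [hun u] using hz
  set G : ℂ → ℂ := fun z => ∏ u ∈ t, (Cext ψ (u * z) - c) with hG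
  have hGc : DiffContOnCl ℂ G (ball 0 1) := by
    refine ⟨?_, ?_⟩
    · refine DifferentiableOn.fun_finsetProd fun u _ => ?_
      have h1 : DifferentiableOn ℂ (Cext ψ) (ball 0 1) := H.hψ.congr fun z hz => H.eq_ball hz
      exact (h1.comp (by fun_prop) (hmb u)).sub_const c
    · rw [closure_ball _ one_ne_zero]
      refine continuousOn_finsetProd _ fun u _ => ?_
      exact (H.cont.comp (by fun_prop) (hmc u)).sub continuousOn_const
  have h0 := Complex.eqOn_closure_of_eqOn_frontier (g := fun _ => (0 : ℂ)) isBounded_ball hGc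
    diffContOnCl_const (by
      intro z hz
      rw [frontier_ball _ one_ne_zero] at hz
      obtain ⟨u, hut, hu⟩ := mem_iUnion₂.1 (ht hz)
      refine Finset.prod_eq_zero hut ?_
      rw [hall _ hu (by rw [norm_mul, hun u, one_mul]; exact mem_sphere_zero_iff_norm.1 hz),
        sub_self])
  have h00 : G 0 = 0 := h0 (subset_closure (by simp))
  obtain ⟨u, -, hu⟩ := Finset.prod_eq_zero_iff.1 h00
  have h0b : (0 : ℂ) ∈ ball (0 : ℂ) 1 := by simp
  rw [mul_zero, H.eq_ball h0b, sub_eq_zero] at hu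
  exact disjoint_left.1 H.hDC (H.mψ h0b) (hu ▸ hc)

lemma continuous_side (u v : ℂ) : Continuous fun p => side p u v := by
  unfold side; fun_prop

/-- If two boundary points have the same image `c`, then every chord separating them has an
endpoint with image `c`. -/
lemma Cara.chord (H : Cara C D φ ψ) {u v a b : ℂ} (hu : ‖u‖ = 1) (hv : ‖v‖ = 1)
    (ha : ‖a‖ = 1) (hb : ‖b‖ = 1) (huv : Cext ψ u = Cext ψ v) (hne : u ≠ v)
    (hsa : 0 < side a u v) (hsb : side b u v < 0) : Cext ψ a = Cext ψ u ∨ Cext ψ b = Cext ψ u := by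
  by_contra hcon
  push Not at hcon
  set c := Cext ψ u with hc
  have hcC : c ∈ C := H.hfr (H.sphere_frontier hu)
  have hab : a ≠ b := by rintro rfl; linarith
  have hseg : segment ℝ a b ⊆ closedBall (0 : ℂ) 1 :=
    (convex_closedBall (0 : ℂ) 1).segment_subset (by simp [ha]) (by simp [hb])
  have hnc : c ∉ Cext ψ '' segment ℝ a b := by
    rintro ⟨x, hx, hxc⟩
    rcases (mem_closedBall_zero_iff.1 (hseg hx)).lt_or_eq with h | h
    · have hxb : x ∈ ball (0 : ℂ) 1 := mem_ball_zero_iff.2 h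
      rw [H.eq_ball hxb] at hxc
      exact disjoint_left.1 H.hDC (H.mψ hxb) (hxc ▸ hcC)
    · by_cases hxa : x = a
      · exact hcon.1 (hxa ▸ hxc)
      by_cases hxb : x = b
      · exact hcon.2 (hxb ▸ hxc)
      have := openSegment_subset_ball_of_ne (x := a) (y := b) (z := (0 : ℂ)) (r := 1)
        (by simp [ha]) (by simp [hb]) hab
        (mem_openSegment_of_ne_left_right (Ne.symm hxa) (Ne.symm hxb) hx)
      exact absurd (mem_ball_zero_iff.1 this) (by rw [h]; exact lt_irrefl _)
  have hcl : IsClosed (Cext ψ '' segment ℝ a b) := by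
    refine (IsCompact.image_of_continuousOn ?_ (H.cont.mono hseg)).isClosed
    rw [segment_eq_image']
    exact isCompact_Icc.image (by fun_prop)
  obtain ⟨ε', hε', hball⟩ := Metric.isOpen_iff.1 hcl.isOpen_compl c hnc
  obtain ⟨ε, hε, hK⟩ := H.inner_connected hcC hε'
  have hopp : side u a b * side v a b < 0 := by
    have h1 := side_mul ha hb hu hv
    have h2 : (0 : ℝ) < ‖v - u‖ ^ 2 := by
      have := norm_pos_iff.2 (sub_ne_zero.2 hne.symm); positivity
    have h3 : (0 : ℝ) < ‖b - a‖ ^ 2 := by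
      have := norm_pos_iff.2 (sub_ne_zero.2 hab.symm); positivity
    have h4 : side a u v * side b u v < 0 := mul_neg_of_pos_of_neg hsa hsb
    have h5 : side a u v * side b u v * ‖b - a‖ ^ 2 < 0 := mul_neg_of_neg_of_pos h4 h3
    rw [← h1] at h5
    by_contra h6
    push Not at h6
    nlinarith
  -- points of the disk near `u` and `v`, on their side of the chord, with images near `c`
  have hnear : ∀ w : ℂ, ‖w‖ = 1 → Cext ψ w = c → side w a b ≠ 0 → ∃ x ∈ ball (0 : ℂ) 1,
      dist (ψ x) c < ε ∧ 0 < side x a b * side w a b := by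
    intro w hw hwc hs
    have h1 := H.tendsto hw
    rw [hwc] at h1
    have e1 := Metric.tendsto_nhds.1 h1 ε hε
    have e2 : ∀ᶠ x in 𝓝 w, 0 < side x a b * side w a b :=
      ((continuous_side a b).mul continuous_const).continuousAt.eventually_mem
        (Ioi_mem_nhds (mul_self_pos.2 hs))
    have : (𝓝[ball (0 : ℂ) 1] w).NeBot :=
      mem_closure_iff_nhdsWithin_neBot.1 (mem_closure_disk (by simp [hw]))
    obtain ⟨x, ⟨hx1, hx2⟩, hx3⟩ := ((e1.and (nhdsWithin_le_nhds e2)).and self_mem_nhdsWithin).exists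
    exact ⟨x, hx3, hx1, hx2⟩
  have hu0 : side u a b ≠ 0 := fun h => by simp [h] at hopp
  have hv0 : side v a b ≠ 0 := fun h => by simp [h] at hopp
  obtain ⟨x, hx, hxc, hxs⟩ := hnear u hu rfl hu0
  obtain ⟨y, hy, hyc, hys⟩ := hnear v hv huv.symm hv0
  obtain ⟨K, hKp, hKD, hKb, hxK, hyK⟩ := hK _ (H.mψ hx) _ (H.mψ hy) hxc hyc
  have hcont : ContinuousOn (fun w => side (φ w) a b) K :=
    (continuous_side a b).comp_continuousOn (H.hφ.continuousOn.mono hKD)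
  have himg := hKp.image _ hcont
  have hoc := himg.ordConnected
  have hx' : side x a b ∈ (fun w => side (φ w) a b) '' K := ⟨_, hxK, by
    show side (φ (ψ x)) a b = _
    rw [H.r x hx]⟩
  have hy' : side y a b ∈ (fun w => side (φ w) a b) '' K := ⟨_, hyK, by
    show side (φ (ψ y)) a b = _
    rw [H.r y hy]⟩
  have h0 : (0 : ℝ) ∈ (fun w => side (φ w) a b) '' K := by
    rcases hu0.lt_or_gt with h | h
    · have h1 : 0 < side v a b := by nlinarith
      refine hoc.out hx' hy' ⟨?_, ?_⟩ <;> nlinarith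
    · have h1 : side v a b < 0 := by nlinarith
      refine hoc.out hy' hx' ⟨?_, ?_⟩ <;> nlinarith
  obtain ⟨w, hwK, hw0⟩ := h0
  have hwb := H.mφ (hKD hwK)
  have hwseg := mem_segment_of_side ha hb hab (mem_ball_zero_iff.1 hwb) hw0
  exact hball (hKb hwK) ⟨_, hwseg, by rw [H.eq_ball hwb, H.l _ (hKD hwK)]⟩

/-- If `u ≠ v` had the same image, one of the two sides of the chord from `u` to `v` would have
constant boundary values, which `Cara.not_const` excludes. -/
lemma Cara.injOn_sphere (H : Cara C D φ ψ) {u v : ℂ} (hu : ‖u‖ = 1) (hv : ‖v‖ = 1)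
    (huv : Cext ψ u = Cext ψ v) : u = v := by
  by_contra hne
  have hcC : Cext ψ u ∈ C := H.hfr (H.sphere_frontier hu)
  obtain ⟨p, hp, hps⟩ := exists_side_pos hu hv hne
  obtain ⟨q, hq, hqs⟩ := exists_side_pos hv hu (Ne.symm hne)
  rw [side_swap] at hqs
  have h1 := H.not_const hcC ((continuous_side u v).isOpen_preimage _ (isOpen_Ioi (a := 0))) hp hps
  have h2 := H.not_const hcC ((continuous_side u v).isOpen_preimage _ (isOpen_Iio (a := 0))) hq
    (by show side q u v < 0; linarith)
  push Not at h1 h2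
  obtain ⟨a, ha, ha1, hac⟩ := h1
  obtain ⟨b, hb, hb1, hbc⟩ := h2
  rcases H.chord hu hv ha1 hb1 huv hne ha hb with h | h
  · exact hac h
  · exact hbc h

/-- **Carathéodory's theorem**: the closure of a bounded domain whose frontier lies in a connected
compact set that is locally an arc is a closed disk. -/
lemma caratheodory (hC : IsCompact C) (hCc : IsConnected C) (hl : LocArc C) (hDo : IsOpen D)
    (hDc : IsConnected D) (hDb : Bornology.IsBounded D) (hDC : Disjoint D C)
    (hfr : frontier D ⊆ C) : ∃ h : ℂ → ℂ, ContinuousOn h (closedBall 0 1) ∧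
      InjOn h (closedBall 0 1) ∧ h '' ball 0 1 = D ∧ h '' sphere 0 1 = frontier D := by
  -- every component of the complement of `D` other than `C` is attached to `C`
  have hDcompl : IsPreconnected Dᶜ := by
    obtain ⟨c, hc⟩ := hCc.nonempty
    refine isPreconnected_of_forall c fun x hx => ?_
    by_cases hxC : x ∈ C
    · exact ⟨C, fun y hy hyD => disjoint_left.1 hDC hyD hy, hc, hxC, hCc.isPreconnected⟩
    set W := connectedComponentIn Cᶜ x with hW
    have hxW : x ∈ W := mem_connectedComponentIn hxC
    have hWo : IsOpen W := hC.isClosed.isOpen_compl.connectedComponentIn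
    have hWC : W ⊆ Cᶜ := connectedComponentIn_subset _ _
    have hWD : Disjoint W D := by
      rw [disjoint_left]
      intro y hy hyD
      exact hx (subset_of_disjoint_frontier hDo isPreconnected_connectedComponentIn
        (disjoint_left.2 fun z hz hz' => hWC hz (hfr hz')) ⟨y, hy, hyD⟩ hxW)
    have hWcl : Disjoint (closure W) D := hWD.closure_left hDo
    have hWfr : frontier W ⊆ C := frontier_connectedComponentIn_subset hC.isClosed x
    have hmeet : (closure W ∩ C).Nonempty := by
      have hne : (frontier W).Nonempty := by
        rw [nonempty_frontier_iff]
        exact ⟨⟨x, hxW⟩, fun h => hWC (h ▸ mem_univ c) hc⟩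
      obtain ⟨y, hy⟩ := hne
      exact ⟨y, frontier_subset_closure hy, hWfr hy⟩
    obtain ⟨y, hyW, hyC⟩ := hmeet
    refine ⟨closure W ∪ C, ?_, Or.inr hc, Or.inl (subset_closure hxW), ?_⟩
    · rintro z (hz | hz) hzD
      · exact disjoint_left.1 hWcl hz hzD
      · exact disjoint_left.1 hDC hzD hz
    · exact isPreconnected_connectedComponentIn.closure.union y hyW hyC hCc.isPreconnected
  obtain ⟨φ, ψ, h1, h2, h3, h4, h5, h6⟩ := riemann_mapping_inv hDo hDc hDb hDcompl
  have H : Cara C D φ ψ := ⟨hC, hl, hDo, hDc, hDb, hDC, hfr, h1, h2, h3, h4, h5, h6⟩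
  have himg : Cext ψ '' ball 0 1 = D := by
    ext x
    constructor
    · rintro ⟨z, hz, rfl⟩
      rw [H.eq_ball hz]; exact h4 hz
    · intro hx
      exact ⟨φ x, h3 hx, by rw [H.eq_ball (h3 hx), h5 x hx]⟩
  have hfrD : Disjoint (frontier D) D := by
    rw [hDo.frontier_eq]; exact disjoint_sdiff_left
  refine ⟨Cext ψ, H.cont, ?_, himg, ?_⟩
  · intro z hz w hw hzw
    rcases (mem_closedBall_zero_iff.1 hz).lt_or_eq with hz1 | hz1 <;>
      rcases (mem_closedBall_zero_iff.1 hw).lt_or_eq with hw1 | hw1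
    · rw [H.eq_ball (mem_ball_zero_iff.2 hz1), H.eq_ball (mem_ball_zero_iff.2 hw1)] at hzw
      exact H.injOn (mem_ball_zero_iff.2 hz1) (mem_ball_zero_iff.2 hw1) hzw
    · rw [H.eq_ball (mem_ball_zero_iff.2 hz1)] at hzw
      exact absurd (h4 (mem_ball_zero_iff.2 hz1))
        (disjoint_left.1 hfrD (hzw ▸ H.sphere_frontier hw1))
    · rw [H.eq_ball (mem_ball_zero_iff.2 hw1)] at hzw
      exact absurd (h4 (mem_ball_zero_iff.2 hw1))
        (disjoint_left.1 hfrD (hzw ▸ H.sphere_frontier hz1))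
    · exact H.injOn_sphere hz1 hw1 hzw
  · ext x
    constructor
    · rintro ⟨z, hz, rfl⟩
      exact H.sphere_frontier (mem_sphere_zero_iff_norm.1 hz)
    · intro hx
      have hcl : IsClosed (Cext ψ '' closedBall 0 1) :=
        ((isCompact_closedBall (0 : ℂ) 1).image_of_continuousOn H.cont).isClosed
      have hsub : closure D ⊆ Cext ψ '' closedBall 0 1 := by
        refine hcl.closure_subset_iff.2 ?_
        rw [← himg]
        exact image_mono ball_subset_closedBall
      obtain ⟨z, hz, rfl⟩ := hsub (frontier_subset_closure hx)
      rcases (mem_closedBall_zero_iff.1 hz).lt_or_eq with hz1 | hz1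
      · exact absurd (himg ▸ mem_image_of_mem _ (mem_ball_zero_iff.2 hz1))
          (disjoint_left.1 hfrD hx)
      · exact ⟨z, mem_sphere_zero_iff_norm.2 hz1, rfl⟩

end Caratheodory

/-! ### Jordan curves made of two arcs -/

section Lunes

/-- Two arcs with common endpoints which are otherwise disjoint. -/
structure Lune {X : Type*} [TopologicalSpace X] (α β : ℝ → X) : Prop where
  ca : ContinuousOn α (Icc 0 1)
  cb : ContinuousOn β (Icc 0 1)
  ia : InjOn α (Icc 0 1)
  ib : InjOn β (Icc 0 1)
  zero : α 0 = β 0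
  one : α 1 = β 1
  cross : ∀ s ∈ Icc (0 : ℝ) 1, ∀ t ∈ Icc (0 : ℝ) 1, α s = β t → s = t ∧ (s = 0 ∨ s = 1)

lemma zero_mem_I : (0 : ℝ) ∈ Icc (0 : ℝ) 1 := ⟨le_rfl, zero_le_one⟩
lemma one_mem_I : (1 : ℝ) ∈ Icc (0 : ℝ) 1 := ⟨zero_le_one, le_rfl⟩

lemma Lune.symm {X : Type*} [TopologicalSpace X] {α β : ℝ → X} (H : Lune α β) : Lune β α where
  ca := H.cb
  cb := H.ca
  ia := H.ib
  ib := H.ia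
  zero := H.zero.symm
  one := H.one.symm
  cross s hs t ht h := by
    obtain ⟨h1, h2⟩ := H.cross t ht s hs h.symm
    exact ⟨h1.symm, h1 ▸ h2⟩

lemma image_rev {X : Type*} (α : ℝ → X) (a b : ℝ) :
    (fun t => α (1 - t)) '' Icc a b = α '' Icc (1 - b) (1 - a) := by
  rw [← image_const_sub_Icc, image_image]

lemma Lune.rev {X : Type*} [TopologicalSpace X] {α β : ℝ → X} (H : Lune α β) :
    Lune (fun t => α (1 - t)) (fun t => β (1 - t)) := by
  have hm : ∀ t ∈ Icc (0 : ℝ) 1, 1 - t ∈ Icc (0 : ℝ) 1 := fun t ht =>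
    ⟨by linarith [ht.2], by linarith [ht.1]⟩
  refine ⟨H.ca.comp (by fun_prop) hm, H.cb.comp (by fun_prop) hm, ?_, ?_, ?_, ?_, ?_⟩
  · intro s hs t ht h
    linarith [H.ia (hm s hs) (hm t ht) h]
  · intro s hs t ht h
    linarith [H.ib (hm s hs) (hm t ht) h]
  · simpa using H.one
  · simpa using H.zero
  · intro s hs t ht h
    obtain ⟨h1, h2⟩ := H.cross _ (hm s hs) _ (hm t ht) h
    refine ⟨by linarith, ?_⟩
    rcases h2 with h2 | h2
    · right; linarith
    · left; linarith

lemma Icc_sub_I {a b : ℝ} (ha : 0 ≤ a) (hb : b ≤ 1) : Icc a b ⊆ Icc (0 : ℝ) 1 :=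
  Icc_subset_Icc ha hb

variable {α β : ℝ → ℂ}

lemma Lune.isCompact (H : Lune α β) : IsCompact (α '' Icc 0 1 ∪ β '' Icc 0 1) :=
  (isCompact_Icc.image_of_continuousOn H.ca).union (isCompact_Icc.image_of_continuousOn H.cb)

lemma Lune.isConnected (H : Lune α β) : IsConnected (α '' Icc 0 1 ∪ β '' Icc 0 1) :=
  ⟨⟨α 0, Or.inl ⟨0, zero_mem_I, rfl⟩⟩,
    (isPreconnected_Icc.image _ H.ca).union (α 0) ⟨0, zero_mem_I, rfl⟩
      ⟨0, zero_mem_I, H.zero.symm⟩ (isPreconnected_Icc.image _ H.cb)⟩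

/-- What remains of the curve when a subarc of `α` around the parameter `s` is removed. -/
lemma Lune.split (H : Lune α β) {s η : ℝ} (hη : 0 < η) (h0 : 0 < s - η) (h1 : s + η < 1) :
    ∃ A', IsCompact A' ∧ IsPreconnected A' ∧ α s ∉ A' ∧
      α '' Icc (s - η) (s + η) ∪ A' = α '' Icc 0 1 ∪ β '' Icc 0 1 ∧ IsPreconnected A'ᶜ := by
  have hs : s ∈ Icc (0 : ℝ) 1 := ⟨by linarith, by linarith⟩
  have s1 : Icc 0 (s - η) ⊆ Icc (0 : ℝ) 1 := Icc_sub_I le_rfl (by linarith)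
  have s2 : Icc (s + η) 1 ⊆ Icc (0 : ℝ) 1 := Icc_sub_I (by linarith) le_rfl
  have k1 : IsCompact (α '' Icc 0 (s - η)) := isCompact_Icc.image_of_continuousOn (H.ca.mono s1)
  have k2 : IsCompact (β '' Icc 0 1) := isCompact_Icc.image_of_continuousOn H.cb
  have k3 : IsCompact (α '' Icc (s + η) 1) := isCompact_Icc.image_of_continuousOn (H.ca.mono s2)
  refine ⟨α '' Icc 0 (s - η) ∪ β '' Icc 0 1 ∪ α '' Icc (s + η) 1, (k1.union k2).union k3,
    ?_, ?_, ?_, ?_⟩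
  · refine IsPreconnected.union (α 1) (Or.inr ⟨1, one_mem_I, H.one.symm⟩)
      ⟨1, ⟨h1.le, le_rfl⟩, rfl⟩ ?_ (isPreconnected_Icc.image _ (H.ca.mono s2))
    exact IsPreconnected.union (α 0) ⟨0, ⟨le_rfl, h0.le⟩, rfl⟩ ⟨0, zero_mem_I, H.zero.symm⟩
      (isPreconnected_Icc.image _ (H.ca.mono s1)) (isPreconnected_Icc.image _ H.cb)
  · rintro ((⟨t, ht, h⟩ | ⟨t, ht, h⟩) | ⟨t, ht, h⟩)
    · linarith [H.ia (s1 ht) hs h, ht.2]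
    · rcases (H.cross s hs t ht h.symm).2 with h | h <;> linarith
    · linarith [H.ia (s2 ht) hs h, ht.1]
  · rw [union_right_comm, ← union_assoc, ← union_assoc, ← image_union, ← image_union,
      union_comm (Icc (s - η) (s + η)), Icc_union_Icc_eq_Icc (by linarith) (by linarith),
      Icc_union_Icc_eq_Icc (by linarith) (by linarith)]
  · refine isPreconnected_compl_of_hasLog ((k1.union k2).union k3) fun p hp q hq => ?_
    have hc : ContinuousOn (fun z => (z - p) / (z - q))
        (α '' Icc 0 (s - η) ∪ β '' Icc 0 1 ∪ α '' Icc (s + η) 1) :=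
      ContinuousOn.div (by fun_prop) (by fun_prop) fun z hz h => hq (sub_eq_zero.1 h ▸ hz)
    have hn : ∀ z ∈ (α '' Icc 0 (s - η) ∪ β '' Icc 0 1 ∪ α '' Icc (s + η) 1),
        (z - p) / (z - q) ≠ 0 := fun z hz =>
      div_ne_zero (fun h => hp (sub_eq_zero.1 h ▸ hz)) (fun h => hq (sub_eq_zero.1 h ▸ hz))
    have l1 := hasLog_arc h0.le (H.ca.mono s1) (H.ia.mono s1)
      (hc.mono fun z hz => Or.inl (Or.inl hz)) (fun z hz => hn z (Or.inl (Or.inl hz)))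
    have l2 := hasLog_arc zero_le_one H.cb H.ib
      (hc.mono fun z hz => Or.inl (Or.inr hz)) (fun z hz => hn z (Or.inl (Or.inr hz)))
    have l3 := hasLog_arc h1.le (H.ca.mono s2) (H.ia.mono s2)
      (hc.mono fun z hz => Or.inr hz) (fun z hz => hn z (Or.inr hz))
    refine (l1.union_of_isClosed l2 k1.isClosed k2.isClosed ?_).union_of_isClosed l3
      (k1.union k2).isClosed k3.isClosed ?_
    · refine Set.Subsingleton.isPreconnected fun x hx y hy => ?_
      have : ∀ x ∈ α '' Icc 0 (s - η) ∩ β '' Icc 0 1, x = α 0 := by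
        rintro _ ⟨⟨t, ht, rfl⟩, ⟨u, hu, h⟩⟩
        rcases (H.cross t (s1 ht) u hu h.symm).2 with h | h
        · rw [h]
        · linarith [ht.2]
      rw [this x hx, this y hy]
    · refine Set.Subsingleton.isPreconnected fun x hx y hy => ?_
      have : ∀ x ∈ (α '' Icc 0 (s - η) ∪ β '' Icc 0 1) ∩ α '' Icc (s + η) 1, x = α 1 := by
        rintro x ⟨⟨u, hu, h⟩ | ⟨u, hu, h⟩, ⟨t, ht, rfl⟩⟩
        · linarith [H.ia (s1 hu) (s2 ht) h, ht.1, hu.2]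
        · rcases (H.cross t (s2 ht) u hu h.symm).2 with h | h
          · linarith [ht.1]
          · rw [h]
      rw [this x hx, this y hy]

lemma locArc_mk {C A A' : Set ℂ} {c : ℂ} {ε' : ℝ} (hA : IsCompact A) (hA' : IsCompact A')
    (h1 : IsPreconnected A) (h2 : IsPreconnected A') (h : A ∪ A' = C) (hb : A ⊆ ball c ε')
    (hc : c ∉ A') : ∃ ε > 0, ∃ A A' : Set ℂ, IsClosed A ∧ IsClosed A' ∧ IsPreconnected A ∧
    IsPreconnected A' ∧ A ∪ A' = C ∧ A ⊆ ball c ε' ∧ Disjoint A' (closedBall c ε) := by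
  obtain ⟨δ, hδ, hd⟩ := Metric.isOpen_iff.1 hA'.isClosed.isOpen_compl c hc
  refine ⟨δ / 2, by linarith, A, A', hA.isClosed, hA'.isClosed, h1, h2, h, hb, ?_⟩
  exact disjoint_right.2 fun x hx => hd (closedBall_subset_ball (by linarith) hx)

/-- Small parameter intervals are mapped into small balls. -/
lemma small_image (hα : ContinuousOn α (Icc 0 1)) {s ε : ℝ} (hs : s ∈ Icc (0 : ℝ) 1)
    (hε : 0 < ε) : ∃ δ > 0, ∀ t ∈ Icc (0 : ℝ) 1, |t - s| < δ → α t ∈ ball (α s) ε := by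
  obtain ⟨δ, hδ, h⟩ := Metric.continuousOn_iff.1 hα s hs ε hε
  exact ⟨δ, hδ, fun t ht hts => h t ht hts⟩

lemma Lune.locArc_interior (H : Lune α β) {s : ℝ} (hs : s ∈ Ioo (0 : ℝ) 1) {ε : ℝ} (hε : 0 < ε) :
    ∃ A A' : Set ℂ, IsCompact A ∧ IsCompact A' ∧ IsPreconnected A ∧
    IsPreconnected A' ∧ A ∪ A' = α '' Icc 0 1 ∪ β '' Icc 0 1 ∧ A ⊆ ball (α s) ε ∧ α s ∉ A' ∧
    IsPreconnected A'ᶜ := by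
  obtain ⟨δ, hδ, h⟩ := small_image H.ca ⟨hs.1.le, hs.2.le⟩ hε
  set η := min (δ / 2) (min (s / 2) ((1 - s) / 2)) with hη
  have e1 : η ≤ δ / 2 := min_le_left _ _
  have e2 : η ≤ s / 2 := (min_le_right _ _).trans (min_le_left _ _)
  have e3 : η ≤ (1 - s) / 2 := (min_le_right _ _).trans (min_le_right _ _)
  have e0 : 0 < η := lt_min (by linarith) (lt_min (by linarith [hs.1]) (by linarith [hs.2]))
  obtain ⟨A', h1, h2, h3, h4, h5⟩ := H.split e0 (by linarith [hs.1]) (by linarith [hs.2])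
  have hsub : Icc (s - η) (s + η) ⊆ Icc (0 : ℝ) 1 :=
    Icc_sub_I (by linarith [hs.1]) (by linarith [hs.2])
  refine ⟨_, A', isCompact_Icc.image_of_continuousOn (H.ca.mono hsub), h1,
    isPreconnected_Icc.image _ (H.ca.mono hsub), h2, h4, ?_, h3, h5⟩
  rintro _ ⟨t, ht, rfl⟩
  exact h t (hsub ht) (abs_lt.2 ⟨by linarith [ht.1], by linarith [ht.2]⟩)

lemma Lune.locArc_zero (H : Lune α β) {ε : ℝ} (hε : 0 < ε) :
    ∃ A A' : Set ℂ, IsCompact A ∧ IsCompact A' ∧ IsPreconnected A ∧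
    IsPreconnected A' ∧ A ∪ A' = α '' Icc 0 1 ∪ β '' Icc 0 1 ∧ A ⊆ ball (α 0) ε ∧ α 0 ∉ A' := by
  obtain ⟨δ₁, hδ₁, g₁⟩ := small_image H.ca zero_mem_I hε
  obtain ⟨δ₂, hδ₂, g₂⟩ := small_image H.cb zero_mem_I hε
  set η := min (1 / 2) (min (δ₁ / 2) (δ₂ / 2)) with hη
  have e1 : η ≤ 1 / 2 := min_le_left _ _
  have e2 : η ≤ δ₁ / 2 := (min_le_right _ _).trans (min_le_left _ _)
  have e3 : η ≤ δ₂ / 2 := (min_le_right _ _).trans (min_le_right _ _)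
  have e0 : 0 < η := lt_min (by norm_num) (lt_min (by linarith) (by linarith))
  have s1 : Icc 0 η ⊆ Icc (0 : ℝ) 1 := Icc_sub_I le_rfl (by linarith)
  have s2 : Icc η 1 ⊆ Icc (0 : ℝ) 1 := Icc_sub_I e0.le le_rfl
  have hun : Icc 0 η ∪ Icc η 1 = Icc (0 : ℝ) 1 := Icc_union_Icc_eq_Icc e0.le (by linarith)
  refine ⟨α '' Icc 0 η ∪ β '' Icc 0 η, α '' Icc η 1 ∪ β '' Icc η 1,
    (isCompact_Icc.image_of_continuousOn (H.ca.mono s1)).union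
      (isCompact_Icc.image_of_continuousOn (H.cb.mono s1)),
    (isCompact_Icc.image_of_continuousOn (H.ca.mono s2)).union
      (isCompact_Icc.image_of_continuousOn (H.cb.mono s2)), ?_, ?_, ?_, ?_, ?_⟩
  · exact IsPreconnected.union (α 0) ⟨0, ⟨le_rfl, e0.le⟩, rfl⟩ ⟨0, ⟨le_rfl, e0.le⟩, H.zero.symm⟩
      (isPreconnected_Icc.image _ (H.ca.mono s1)) (isPreconnected_Icc.image _ (H.cb.mono s1))
  · exact IsPreconnected.union (α 1) ⟨1, ⟨by linarith, le_rfl⟩, rfl⟩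
      ⟨1, ⟨by linarith, le_rfl⟩, H.one.symm⟩
      (isPreconnected_Icc.image _ (H.ca.mono s2)) (isPreconnected_Icc.image _ (H.cb.mono s2))
  · rw [union_union_union_comm, ← image_union, ← image_union, hun]
  · rintro _ (⟨t, ht, rfl⟩ | ⟨t, ht, rfl⟩)
    · exact g₁ t (s1 ht) (abs_lt.2 ⟨by linarith [ht.1], by linarith [ht.2]⟩)
    · rw [H.zero]
      exact g₂ t (s1 ht) (abs_lt.2 ⟨by linarith [ht.1], by linarith [ht.2]⟩)
  · rintro (⟨t, ht, h⟩ | ⟨t, ht, h⟩)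
    · linarith [H.ia (s2 ht) zero_mem_I h, ht.1]
    · rw [H.zero] at h
      linarith [H.ib (s2 ht) zero_mem_I h, ht.1]

/-- A Jordan curve made of two arcs is locally an arc, also at the two common endpoints. -/
lemma Lune.locArc (H : Lune α β) : LocArc (α '' Icc 0 1 ∪ β '' Icc 0 1) := by
  have main : ∀ α β : ℝ → ℂ, Lune α β → ∀ s ∈ Icc (0 : ℝ) 1, ∀ ε' > 0, ∃ ε > 0, ∃ A A' : Set ℂ,
      IsClosed A ∧ IsClosed A' ∧ IsPreconnected A ∧ IsPreconnected A' ∧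
      A ∪ A' = α '' Icc 0 1 ∪ β '' Icc 0 1 ∧ A ⊆ ball (α s) ε' ∧
      Disjoint A' (closedBall (α s) ε) := by
    intro α β H s hs ε' hε'
    rcases eq_or_lt_of_le hs.1 with h0 | h0
    · subst h0
      obtain ⟨A, A', h1, h2, h3, h4, h5, h6, h7⟩ := H.locArc_zero hε'
      exact locArc_mk h1 h2 h3 h4 h5 h6 h7
    rcases eq_or_lt_of_le hs.2 with h1 | h1
    · subst h1
      obtain ⟨A, A', h1, h2, h3, h4, h5, h6, h7⟩ := H.rev.locArc_zero hε'
      rw [image_rev, image_rev] at h5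
      simp only [sub_zero, sub_self] at h5 h6 h7
      exact locArc_mk h1 h2 h3 h4 h5 h6 h7
    · obtain ⟨A, A', h1, h2, h3, h4, h5, h6, h7, -⟩ := H.locArc_interior ⟨h0, h1⟩ hε'
      exact locArc_mk h1 h2 h3 h4 h5 h6 h7
  rintro c (⟨s, hs, rfl⟩ | ⟨s, hs, rfl⟩) ε' hε'
  · exact main α β H s hs ε' hε'
  · rw [union_comm]
    exact main β α H.symm s hs ε' hε'

lemma Lune.not_isPreconnected (H : Lune α β) :
    ¬ IsPreconnected (α '' Icc 0 1 ∪ β '' Icc 0 1)ᶜ := by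
  refine not_isPreconnected_compl H.ca H.cb H.zero H.one (fun h => ?_) ?_
  · exact zero_ne_one (H.ia zero_mem_I one_mem_I h)
  · rintro _ ⟨⟨s, hs, rfl⟩, ⟨t, ht, h⟩⟩
    rcases (H.cross s hs t ht h.symm).2 with h | h <;> simp [h]

/-- Every complementary component of a Jordan curve has the whole curve as its frontier. -/
lemma Lune.frontier_eq (H : Lune α β) {E : Set ℂ} (hE : IsOpen E) (hEc : IsConnected E)
    (hEd : Disjoint E (α '' Icc 0 1 ∪ β '' Icc 0 1))
    (hfr : frontier E ⊆ α '' Icc 0 1 ∪ β '' Icc 0 1) :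
    frontier E = α '' Icc 0 1 ∪ β '' Icc 0 1 := by
  refine hfr.antisymm ?_
  have main : ∀ α β : ℝ → ℂ, Lune α β → Disjoint E (α '' Icc 0 1 ∪ β '' Icc 0 1) →
      frontier E ⊆ α '' Icc 0 1 ∪ β '' Icc 0 1 → α '' Icc 0 1 ⊆ frontier E := by
    intro α β H hEd hfr
    have hIoo : α '' Ioo 0 1 ⊆ frontier E := by
      rintro _ ⟨s, hs, rfl⟩
      by_contra hsf
      obtain ⟨δ, hδ, hb⟩ := Metric.isOpen_iff.1 isClosed_frontier.isOpen_compl (α s) hsf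
      obtain ⟨A, A', h1, h2, h3, h4, h5, h6, h7, h8⟩ := H.locArc_interior hs hδ
      have hfA : frontier E ⊆ A' := by
        intro x hx
        have := hfr hx
        rw [← h5] at this
        exact this.resolve_left fun h => hb (h6 h) hx
      have hA'C : A' ⊆ α '' Icc 0 1 ∪ β '' Icc 0 1 := h5 ▸ subset_union_right
      obtain ⟨e, he⟩ := hEc.nonempty
      have hsub : A'ᶜ ⊆ E := subset_of_disjoint_frontier hE h8
        (disjoint_left.2 fun x hx hx' => hx (hfA hx'))
        ⟨e, fun h => disjoint_left.1 hEd he (hA'C h), he⟩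
      apply H.not_isPreconnected
      have : (α '' Icc 0 1 ∪ β '' Icc 0 1)ᶜ = E :=
        ((compl_subset_compl.2 hA'C).trans hsub).antisymm
          fun x hx hx' => disjoint_left.1 hEd hx hx'
      rw [this]
      exact hEc.isPreconnected
    have h01 : closure (Ioo (0 : ℝ) 1) = Icc 0 1 := closure_Ioo zero_ne_one
    have h2 := ContinuousOn.image_closure (f := α) (s := Ioo 0 1) (by rw [h01]; exact H.ca)
    rw [h01] at h2
    exact h2.trans (closure_minimal hIoo isClosed_frontier)
  refine union_subset (main α β H hEd hfr) (main β α H.symm ?_ ?_)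
  · rwa [union_comm]
  · rwa [union_comm]

end Lunes

/-! ### The faces of a theta curve in the plane -/

section Faces

/-- A theta curve: three arcs with common endpoints, disjoint otherwise. -/
structure IsTheta {X : Type*} [TopologicalSpace X] (θ : Fin 3 → ℝ → X) : Prop where
  cont : ∀ i, ContinuousOn (θ i) (Icc 0 1)
  zero : ∀ i j, θ i 0 = θ j 0
  one : ∀ i j, θ i 1 = θ j 1
  inj : ∀ i j, ∀ s ∈ Icc (0 : ℝ) 1, ∀ t ∈ Icc (0 : ℝ) 1, θ i s = θ j t →
    s = t ∧ (i = j ∨ s = 0 ∨ s = 1)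

/-- The union of the three arcs. -/
def body {X : Type*} (θ : Fin 3 → ℝ → X) : Set X := ⋃ i, θ i '' Icc 0 1

/-- The Jordan curve formed by the two arcs other than the `k`-th. -/
def cyc {X : Type*} (θ : Fin 3 → ℝ → X) (k : Fin 3) : Set X :=
  θ (k + 1) '' Icc 0 1 ∪ θ (k + 2) '' Icc 0 1

lemma IsTheta.injOn {X : Type*} [TopologicalSpace X] {θ : Fin 3 → ℝ → X} (H : IsTheta θ)
    (i : Fin 3) : InjOn (θ i) (Icc 0 1) := fun s hs t ht h => (H.inj i i s hs t ht h).1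

lemma IsTheta.lune {X : Type*} [TopologicalSpace X] {θ : Fin 3 → ℝ → X} (H : IsTheta θ)
    {i j : Fin 3} (hij : i ≠ j) : Lune (θ i) (θ j) where
  ca := H.cont i
  cb := H.cont j
  ia := H.injOn i
  ib := H.injOn j
  zero := H.zero i j
  one := H.one i j
  cross s hs t ht h := ⟨(H.inj i j s hs t ht h).1, ((H.inj i j s hs t ht h).2).resolve_left hij⟩

lemma IsTheta.lune_cyc {X : Type*} [TopologicalSpace X] {θ : Fin 3 → ℝ → X} (H : IsTheta θ)
    (k : Fin 3) : Lune (θ (k + 1)) (θ (k + 2)) := H.lune (by fin_cases k <;> decide)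

lemma mem_body {X : Type*} {θ : Fin 3 → ℝ → X} {x : X} :
    x ∈ body θ ↔ ∃ i, x ∈ θ i '' Icc 0 1 := mem_iUnion

lemma cyc_subset_body {X : Type*} (θ : Fin 3 → ℝ → X) (k : Fin 3) : cyc θ k ⊆ body θ :=
  union_subset (subset_iUnion (fun i => θ i '' Icc (0 : ℝ) 1) _)
    (subset_iUnion (fun i => θ i '' Icc (0 : ℝ) 1) _)

lemma arc_subset_cyc {X : Type*} (θ : Fin 3 → ℝ → X) {i k : Fin 3} (h : i ≠ k) :
    θ i '' Icc 0 1 ⊆ cyc θ k := by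
  have : i = k + 1 ∨ i = k + 2 := by
    revert h; revert i k; decide
  rcases this with rfl | rfl
  · exact subset_union_left
  · exact subset_union_right

lemma mem_cyc {X : Type*} {θ : Fin 3 → ℝ → X} {k : Fin 3} {x : X} :
    x ∈ cyc θ k ↔ ∃ i, i ≠ k ∧ x ∈ θ i '' Icc 0 1 := by
  constructor
  · rintro (h | h)
    · exact ⟨_, by fin_cases k <;> decide, h⟩
    · exact ⟨_, by fin_cases k <;> decide, h⟩
  · rintro ⟨i, hi, h⟩
    exact arc_subset_cyc θ hi h

lemma body_eq {X : Type*} (θ : Fin 3 → ℝ → X) (k : Fin 3) :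
    body θ = cyc θ k ∪ θ k '' Icc 0 1 := by
  ext x
  rw [mem_body, mem_union, mem_cyc]
  constructor
  · rintro ⟨i, hi⟩
    by_cases h : i = k
    · exact Or.inr (h ▸ hi)
    · exact Or.inl ⟨i, h, hi⟩
  · rintro (⟨i, -, hi⟩ | h)
    · exact ⟨i, hi⟩
    · exact ⟨k, h⟩

lemma IsTheta.mid_notMem {X : Type*} [TopologicalSpace X] {θ : Fin 3 → ℝ → X} (H : IsTheta θ)
    {k : Fin 3} {s : ℝ} (hs : s ∈ Ioo (0 : ℝ) 1) : θ k s ∉ cyc θ k := by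
  rw [mem_cyc]
  rintro ⟨i, hi, t, ht, h⟩
  obtain ⟨h1, h2 | h2 | h2⟩ := H.inj k i s ⟨hs.1.le, hs.2.le⟩ t ht h.symm
  · exact hi h2.symm
  · exact hs.1.ne' h2
  · exact hs.2.ne h2

lemma IsTheta.isCompact_body {X : Type*} [TopologicalSpace X] {θ : Fin 3 → ℝ → X}
    (H : IsTheta θ) : IsCompact (body θ) :=
  isCompact_iUnion fun i => isCompact_Icc.image_of_continuousOn (H.cont i)

lemma IsTheta.cyc_ne {X : Type*} [TopologicalSpace X] {θ : Fin 3 → ℝ → X} (H : IsTheta θ)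
    {i j : Fin 3} (hij : i ≠ j) : cyc θ i ≠ cyc θ j := by
  intro h
  have h1 : θ i (1 / 2) ∉ cyc θ i := H.mid_notMem ⟨by norm_num, by norm_num⟩
  rw [h] at h1
  exact h1 (arc_subset_cyc θ hij ⟨1 / 2, ⟨by norm_num, by norm_num⟩, rfl⟩)

variable {θ : Fin 3 → ℝ → ℂ}

/-- The face bounded by the two arcs other than the `k`-th. -/
lemma IsTheta.exists_face (H : IsTheta θ) (k : Fin 3) : ∃ F : Set ℂ, IsOpen F ∧ IsConnected F ∧
    Disjoint F (body θ) ∧ frontier F = cyc θ k := by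
  have L := H.lune_cyc k
  have hmid : IsPreconnected (θ k '' Ioo 0 1) :=
    isPreconnected_Ioo.image _ ((H.cont k).mono Ioo_subset_Icc_self)
  have hmidC : θ k '' Ioo 0 1 ⊆ (cyc θ k)ᶜ := by
    rintro _ ⟨s, hs, rfl⟩; exact H.mid_notMem hs
  set m := θ k (1 / 2) with hm
  have hmm : m ∈ θ k '' Ioo 0 1 := ⟨1 / 2, ⟨by norm_num, by norm_num⟩, rfl⟩
  have hcc : IsClosed (cyc θ k) := L.isCompact.isClosed
  obtain ⟨x, hx, hxm⟩ : ∃ x ∈ (cyc θ k)ᶜ, x ∉ connectedComponentIn (cyc θ k)ᶜ m := by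
    by_contra! hcon
    apply L.not_isPreconnected
    have : (cyc θ k)ᶜ = connectedComponentIn (cyc θ k)ᶜ m :=
      Subset.antisymm hcon (connectedComponentIn_subset _ _)
    show IsPreconnected (cyc θ k)ᶜ
    rw [this]
    exact isPreconnected_connectedComponentIn
  have hxE := mem_connectedComponentIn hx
  have hEo : IsOpen (connectedComponentIn (cyc θ k)ᶜ x) := hcc.isOpen_compl.connectedComponentIn
  have hEc : IsConnected (connectedComponentIn (cyc θ k)ᶜ x) :=
    ⟨⟨x, hxE⟩, isPreconnected_connectedComponentIn⟩
  have hEd : Disjoint (connectedComponentIn (cyc θ k)ᶜ x) (cyc θ k) :=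
    disjoint_left.2 fun y hy hy' => connectedComponentIn_subset _ _ hy hy'
  refine ⟨_, hEo, hEc, ?_, L.frontier_eq hEo hEc hEd (frontier_connectedComponentIn_subset hcc x)⟩
  rw [body_eq θ k, disjoint_union_right]
  refine ⟨hEd, disjoint_left.2 ?_⟩
  rintro y hy ⟨s, hs, rfl⟩
  by_cases hs1 : θ k s ∈ cyc θ k
  · exact disjoint_left.1 hEd hy hs1
  have hsI : s ∈ Ioo (0 : ℝ) 1 := by
    refine ⟨lt_of_le_of_ne hs.1 ?_, lt_of_le_of_ne hs.2 ?_⟩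
    · rintro rfl
      exact hs1 (Or.inl ⟨0, zero_mem_I, H.zero _ _⟩)
    · rintro rfl
      exact hs1 (Or.inl ⟨1, one_mem_I, H.one _ _⟩)
  have h1 := hmid.subset_connectedComponentIn hmm hmidC
  have h2 : θ k s ∈ connectedComponentIn (cyc θ k)ᶜ m := h1 ⟨s, hsI, rfl⟩
  have h3 := connectedComponentIn_eq h2
  have h4 := connectedComponentIn_eq hy
  rw [h3, ← h4] at hxm
  exact hxm hxE

/-- Logarithms on the three arcs that agree at both vertices glue to a logarithm on the theta
curve. -/
lemma IsTheta.hasLog_body (H : IsTheta θ) {f : ℂ → ℂ} {L : Fin 3 → ℂ → ℂ}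
    (hL : ∀ i, ContinuousOn (L i) (θ i '' Icc 0 1))
    (he : ∀ i, ∀ z ∈ θ i '' Icc 0 1, Complex.exp (L i z) = f z)
    (h0 : ∀ i, L i (θ 0 0) = L 0 (θ 0 0)) (h1 : ∀ i, L i (θ 0 1) = L 0 (θ 0 1)) :
    HasLog f (body θ) := by
  classical
  set M : ℂ → ℂ := fun z => if z ∈ θ 0 '' Icc 0 1 then L 0 z else
    if z ∈ θ 1 '' Icc 0 1 then L 1 z else L 2 z with hM
  have hcommon : ∀ i j, i ≠ j → ∀ z ∈ θ i '' Icc 0 1, z ∈ θ j '' Icc 0 1 → L i z = L j z := by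
    rintro i j hij _ ⟨s, hs, rfl⟩ ⟨t, ht, h⟩
    obtain ⟨-, h2 | h2 | h2⟩ := H.inj i j s hs t ht h.symm
    · exact absurd h2 hij
    · rw [h2, H.zero i 0, h0 i, h0 j]
    · rw [h2, H.one i 0, h1 i, h1 j]
  have hML : ∀ i, ∀ z ∈ θ i '' Icc 0 1, M z = L i z := by
    intro i z hz
    simp only [hM]
    by_cases z0 : z ∈ θ 0 '' Icc 0 1
    · rw [if_pos z0]
      by_cases hi : i = 0
      · rw [hi]
      · exact hcommon 0 i (Ne.symm hi) z z0 hz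
    · rw [if_neg z0]
      by_cases z1 : z ∈ θ 1 '' Icc 0 1
      · rw [if_pos z1]
        by_cases hi : i = 1
        · rw [hi]
        · exact hcommon 1 i (Ne.symm hi) z z1 hz
      · rw [if_neg z1]
        fin_cases i
        · exact absurd hz z0
        · exact absurd hz z1
        · rfl
  have hcl : ∀ i, IsClosed (θ i '' Icc 0 1) := fun i =>
    (isCompact_Icc.image_of_continuousOn (H.cont i)).isClosed
  have hMc : ∀ i, ContinuousOn M (θ i '' Icc 0 1) := fun i => (hL i).congr (hML i)
  refine ⟨M, ?_, ?_⟩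
  · have : body θ = θ 0 '' Icc 0 1 ∪ θ 1 '' Icc 0 1 ∪ θ 2 '' Icc 0 1 := by
      ext x; simp only [mem_body, Fin.exists_fin_succ, mem_union]; simp [or_assoc]
    rw [this]
    exact ((hMc 0).union_of_isClosed (hMc 1) (hcl 0) (hcl 1)).union_of_isClosed (hMc 2)
      ((hcl 0).union (hcl 1)) (hcl 2)
  · intro z hz
    obtain ⟨i, hi⟩ := mem_body.1 hz
    rw [hML i z hi, he i z hi]

/-- For `p` off the theta curve, the logarithms of `z - p` on the three arcs can be chosen equal at
the first vertex; at the second one they then differ by multiples of `2πi`. -/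
lemma IsTheta.logs (H : IsTheta θ) {p : ℂ} (hp : p ∉ body θ) :
    ∃ L : Fin 3 → ℂ → ℂ, ∃ m : Fin 3 → ℤ, (∀ i, ContinuousOn (L i) (θ i '' Icc 0 1)) ∧
    (∀ i, ∀ z ∈ θ i '' Icc 0 1, Complex.exp (L i z) = z - p) ∧
    (∀ i, L i (θ 0 0) = L 0 (θ 0 0)) ∧
    (∀ i, L i (θ 0 1) = L 0 (θ 0 1) + m i * (2 * Real.pi * Complex.I)) ∧ m 0 = 0 := by
  have hpi : ∀ i, ∀ z ∈ θ i '' Icc 0 1, z - p ≠ 0 := fun i z hz h =>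
    hp (mem_body.2 ⟨i, sub_eq_zero.1 h ▸ hz⟩)
  choose L hL he using fun i : Fin 3 => hasLog_arc zero_le_one (H.cont i) (H.injOn i)
    (f := fun z => z - p) (by fun_prop) (hpi i)
  have m0 : ∀ i, θ 0 0 ∈ θ i '' Icc 0 1 := fun i => ⟨0, zero_mem_I, H.zero _ _⟩
  have m1 : ∀ i, θ 0 1 ∈ θ i '' Icc 0 1 := fun i => ⟨1, one_mem_I, H.one _ _⟩
  have hk : ∀ i, ∃ n : ℤ, L i (θ 0 0) = L 0 (θ 0 0) + n * (2 * Real.pi * Complex.I) := fun i =>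
    Complex.exp_eq_exp_iff_exists_int.1 ((he i _ (m0 i)).trans (he 0 _ (m0 0)).symm)
  choose n hn using hk
  set L' : Fin 3 → ℂ → ℂ := fun i z => L i z - n i * (2 * Real.pi * Complex.I) with hL'
  have he' : ∀ i, ∀ z ∈ θ i '' Icc 0 1, Complex.exp (L' i z) = z - p := by
    intro i z hz
    refine Eq.trans ?_ (he i z hz)
    rw [Complex.exp_eq_exp_iff_exists_int]
    exact ⟨- n i, by simp [hL']; ring⟩
  have hk' : ∀ i, ∃ n : ℤ, L' i (θ 0 1) = L' 0 (θ 0 1) + n * (2 * Real.pi * Complex.I) := fun i =>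
    Complex.exp_eq_exp_iff_exists_int.1 ((he' i _ (m1 i)).trans (he' 0 _ (m1 0)).symm)
  choose m hm using hk'
  refine ⟨L', m, fun i => (hL i).sub continuousOn_const, he', fun i => ?_, hm, ?_⟩
  · simp only [hL']
    linear_combination hn i - hn 0
  · have h := hm 0
    have hne : (2 * Real.pi * Complex.I : ℂ) ≠ 0 := Complex.two_pi_I_ne_zero
    have h2 : (m 0 : ℂ) * (2 * Real.pi * Complex.I) = 0 := by
      linear_combination -h
    exact_mod_cast (mul_eq_zero.1 h2).resolve_right hne

/-- Three pairwise disjoint bounded open sets cannot all have their frontiers in a theta curve. -/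
lemma IsTheta.no_three_bounded (H : IsTheta θ) {U : Fin 3 → Set ℂ} (hU : ∀ i, IsOpen (U i))
    (hne : ∀ i, (U i).Nonempty) (hb : ∀ i, Bornology.IsBounded (U i))
    (hd : ∀ i j, i ≠ j → Disjoint (U i) (U j)) (hfr : ∀ i, frontier (U i) ⊆ body θ)
    (hUb : ∀ i, Disjoint (U i) (body θ)) : False := by
  choose p hp using hne
  choose L m hL he h0 h1 hm using fun i => H.logs (disjoint_left.1 (hUb i) (hp i))
  obtain ⟨c, hc, k, hk⟩ : ∃ c : Fin 3 → ℤ,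
      ∑ i, c i • (fun j : Fin 2 => m i j.succ) = 0 ∧ ∃ i, c i ≠ 0 := by
    rw [← Fintype.not_linearIndependent_iff]
    intro h
    have := h.fintype_card_le_finrank
    simp at this
  have hcm : ∀ j, ∑ i, c i * m i j = 0 := by
    intro j
    rcases Fin.eq_zero_or_eq_succ j with rfl | ⟨j, rfl⟩
    · simp [hm]
    · have := congrFun hc j
      simpa using this
  have hlog : HasLog (fun z => ∏ i, (z - p i) ^ c i) (body θ) := by
    refine H.hasLog_body (L := fun j z => ∑ i, c i * L i j z) ?_ ?_ ?_ ?_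
    · exact fun j => continuousOn_finsetSum _ fun i _ => continuousOn_const.mul (hL i j)
    · intro j z hz
      rw [Complex.exp_sum]
      refine Finset.prod_congr rfl fun i _ => ?_
      rw [Complex.exp_int_mul, he i j z hz]
    · intro j
      simp only [h0 _ j]
    · intro j
      have : ∑ i, (c i : ℂ) * (m i j : ℂ) = 0 := by exact_mod_cast hcm j
      simp only [h1 _ j, mul_add, Finset.sum_add_distrib]
      rw [add_eq_left]
      simp only [← mul_assoc]
      simp only [← Finset.sum_mul, this, zero_mul]
  have hcl : ∀ i, i ≠ k → ∀ z ∈ closure (U k), z - p i ≠ 0 := by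
    intro i hi z hz h
    have := (hd k i (Ne.symm hi)).closure_left (hU i)
    exact disjoint_left.1 this hz (sub_eq_zero.1 h ▸ hp i)
  refine not_hasLog_of_bounded (hU k) (hb k) (hfr k) (hp k) hk
    (u := fun z => ∏ i ∈ Finset.univ.erase k, (z - p i) ^ c i) ?_ ?_ (hlog.congr fun z _ => ?_)
  · refine continuousOn_finsetProd _ fun i hi => ?_
    exact ContinuousOn.zpow₀ (by fun_prop) _
      fun z hz => Or.inl (hcl i (Finset.ne_of_mem_erase hi) z hz)
  · intro z hz
    exact Finset.prod_ne_zero_iff.2 fun i hi =>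
      zpow_ne_zero _ (hcl i (Finset.ne_of_mem_erase hi) z hz)
  · rw [Finset.mul_prod_erase Finset.univ (fun i => (z - p i) ^ c i) (Finset.mem_univ k)]

/-- A theta curve in the plane has exactly three faces, each bounded by two of its arcs. -/
lemma IsTheta.faces (H : IsTheta θ) : ∃ F : Fin 3 → Set ℂ, (∀ k, IsOpen (F k)) ∧
    (∀ k, IsConnected (F k)) ∧ (∀ i j, i ≠ j → Disjoint (F i) (F j)) ∧
    (∀ k, frontier (F k) = cyc θ k) ∧ ⋃ k, F k = (body θ)ᶜ := by
  choose F hFo hFc hFd hFf using H.exists_face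
  have hdis : ∀ A B : Set ℂ, IsOpen A → IsOpen B → IsConnected A → IsConnected B →
      Disjoint A (body θ) → Disjoint B (body θ) → frontier A ⊆ body θ → frontier B ⊆ body θ →
      A ≠ B → Disjoint A B := by
    intro A B hA hB hAc hBc hAd hBd hAf hBf hAB
    by_contra hcon
    rw [not_disjoint_iff_nonempty_inter] at hcon
    apply hAB
    apply Subset.antisymm
    · exact subset_of_disjoint_frontier hB hAc.isPreconnected (hAd.mono_right hBf) hcon
    · exact subset_of_disjoint_frontier hA hBc.isPreconnected (hBd.mono_right hAf)
        (by rwa [inter_comm])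
  have hFb : ∀ k, frontier (F k) ⊆ body θ := fun k => (hFf k).trans_subset (cyc_subset_body θ k)
  have hFF : ∀ i j, i ≠ j → Disjoint (F i) (F j) := fun i j hij =>
    hdis _ _ (hFo i) (hFo j) (hFc i) (hFc j) (hFd i) (hFd j) (hFb i) (hFb j) fun h =>
      H.cyc_ne hij (by rw [← hFf i, ← hFf j, h])
  refine ⟨F, hFo, hFc, hFF, hFf, ?_⟩
  apply Subset.antisymm
  · exact iUnion_subset fun k => subset_compl_iff_disjoint_right.2 (hFd k)
  intro x hx
  by_contra hxF
  simp only [mem_iUnion, not_exists] at hxF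
  -- a fourth face
  set G := connectedComponentIn (body θ)ᶜ x with hG
  have hcl := H.isCompact_body.isClosed
  have hxG : x ∈ G := mem_connectedComponentIn hx
  have hGo : IsOpen G := hcl.isOpen_compl.connectedComponentIn
  have hGc : IsConnected G := ⟨⟨x, hxG⟩, isPreconnected_connectedComponentIn⟩
  have hGd : Disjoint G (body θ) :=
    disjoint_left.2 fun y hy hy' => connectedComponentIn_subset _ _ hy hy'
  have hGf : frontier G ⊆ body θ := frontier_connectedComponentIn_subset hcl x
  have hGF : ∀ k, Disjoint G (F k) := fun k =>
    hdis _ _ hGo (hFo k) hGc (hFc k) hGd (hFd k) hGf (hFb k) fun h => hxF k (h ▸ hxG)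
  set V : Fin 4 → Set ℂ := Fin.cons G F with hV
  have hall : ∀ P : Set ℂ → Prop, P G → (∀ k, P (F k)) → ∀ i, P (V i) := by
    intro P h1 h2 i
    refine Fin.cases ?_ (fun k => ?_) i
    · simpa [hV] using h1
    · simpa [hV] using h2 k
  have hVd : ∀ i j, i ≠ j → Disjoint (V i) (V j) := by
    intro i j
    refine Fin.cases ?_ (fun k => ?_) i <;> refine Fin.cases ?_ (fun l => ?_) j
    · exact fun h => absurd rfl h
    · exact fun _ => hGF l
    · exact fun _ => (hGF k).symm
    · exact fun h => hFF k l fun hkl => h (hkl ▸ rfl)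
  have hbd : ∃ i : Fin 4, ∀ j, j ≠ i → Bornology.IsBounded (V j) := by
    by_contra! hcon
    obtain ⟨a, ha, ha'⟩ := hcon 0
    obtain ⟨b, hb, hb'⟩ := hcon a
    exact not_disjoint_iff_nonempty_inter.2 (unbounded_inter (hall _ hGo hFo b) (hall _ hGo hFo a)
      H.isCompact_body.isBounded (hall (fun A => frontier A ⊆ body θ) hGf hFb b)
      (hall (fun A => frontier A ⊆ body θ) hGf hFb a) hb' ha') (hVd b a hb)
  obtain ⟨i, hi⟩ := hbd
  refine H.no_three_bounded (U := fun k => V (i.succAbove k)) (fun k => hall _ hGo hFo _)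
    (fun k => hall _ hGc.nonempty (fun k => (hFc k).nonempty) _)
    (fun k => hi _ (Fin.succAbove_ne i k)) (fun k l hkl => hVd _ _ fun h => hkl ?_)
    (fun k => hall (fun A => frontier A ⊆ body θ) hGf hFb _)
    (fun k => hall (fun A => Disjoint A (body θ)) hGd hFd _)
  exact Fin.succAbove_right_injective h

end Faces

/-! ### Theta curves on the sphere -/

section Sphere

/-- The only property of the sphere that is used besides compactness: the complement of every
point is an open copy of the plane. -/
def Punctured (X : Type*) [TopologicalSpace X] : Prop :=
  ∀ q : X, ∃ f : ℂ → X, IsOpenEmbedding f ∧ range f = {q}ᶜ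

variable {X : Type*} [TopologicalSpace X] {θ : Fin 3 → ℝ → X}

lemma IsTheta.lift (H : IsTheta θ) {f : ℂ → X} (hf : IsEmbedding f) (hr : body θ ⊆ range f) :
    ∃ η : Fin 3 → ℝ → ℂ, IsTheta η ∧ (∀ i, ∀ t ∈ Icc (0 : ℝ) 1, f (η i t) = θ i t) ∧
      body η = f ⁻¹' body θ ∧ ∀ k, cyc η k = f ⁻¹' cyc θ k := by
  have hη : ∀ i, ∀ t ∈ Icc (0 : ℝ) 1, f (Function.invFun f (θ i t)) = θ i t := fun i t ht =>
    Function.invFun_eq (hr (mem_body.2 ⟨i, t, ht, rfl⟩))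
  have himg : ∀ i, (fun t => Function.invFun f (θ i t)) '' Icc 0 1 = f ⁻¹' (θ i '' Icc 0 1) := by
    intro i
    ext z
    constructor
    · rintro ⟨t, ht, rfl⟩
      exact ⟨t, ht, (hη i t ht).symm⟩
    · rintro ⟨t, ht, h⟩
      exact ⟨t, ht, hf.injective ((hη i t ht).trans h)⟩
  refine ⟨fun i t => Function.invFun f (θ i t), ⟨fun i => ?_, fun i j => ?_, fun i j => ?_, ?_⟩, hη,
    ?_, fun k => ?_⟩
  · rw [hf.isInducing.continuousOn_iff]
    exact (H.cont i).congr (hη i)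
  · simp only [H.zero i j]
  · simp only [H.one i j]
  · intro i j s hs t ht h
    refine H.inj i j s hs t ht ?_
    rw [← hη i s hs, ← hη j t ht]
    exact congrArg f h
  · simp only [body, himg, preimage_iUnion]
  · simp only [cyc, himg, preimage_union]

lemma IsTheta.isClosed_cyc [T2Space X] (H : IsTheta θ) (k : Fin 3) : IsClosed (cyc θ k) :=
  ((isCompact_Icc.image_of_continuousOn (H.cont _)).union
    (isCompact_Icc.image_of_continuousOn (H.cont _))).isClosed

/-- A theta curve is not the whole sphere: removing one interior point of each of its arcs
disconnects it, but three points do not disconnect the sphere. -/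
lemma IsTheta.body_ne_univ [T2Space X] (H : IsTheta θ) (hX : Punctured X) : ∃ q, q ∉ body θ := by
  by_contra! hall
  obtain ⟨f, hf, hr⟩ := hX (θ 0 (1 / 2))
  set S : Set ℂ := {z | ∃ i, f z = θ i (1 / 2)} with hS
  have hSc : S.Countable := by
    have : S = ⋃ i, f ⁻¹' {θ i (1 / 2)} := by ext z; simp [hS]
    rw [this]
    exact countable_iUnion fun i => (countable_singleton _).preimage hf.injective
  have hconn : IsPreconnected (f '' Sᶜ) :=
    (hSc.isConnected_compl_of_one_lt_rank (by
      rw [Complex.rank_real_complex]; exact Cardinal.one_lt_two)).isPreconnected.image _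
      hf.continuous.continuousOn
  have hhalf : (1 / 2 : ℝ) ∈ Icc (0 : ℝ) 1 := ⟨by norm_num, by norm_num⟩
  have hmem : ∀ x, (∀ i, x ≠ θ i (1 / 2)) → x ∈ f '' Sᶜ := by
    intro x hx
    obtain ⟨z, rfl⟩ : x ∈ range f := by rw [hr]; exact hx 0
    exact ⟨z, fun ⟨i, hi⟩ => hx i hi, rfl⟩
  have hends : ∀ u ∈ Icc (0 : ℝ) 1, u ≠ 1 / 2 → θ 0 u ∈ f '' Sᶜ := by
    intro u hu hne
    exact hmem _ fun i h => hne (H.inj 0 i u hu _ hhalf h).1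
  have hcl : ∀ a b : ℝ, 0 ≤ a → b ≤ 1 → IsClosed (⋃ i, θ i '' Icc a b) := fun a b ha hb =>
    (isCompact_iUnion fun i => isCompact_Icc.image_of_continuousOn
      ((H.cont i).mono (Icc_sub_I ha hb))).isClosed
  rw [isPreconnected_closed_iff] at hconn
  have hcov : f '' Sᶜ ⊆ (⋃ i, θ i '' Icc 0 (1 / 2)) ∪ ⋃ i, θ i '' Icc (1 / 2) 1 := by
    intro x _
    obtain ⟨i, t, ht, rfl⟩ := mem_body.1 (hall x)
    rcases le_total t (1 / 2) with h | h
    · exact Or.inl (mem_iUnion.2 ⟨i, t, ⟨ht.1, h⟩, rfl⟩)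
    · exact Or.inr (mem_iUnion.2 ⟨i, t, ⟨h, ht.2⟩, rfl⟩)
  obtain ⟨x, hx, hx1, hx2⟩ := hconn _ _ (hcl _ _ le_rfl (by norm_num))
    (hcl _ _ (by norm_num) le_rfl) hcov
    ⟨θ 0 0, hends 0 zero_mem_I (by norm_num), mem_iUnion.2 ⟨0, 0, by norm_num, rfl⟩⟩
    ⟨θ 0 1, hends 1 one_mem_I (by norm_num), mem_iUnion.2 ⟨0, 1, by norm_num, rfl⟩⟩
  obtain ⟨i, s, hs, rfl⟩ := mem_iUnion.1 hx1
  obtain ⟨j, t, ht, h⟩ := mem_iUnion.1 hx2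
  have h1 := (H.inj j i t ⟨by linarith [ht.1], ht.2⟩ s ⟨hs.1, by linarith [hs.2]⟩ h).1
  have h2 : s = 1 / 2 := le_antisymm hs.2 (h1 ▸ ht.1)
  obtain ⟨z, hz, hz'⟩ := hx
  exact hz ⟨i, by rw [hz', h2]⟩

/-- The faces of a theta curve on the sphere: in the plane obtained by removing a point `q` off the
curve they are the planar faces, with `q` added to the unbounded one. -/
lemma IsTheta.faces_sphere [T2Space X] [CompactSpace X] (H : IsTheta θ) (hX : Punctured X) :
    ∃ F : Fin 3 → Set X,
    (∀ k, IsOpen (F k)) ∧ (∀ k, IsConnected (F k)) ∧ (∀ i j, i ≠ j → Disjoint (F i) (F j)) ∧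
    (∀ k, frontier (F k) ⊆ cyc θ k) ∧ ⋃ k, F k = (body θ)ᶜ := by
  obtain ⟨q, hq⟩ := H.body_ne_univ hX
  obtain ⟨f, hf, hr⟩ := hX q
  have hbr : body θ ⊆ range f := by
    rw [hr]; intro x hx hxq; exact hq (hxq ▸ hx)
  obtain ⟨η, Hη, -, hbη, hcη⟩ := H.lift hf.isEmbedding hbr
  obtain ⟨F, hFo, hFc, hFd, hFf, hFu⟩ := Hη.faces
  have hfq : ∀ z, f z ≠ q := fun z h => by
    have : f z ∈ range f := ⟨z, rfl⟩
    rw [hr] at this; exact this h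
  have hKb := Hη.isCompact_body.isBounded
  have hfb : ∀ k, frontier (F k) ⊆ body η := fun k => (hFf k).trans_subset (cyc_subset_body η k)
  obtain ⟨k₀, hk₀⟩ : ∃ k, ¬ Bornology.IsBounded (F k) := by
    by_contra! hcon
    have h1 : Bornology.IsBounded (⋃ k, F k) := Bornology.isBounded_iUnion.2 hcon
    rw [hFu] at h1
    exact not_isBounded_compl Hη.isCompact_body h1
  obtain ⟨R, hR⟩ := hKb.exists_norm_le
  have hout := outside_subset (R := max R 0) (hFo k₀)
    (fun z hz => (hR z (hfb k₀ hz)).trans (le_max_left _ _)) hk₀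
  set r := max R 0
  set G : Fin 3 → Set X := fun k => {x | x ∈ f '' F k ∨ (k = k₀ ∧ x = q)} with hG
  have hfG : ∀ k z, f z ∈ G k ↔ z ∈ F k := by
    intro k z
    constructor
    · rintro (⟨w, hw, h⟩ | ⟨-, h⟩)
      · exact hf.injective h ▸ hw
      · exact absurd h (hfq z)
    · exact fun h => Or.inl ⟨z, h, rfl⟩
  have hrange : ∀ x, x ≠ q → ∃ z, f z = x := fun x hx => by
    have : x ∈ range f := by rw [hr]; exact hx
    exact this
  have hGo : ∀ k, IsOpen (G k) := by
    intro k
    by_cases hk : k = k₀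
    · have : G k = f '' F k ∪ (f '' closedBall 0 r)ᶜ := by
        ext x
        by_cases hx : x = q
        · refine iff_of_true (Or.inr ⟨hk, hx⟩) (Or.inr ?_)
          rintro ⟨z, -, h⟩
          exact hfq z (h.trans hx)
        · obtain ⟨z, rfl⟩ := hrange x hx
          rw [hfG, mem_union, hf.injective.mem_set_image, mem_compl_iff,
            hf.injective.mem_set_image]
          refine ⟨Or.inl, ?_⟩
          rintro (h | h)
          · exact h
          · rw [mem_closedBall_zero_iff, not_le] at h
            rw [hk]
            exact hout h
      rw [this]
      exact (hf.isOpenMap _ (hFo k)).union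
        ((isCompact_closedBall _ _).image hf.continuous).isClosed.isOpen_compl
    · have : G k = f '' F k := by ext x; simp [hG, hk]
      rw [this]
      exact hf.isOpenMap _ (hFo k)
  have hqcl : q ∈ closure (f '' F k₀) := by
    by_contra hcon
    have hsub : closure (f '' F k₀) ⊆ range f := by
      rw [hr]; intro x hx hxq; exact hcon (hxq ▸ hx)
    have := hf.isInducing.isCompact_preimage' isClosed_closure.isCompact hsub
    exact hk₀ (this.isBounded.subset fun z hz => subset_closure ⟨z, hz, rfl⟩)
  have hGc : ∀ k, IsConnected (G k) := by
    intro k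
    refine ((hFc k).image f hf.continuous.continuousOn).subset_closure (fun x hx => Or.inl hx) ?_
    rintro x (hx | ⟨rfl, rfl⟩)
    · exact subset_closure hx
    · exact hqcl
  have hGd : ∀ i j, i ≠ j → Disjoint (G i) (G j) := by
    intro i j hij
    rw [disjoint_left]
    intro x hi hj
    by_cases hx : x = q
    · rcases hi with ⟨z, -, h⟩ | ⟨hi, -⟩
      · exact hfq z (h.trans hx)
      · rcases hj with ⟨z, -, h⟩ | ⟨hj, -⟩
        · exact hfq z (h.trans hx)
        · exact hij (hi.trans hj.symm)
    · obtain ⟨z, rfl⟩ := hrange x hx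
      rw [hfG] at hi hj
      exact disjoint_left.1 (hFd i j hij) hi hj
  have hGu : ⋃ k, G k = (body θ)ᶜ := by
    ext x
    by_cases hx : x = q
    · exact iff_of_true (mem_iUnion.2 ⟨k₀, Or.inr ⟨rfl, hx⟩⟩) (by rw [hx]; exact hq)
    · obtain ⟨z, rfl⟩ := hrange x hx
      have h1 : z ∈ ⋃ k, F k ↔ z ∈ (body η)ᶜ := by rw [hFu]
      rw [hbη, mem_iUnion] at h1
      simp only [mem_iUnion, hfG]
      exact h1
  refine ⟨G, hGo, hGc, hGd, fun k x hx => ?_, hGu⟩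
  have hxb : x ∈ body θ := by
    by_contra hxb
    have : x ∈ ⋃ k, G k := by rw [hGu]; exact hxb
    obtain ⟨j, hj⟩ := mem_iUnion.1 this
    by_cases hjk : j = k
    · rw [(hGo k).frontier_eq] at hx
      exact hx.2 (hjk ▸ hj)
    · exact disjoint_left.1 ((hGd k j (Ne.symm hjk)).closure_left (hGo j)) hx.1 hj
  obtain ⟨z, rfl⟩ := hbr hxb
  have h1 : z ∈ f ⁻¹' frontier (G k) := hx
  rw [hf.isOpenMap.preimage_frontier_eq_frontier_preimage hf.continuous,
    show f ⁻¹' G k = F k from ext fun z => hfG k z, hFf, hcη] at h1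
  exact h1

/-- Each face of a theta curve on the sphere is an open disc whose parametrization extends to the
closed disc. Seen from a point of another face, it is bounded, and Carathéodory's theorem applies. -/
lemma IsTheta.param [CompactSpace X] (H : IsTheta θ) (hX : Punctured X) {F : Fin 3 → Set X}
    (hFo : ∀ k, IsOpen (F k)) (hFc : ∀ k, IsConnected (F k))
    (hFd : ∀ i j, i ≠ j → Disjoint (F i) (F j)) (hFf : ∀ k, frontier (F k) ⊆ cyc θ k)
    (hFu : ⋃ k, F k = (body θ)ᶜ) (k : Fin 3) : ∃ h : ℂ → X, ContinuousOn h (closedBall 0 1) ∧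
      InjOn h (closedBall 0 1) ∧ h '' ball 0 1 = F k ∧ h '' sphere 0 1 = cyc θ k := by
  have hFb : ∀ j, Disjoint (F j) (body θ) := fun j =>
    subset_compl_iff_disjoint_right.1 ((subset_iUnion F j).trans hFu.subset)
  obtain ⟨q, hq⟩ := (hFc (k + 1)).nonempty
  have hk : k ≠ k + 1 := by fin_cases k <;> decide
  obtain ⟨f, hf, hr⟩ := hX q
  have hbr : body θ ⊆ range f := by
    rw [hr]; rintro x hx rfl; exact disjoint_left.1 (hFb _) hq hx
  have hcr : closure (F k) ⊆ range f := by
    rw [hr]; rintro x hx rfl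
    exact disjoint_left.1 ((hFd _ _ hk).closure_left (hFo _)) hx hq
  obtain ⟨η, Hη, -, hbη, hcη⟩ := H.lift hf.isEmbedding hbr
  have L := Hη.lune_cyc k
  have hDo : IsOpen (f ⁻¹' F k) := (hFo k).preimage hf.continuous
  have hDimg : f '' (f ⁻¹' F k) = F k := image_preimage_eq_of_subset (subset_closure.trans hcr)
  have hDc : IsConnected (f ⁻¹' F k) := by
    refine ⟨?_, ?_⟩
    · rw [← image_nonempty (f := f), hDimg]; exact (hFc k).nonempty
    · rw [← hf.isInducing.isPreconnected_image, hDimg]; exact (hFc k).isPreconnected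
  have hDb : Bornology.IsBounded (f ⁻¹' F k) :=
    (hf.isInducing.isCompact_preimage' isClosed_closure.isCompact hcr).isBounded.subset
      (preimage_mono subset_closure)
  have hDd : Disjoint (f ⁻¹' F k) (cyc η k) := by
    rw [hcη]
    exact ((hFb k).mono_right (cyc_subset_body θ k)).preimage f
  have hDf : frontier (f ⁻¹' F k) ⊆ cyc η k := by
    rw [hcη, ← hf.isOpenMap.preimage_frontier_eq_frontier_preimage hf.continuous]
    exact preimage_mono (hFf k)
  obtain ⟨h, hc, hi, hb, hs⟩ := caratheodory (C := cyc η k) L.isCompact L.isConnected L.locArc hDo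
    hDc hDb hDd hDf
  refine ⟨f ∘ h, hf.continuous.comp_continuousOn hc, hf.injective.comp_injOn hi, ?_, ?_⟩
  · rw [image_comp, hb, hDimg]
  · rw [image_comp, hs, L.frontier_eq hDo hDc hDd hDf]
    show f '' cyc η k = _
    rw [hcη, image_preimage_eq_of_subset ((cyc_subset_body θ k).trans hbr)]

end Sphere

/-! ### Extending homeomorphisms of curves over the faces -/

section Glue

/-- The radial extension of a self-map of the unit circle (Alexander's trick). -/
def cone (β : ℂ → ℂ) (z : ℂ) : ℂ := ‖z‖ • β (‖z‖⁻¹ • z)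

lemma normalize_mem {z : ℂ} (hz : z ≠ 0) : ‖z‖⁻¹ • z ∈ sphere (0 : ℂ) 1 := by
  rw [mem_sphere_zero_iff_norm, norm_smul, norm_inv, norm_norm,
    inv_mul_cancel₀ (norm_ne_zero_iff.2 hz)]

variable {β : ℂ → ℂ}

lemma cone_eq {z : ℂ} (hz : z ∈ sphere (0 : ℂ) 1) : cone β z = β z := by
  rw [mem_sphere_zero_iff_norm] at hz
  simp [cone, hz]

lemma norm_cone (hm : MapsTo β (sphere 0 1) (sphere 0 1)) (z : ℂ) : ‖cone β z‖ = ‖z‖ := by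
  by_cases hz : z = 0
  · simp [cone, hz]
  · rw [cone, norm_smul, norm_norm, mem_sphere_zero_iff_norm.1 (hm (normalize_mem hz)), mul_one]

lemma continuous_cone (hc : ContinuousOn β (sphere 0 1))
    (hm : MapsTo β (sphere 0 1) (sphere 0 1)) : Continuous (cone β) := by
  rw [continuous_iff_continuousAt]
  intro z
  by_cases hz : z = 0
  · subst hz
    have h0 : cone β 0 = 0 := by simp [cone]
    rw [ContinuousAt, h0, tendsto_zero_iff_norm_tendsto_zero]
    simp only [norm_cone hm]
    exact tendsto_norm_zero
  · have h1 : ContinuousOn (cone β) {0}ᶜ := by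
      refine continuous_norm.continuousOn.smul (hc.comp ?_ fun z hz => normalize_mem hz)
      exact (continuous_norm.continuousOn.inv₀ fun z hz => norm_ne_zero_iff.2 hz).smul
        continuousOn_id
    exact h1.continuousAt (isOpen_compl_singleton.mem_nhds hz)

lemma injective_cone (hb : BijOn β (sphere 0 1) (sphere 0 1)) : Function.Injective (cone β) := by
  intro z w h
  have hn : ‖z‖ = ‖w‖ := by rw [← norm_cone hb.mapsTo z, ← norm_cone hb.mapsTo w, h]
  by_cases hz : z = 0
  · rw [hz, norm_zero] at hn
    rw [hz, norm_eq_zero.1 hn.symm]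
  have hz' : ‖z‖ ≠ 0 := norm_ne_zero_iff.2 hz
  have hw : w ≠ 0 := by rw [← norm_ne_zero_iff, ← hn]; exact hz'
  rw [cone, cone, ← hn] at h
  have h1 := smul_right_injective ℂ hz' h
  rw [hn] at h1
  have h2 := hb.injOn (hn ▸ normalize_mem hz) (normalize_mem hw) h1
  exact smul_right_injective ℂ (inv_ne_zero (hn ▸ hz')) h2

lemma surjective_cone (hb : BijOn β (sphere 0 1) (sphere 0 1)) : Function.Surjective (cone β) := by
  intro w
  by_cases hw : w = 0
  · exact ⟨0, by simp [cone, hw]⟩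
  obtain ⟨u, hu, hu'⟩ := hb.surjOn (normalize_mem hw)
  have hw' : ‖w‖ ≠ 0 := norm_ne_zero_iff.2 hw
  refine ⟨‖w‖ • u, ?_⟩
  have hn : ‖‖w‖ • u‖ = ‖w‖ := by
    rw [norm_smul, norm_norm, mem_sphere_zero_iff_norm.1 hu, mul_one]
  rw [cone, hn, inv_smul_smul₀ hw', hu', smul_inv_smul₀ hw']

lemma bijOn_cone_ball (hb : BijOn β (sphere 0 1) (sphere 0 1)) :
    BijOn (cone β) (ball 0 1) (ball 0 1) := by
  refine ⟨fun z hz => ?_, (injective_cone hb).injOn, fun w hw => ?_⟩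
  · rw [mem_ball_zero_iff, norm_cone hb.mapsTo]; exact mem_ball_zero_iff.1 hz
  · obtain ⟨z, rfl⟩ := surjective_cone hb w
    rw [mem_ball_zero_iff, norm_cone hb.mapsTo] at hw
    exact ⟨z, mem_ball_zero_iff.2 hw, rfl⟩

variable {X : Type*} [TopologicalSpace X] [T2Space X]

/-- A homeomorphism between the boundaries of two parametrized closed discs extends over the
discs. -/
lemma exists_disc_map {h₁ h₂ : ℂ → X} (hc₁ : ContinuousOn h₁ (closedBall 0 1))
    (hi₁ : InjOn h₁ (closedBall 0 1)) (hc₂ : ContinuousOn h₂ (closedBall 0 1))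
    (hi₂ : InjOn h₂ (closedBall 0 1)) {G : X → X}
    (hG : ContinuousOn G (h₁ '' sphere 0 1))
    (hGb : BijOn G (h₁ '' sphere 0 1) (h₂ '' sphere 0 1)) :
    ∃ Φ : X → X, ContinuousOn Φ (h₁ '' closedBall 0 1) ∧ EqOn Φ G (h₁ '' sphere 0 1) ∧
      BijOn Φ (h₁ '' ball 0 1) (h₂ '' ball 0 1) := by
  have hs : sphere (0 : ℂ) 1 ⊆ closedBall 0 1 := sphere_subset_closedBall
  have hbl : ball (0 : ℂ) 1 ⊆ closedBall 0 1 := ball_subset_closedBall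
  have hb₁ : BijOn h₁ (sphere 0 1) (h₁ '' sphere 0 1) := (hi₁.mono hs).bijOn_image
  have hb₂ : BijOn h₂ (sphere 0 1) (h₂ '' sphere 0 1) := (hi₂.mono hs).bijOn_image
  set β : ℂ → ℂ := Function.invFunOn h₂ (sphere 0 1) ∘ G ∘ h₁ with hβ
  have hβb : BijOn β (sphere 0 1) (sphere 0 1) :=
    (hb₂.symm hb₂.invOn_invFunOn.symm).comp (hGb.comp hb₁)
  have hβc : ContinuousOn β (sphere 0 1) :=
    (continuousOn_invFunOn (isCompact_sphere _ _) (hc₂.mono hs) hb₂.injOn).comp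
      (hG.comp (hc₁.mono hs) (mapsTo_image _ _)) (hGb.mapsTo.comp (mapsTo_image _ _))
  set e := Function.invFunOn h₁ (closedBall 0 1) with he
  have hel : ∀ z ∈ closedBall (0 : ℂ) 1, e (h₁ z) = z := hi₁.leftInvOn_invFunOn
  have hcm : MapsTo (cone β) (closedBall 0 1) (closedBall 0 1) := fun z hz => by
    rw [mem_closedBall_zero_iff, norm_cone hβb.mapsTo]; exact mem_closedBall_zero_iff.1 hz
  refine ⟨h₂ ∘ cone β ∘ e, ?_, ?_, ?_, ?_, ?_⟩
  · refine hc₂.comp ((continuous_cone hβc hβb.mapsTo).comp_continuousOn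
      (continuousOn_invFunOn (isCompact_closedBall _ _) hc₁ hi₁)) ?_
    rintro _ ⟨z, hz, rfl⟩
    simp only [Function.comp, hel z hz]
    exact hcm hz
  · rintro _ ⟨z, hz, rfl⟩
    simp only [Function.comp, hel z (hs hz), cone_eq hz]
    exact hb₂.invOn_invFunOn.2 (hGb.mapsTo ⟨z, hz, rfl⟩)
  · rintro _ ⟨z, hz, rfl⟩
    simp only [Function.comp, hel z (hbl hz)]
    exact ⟨_, (bijOn_cone_ball hβb).mapsTo hz, rfl⟩
  · rintro _ ⟨z, hz, rfl⟩ _ ⟨w, hw, rfl⟩ h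
    simp only [Function.comp, hel z (hbl hz), hel w (hbl hw)] at h
    rw [injective_cone hβb (hi₂ (hcm (hbl hz)) (hcm (hbl hw)) h)]
  · rintro _ ⟨w, hw, rfl⟩
    obtain ⟨z, hz, rfl⟩ := (bijOn_cone_ball hβb).surjOn hw
    exact ⟨h₁ z, ⟨z, hz, rfl⟩, by simp only [Function.comp, hel z (hbl hz)]⟩

variable {θ θ' : Fin 3 → ℝ → X}

/-- The identification of two theta curves by their parameters. -/
lemma IsTheta.exists_map (H : IsTheta θ) (H' : IsTheta θ') : ∃ G : X → X,
    (∀ i, ∀ t ∈ Icc (0 : ℝ) 1, G (θ i t) = θ' i t) ∧ InjOn G (body θ) ∧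
    (∀ k, BijOn G (cyc θ k) (cyc θ' k)) ∧ ∀ k, ContinuousOn G (cyc θ k) := by
  classical
  have hex : ∀ x, ∃ y, ∀ i, ∀ t ∈ Icc (0 : ℝ) 1, θ i t = x → y = θ' i t := by
    intro x
    by_cases hx : x ∈ body θ
    · obtain ⟨j, s, hs, rfl⟩ := mem_body.1 hx
      refine ⟨θ' j s, fun i t ht h => ?_⟩
      obtain ⟨rfl, rfl | rfl | rfl⟩ := H.inj i j t ht s hs h
      · rfl
      · exact H'.zero _ _
      · exact H'.one _ _
    · exact ⟨x, fun i t ht h => absurd (mem_body.2 ⟨i, t, ht, h⟩) hx⟩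
  choose G hG using hex
  have hG' : ∀ i, ∀ t ∈ Icc (0 : ℝ) 1, G (θ i t) = θ' i t := fun i t ht => hG _ i t ht rfl
  have himg : ∀ i, G '' (θ i '' Icc 0 1) = θ' i '' Icc 0 1 := by
    intro i
    rw [image_image]
    exact image_congr (hG' i)
  have hinj : InjOn G (body θ) := by
    intro x hx y hy h
    obtain ⟨i, s, hs, rfl⟩ := mem_body.1 hx
    obtain ⟨j, t, ht, rfl⟩ := mem_body.1 hy
    rw [hG' i s hs, hG' j t ht] at h
    obtain ⟨rfl, rfl | rfl | rfl⟩ := H'.inj i j s hs t ht h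
    · rfl
    · exact H.zero _ _
    · exact H.one _ _
  have hcont : ∀ i, ContinuousOn G (θ i '' Icc 0 1) := by
    intro i
    have h1 := (H'.cont i).comp (continuousOn_invFunOn isCompact_Icc (H.cont i) (H.injOn i))
      (t := Icc 0 1) fun x hx => Function.invFunOn_mem hx
    refine h1.congr ?_
    rintro _ ⟨t, ht, rfl⟩
    rw [hG' i t ht]
    simp only [Function.comp]
    rw [(H.injOn i).leftInvOn_invFunOn ht]
  have hcl : ∀ i, IsClosed (θ i '' Icc 0 1) := fun i =>
    (isCompact_Icc.image_of_continuousOn (H.cont i)).isClosed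
  refine ⟨G, hG', hinj, fun k => ?_, fun k => ?_⟩
  · have : cyc θ' k = G '' cyc θ k := by rw [cyc, cyc, image_union, himg, himg]
    rw [this]
    exact (hinj.mono (cyc_subset_body θ k)).bijOn_image
  · exact (hcont _).union_of_isClosed (hcont _) (hcl _) (hcl _)

/-- Two theta curves on the sphere are matched by a homeomorphism of the sphere. -/
theorem IsTheta.exists_homeo [CompactSpace X] (hX : Punctured X) (H : IsTheta θ)
    (H' : IsTheta θ') : ∃ ψ : X ≃ₜ X, ∀ i, ∀ t ∈ Icc (0 : ℝ) 1, ψ (θ i t) = θ' i t := by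
  classical
  obtain ⟨G, hG, hGi, hGb, hGc⟩ := H.exists_map H'
  obtain ⟨F, hFo, hFc, hFd, hFf, hFu⟩ := H.faces_sphere hX
  obtain ⟨F', hFo', hFc', hFd', hFf', hFu'⟩ := H'.faces_sphere hX
  choose h hc hi hb hs using H.param hX hFo hFc hFd hFf hFu
  choose h' hc' hi' hb' hs' using H'.param hX hFo' hFc' hFd' hFf' hFu'
  have hex : ∀ k, ∃ Φ : X → X, ContinuousOn Φ (h k '' closedBall 0 1) ∧ EqOn Φ G (cyc θ k) ∧
      BijOn Φ (F k) (F' k) := by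
    intro k
    have := exists_disc_map (hc k) (hi k) (hc' k) (hi' k) (G := G) (by rw [hs k]; exact hGc k)
      (by rw [hs k, hs' k]; exact hGb k)
    rwa [hs k, hb k, hb' k] at this
  choose Φ hΦc hΦG hΦb using hex
  set ψ : X → X := fun x => if hx : ∃ k, x ∈ F k then Φ hx.choose x else G x with hψ
  have hF_body : ∀ k, ∀ x ∈ F k, x ∉ body θ := fun k x hx =>
    (hFu.subset (mem_iUnion.2 ⟨k, hx⟩) : x ∈ (body θ)ᶜ)
  have hF_body' : ∀ k, ∀ x ∈ F' k, x ∉ body θ' := fun k x hx =>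
    (hFu'.subset (mem_iUnion.2 ⟨k, hx⟩) : x ∈ (body θ')ᶜ)
  have hcases : ∀ x, (∃ k, x ∈ F k) ∨ x ∈ body θ := fun x => by
    by_cases hx : x ∈ body θ
    · exact Or.inr hx
    · exact Or.inl (mem_iUnion.1 (hFu.symm.subset hx))
  have hcases' : ∀ x, (∃ k, x ∈ F' k) ∨ x ∈ body θ' := fun x => by
    by_cases hx : x ∈ body θ'
    · exact Or.inr hx
    · exact Or.inl (mem_iUnion.1 (hFu'.symm.subset hx))
  have hψF : ∀ k, ∀ x ∈ F k, ψ x = Φ k x := by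
    intro k x hx
    have hx' : ∃ k, x ∈ F k := ⟨k, hx⟩
    have : hx'.choose = k := by
      by_contra hne
      exact disjoint_left.1 (hFd _ _ hne) hx'.choose_spec hx
    simp only [hψ, dif_pos hx', this]
  have hψG : ∀ x ∈ body θ, ψ x = G x := fun x hx =>
    dif_neg fun ⟨k, hk⟩ => hF_body k x hk hx
  have hmemF : ∀ k, ∀ x ∈ F k, ψ x ∈ F' k := fun k x hx => by
    rw [hψF k x hx]; exact (hΦb k).mapsTo hx
  have hmemG : ∀ x ∈ body θ, ψ x ∈ body θ' := fun x hx => by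
    rw [hψG x hx]
    obtain ⟨i, t, ht, rfl⟩ := mem_body.1 hx
    rw [hG i t ht]
    exact mem_body.2 ⟨i, t, ht, rfl⟩
  have hinj : Function.Injective ψ := by
    intro x y hxy
    rcases hcases x with ⟨k, hk⟩ | hx <;> rcases hcases y with ⟨l, hl⟩ | hy
    · have h1 := hmemF k x hk
      have h2 := hmemF l y hl
      rw [← hxy] at h2
      have : k = l := by
        by_contra hne
        exact disjoint_left.1 (hFd' _ _ hne) h1 h2
      subst this
      rw [hψF k x hk, hψF k y hl] at hxy
      exact (hΦb k).injOn hk hl hxy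
    · exact absurd (hxy ▸ hmemG y hy) (hF_body' k _ (hmemF k x hk))
    · exact absurd (hxy ▸ hmemG x hx) (hF_body' l _ (hmemF l y hl))
    · rw [hψG x hx, hψG y hy] at hxy
      exact hGi hx hy hxy
  have hsurj : Function.Surjective ψ := by
    intro y
    rcases hcases' y with ⟨k, hk⟩ | hy
    · obtain ⟨x, hx, rfl⟩ := (hΦb k).surjOn hk
      exact ⟨x, hψF k x hx⟩
    · obtain ⟨i, t, ht, rfl⟩ := mem_body.1 hy
      exact ⟨θ i t, by rw [hψG _ (mem_body.2 ⟨i, t, ht, rfl⟩), hG i t ht]⟩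
  have hdisc : ∀ k, h k '' closedBall 0 1 = F k ∪ cyc θ k := fun k => by
    rw [← ball_union_sphere, image_union, hb k, hs k]
  have hψc : Continuous ψ := by
    refine LocallyFinite.continuous (locallyFinite_of_finite fun k => h k '' closedBall 0 1)
      ?_ (fun k => ((isCompact_closedBall _ _).image_of_continuousOn (hc k)).isClosed)
      (fun k => (hΦc k).congr ?_)
    · rw [eq_univ_iff_forall]
      intro x
      rw [mem_iUnion]
      rcases hcases x with ⟨k, hk⟩ | hx
      · exact ⟨k, by rw [hdisc]; exact Or.inl hk⟩
      · obtain ⟨i, hx⟩ := mem_body.1 hx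
        refine ⟨i + 1, ?_⟩
        rw [hdisc]
        exact Or.inr (arc_subset_cyc θ (by fin_cases i <;> decide) hx)
    · intro x hx
      rw [hdisc] at hx
      rcases hx with hx | hx
      · exact hψF k x hx
      · rw [hψG x (cyc_subset_body θ k hx), hΦG k hx]
  refine ⟨Continuous.homeoOfEquivCompactToT2 (f := Equiv.ofBijective ψ ⟨hinj, hsurj⟩) hψc,
    fun i t ht => ?_⟩
  show ψ (θ i t) = θ' i t
  rw [hψG _ (mem_body.2 ⟨i, t, ht, rfl⟩), hG i t ht]

end Glue

/-! ### The graph `K_{2,3}` as a theta curve -/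

section Graph

/-- For `t ∈ [0, 1]`, the point at time `t` on the path that runs linearly from the vertex `3` to the
vertex `i` and then, from time `1 / 2` on, from `i` to the vertex `4`. -/
def path (i : Fin 3) (t : ℝ) : Fin 5 → ℝ :=
  max (1 - 2 * t) 0 • vert 3 + (1 - |2 * t - 1|) • vert (i.castLE (by norm_num)) +
    max (2 * t - 1) 0 • vert 4

lemma continuous_path (i : Fin 3) : Continuous (path i) := by
  unfold path; fun_prop

lemma path_left (i : Fin 3) {t : ℝ} (ht : t ≤ 1 / 2) :
    path i t = (2 * t) • vert (i.castLE (by norm_num)) + (1 - 2 * t) • vert 3 := by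
  rw [path, max_eq_left (by linarith), max_eq_right (by linarith), abs_of_nonpos (by linarith)]
  rw [zero_smul, add_zero, add_comm]
  congr 2; ring

lemma path_right (i : Fin 3) {t : ℝ} (ht : 1 / 2 ≤ t) :
    path i t = (2 - 2 * t) • vert (i.castLE (by norm_num)) + (2 * t - 1) • vert 4 := by
  rw [path, max_eq_right (by linarith), max_eq_left (by linarith), abs_of_nonneg (by linarith)]
  rw [zero_smul, zero_add]
  congr 2; ring

lemma mem_K23 {x : Fin 5 → ℝ} : x ∈ K23 ↔ ∃ i : Fin 3,
    x ∈ seg (i.castLE (by norm_num)) 3 ∨ x ∈ seg (i.castLE (by norm_num)) 4 := by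
  simp only [K23, mem_iUnion, mem_insert_iff, mem_singleton_iff, Fin.exists_fin_succ]
  simp

lemma path_mem (i : Fin 3) {t : ℝ} (ht : t ∈ Icc (0 : ℝ) 1) : path i t ∈ K23 := by
  rw [mem_K23]
  rcases le_total t (1 / 2) with h | h
  · exact ⟨i, Or.inl ⟨2 * t, 1 - 2 * t, by linarith [ht.1], by linarith, by ring,
      (path_left i h).symm⟩⟩
  · exact ⟨i, Or.inr ⟨2 - 2 * t, 2 * t - 1, by linarith [ht.2], by linarith, by ring,
      (path_right i h).symm⟩⟩

lemma exists_path {x : Fin 5 → ℝ} (hx : x ∈ K23) : ∃ i, ∃ t ∈ Icc (0 : ℝ) 1, path i t = x := by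
  obtain ⟨i, ⟨a, b, ha, hb, hab, rfl⟩ | ⟨a, b, ha, hb, hab, rfl⟩⟩ := mem_K23.1 hx
  · refine ⟨i, a / 2, ⟨by linarith, by linarith⟩, ?_⟩
    rw [path_left i (by linarith)]
    congr 2 <;> linarith
  · refine ⟨i, (1 + b) / 2, ⟨by linarith, by linarith⟩, ?_⟩
    rw [path_right i (by linarith)]
    congr 2 <;> linarith

lemma path_inj {i j : Fin 3} {s t : ℝ} (h : path i s = path j t) :
    s = t ∧ (i = j ∨ s = 0 ∨ s = 1) := by
  have h3 := congrFun h 3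
  have h4 := congrFun h 4
  have hi := congrFun h (i.castLE (by norm_num))
  have e3 : ∀ k : Fin 3, (3 : Fin 5) ≠ k.castLE (by norm_num) := by decide
  have e4 : ∀ k : Fin 3, (4 : Fin 5) ≠ k.castLE (by norm_num) := by decide
  have e34 : (3 : Fin 5) ≠ 4 := by decide
  simp only [path, vert, Pi.add_apply, Pi.smul_apply, Pi.single_apply, smul_eq_mul, if_neg (e3 _),
    if_neg (e4 _), if_neg (e3 _).symm, if_neg (e4 _).symm, if_neg e34, if_neg e34.symm, if_true,
    mul_one, mul_zero, add_zero, zero_add] at h3 h4 hi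
  have hst : s = t := by
    rcases max_cases (1 - 2 * s) 0 with h | h <;> rcases max_cases (1 - 2 * t) 0 with h' | h' <;>
    rcases max_cases (2 * s - 1) 0 with h'' | h'' <;>
    rcases max_cases (2 * t - 1) 0 with h''' | h''' <;> linarith
  refine ⟨hst, or_iff_not_imp_left.2 fun hij => ?_⟩
  rw [if_neg fun h => hij (Fin.castLE_injective _ h), mul_zero] at hi
  rcases abs_cases (2 * s - 1) with h | h
  · right; linarith
  · left; linarith

/-- The path through `3`, `i`, `4`, as a map to `K_{2,3}`; it is constant outside `[0, 1]`. -/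
def kpath (i : Fin 3) (t : ℝ) : K23 :=
  ⟨path i (projIcc 0 1 zero_le_one t), path_mem i (projIcc 0 1 zero_le_one t).2⟩

lemma continuous_kpath (i : Fin 3) : Continuous (kpath i) :=
  Continuous.subtype_mk ((continuous_path i).comp
    (continuous_subtype_val.comp continuous_projIcc)) _

lemma coe_kpath (i : Fin 3) {t : ℝ} (ht : t ∈ Icc (0 : ℝ) 1) :
    (kpath i t : Fin 5 → ℝ) = path i t := by
  show path i (projIcc 0 1 zero_le_one t) = path i t
  rw [projIcc_of_mem _ ht]

lemma isTheta_kpath : IsTheta kpath where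
  cont i := (continuous_kpath i).continuousOn
  zero i j := Subtype.ext <| by
    rw [coe_kpath i zero_mem_I, coe_kpath j zero_mem_I, path_left i (by norm_num),
      path_left j (by norm_num)]
    simp
  one i j := Subtype.ext <| by
    rw [coe_kpath i one_mem_I, coe_kpath j one_mem_I, path_right i (by norm_num),
      path_right j (by norm_num)]
    simp
  inj i j s hs t ht h := by
    have := congrArg Subtype.val h
    rw [coe_kpath i hs, coe_kpath j ht] at this
    exact path_inj this

lemma exists_kpath (x : K23) : ∃ i, ∃ t ∈ Icc (0 : ℝ) 1, kpath i t = x := by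
  obtain ⟨i, t, ht, h⟩ := exists_path x.2
  exact ⟨i, t, ht, Subtype.ext ((coe_kpath i ht).trans h)⟩

lemma IsTheta.comp {X Y : Type*} [TopologicalSpace X] [TopologicalSpace Y] {θ : Fin 3 → ℝ → X}
    (H : IsTheta θ) {g : X → Y} (hg : Continuous g) (hi : Function.Injective g) :
    IsTheta fun i t => g (θ i t) where
  cont i := hg.comp_continuousOn (H.cont i)
  zero i j := congrArg g (H.zero i j)
  one i j := congrArg g (H.one i j)
  inj i j s hs t ht h := H.inj i j s hs t ht (hi h)

/-- Stereographic projection. -/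
lemma punctured_sphere : Punctured Sphere2 := by
  intro q
  have hfin : Fact (Module.finrank ℝ (EuclideanSpace ℝ (Fin 3)) = 2 + 1) := ⟨by simp⟩
  let e : OpenPartialHomeomorph (EuclideanSpace ℝ (Fin 2)) Sphere2 :=
    (stereographic' (E := EuclideanSpace ℝ (Fin 3)) 2 q).symm
  have hs : e.source = univ := stereographic'_target _
  have ht : e.target = {q}ᶜ := stereographic'_source _
  let L := Complex.orthonormalBasisOneI.repr.toHomeomorph
  refine ⟨e ∘ L, (e.isOpenEmbedding hs).comp L.isOpenEmbedding, ?_⟩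
  rw [range_comp, L.surjective.range_eq, ← hs, e.image_source_eq_target, ht]

end Graph

end Theta

/-- For any two embeddings (continuous injective maps) `g₁, g₂ : K_{2,3} → S²`
there is a homeomorphism `ψ : S² → S²` such that `ψ ∘ g₁ = g₂`. -/
theorem exists_homeomorph_comp_eq (g₁ g₂ : K23 → Sphere2)
    (hc₁ : Continuous g₁) (hc₂ : Continuous g₂)
    (hi₁ : Function.Injective g₁) (hi₂ : Function.Injective g₂) :
    ∃ ψ : Sphere2 ≃ₜ Sphere2, ∀ x : K23, ψ (g₁ x) = g₂ x := by
  have hcomp : CompactSpace Sphere2 := isCompact_iff_compactSpace.1 (isCompact_sphere _ _)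
  obtain ⟨ψ, hψ⟩ := (Theta.isTheta_kpath.comp hc₁ hi₁).exists_homeo Theta.punctured_sphere
    (Theta.isTheta_kpath.comp hc₂ hi₂)
  refine ⟨ψ, fun x => ?_⟩
  obtain ⟨i, t, ht, rfl⟩ := Theta.exists_kpath x
  exact hψ i t ht
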